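/- arXiv:2301.11056 — 3 statements merged into one kernel-verified Lean document; each statement's English description precedes it below -/
import Mathlib

section
/- There are infinitely many abc triples (a,b,c) satisfying exp(6.563·√(log c)/log log c)·rad(abc) ≤ c. Precisely: for every real N there exist positive integers a, b, c with gcd(a,b) = 1, a + b = c, c > N, and exp(6.563·√(log c)/log log c)·rad(abc) ≤ c. -/
/-- The radical of a positive integer: the product of its distinct prime factors. -/
def rad (n : ℕ) : ℕ := n.primeFactors.prod id

lemma log_harmonic_le_prod (k : ℕ) :
    Real.log (k + 1) ≤ ∏ p ∈ (k + 1).primesBelow, (1 - (p : ℝ)⁻¹)⁻¹ := by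
  let f : ℕ →* ℝ :=
    { toFun := fun n => (n : ℝ)⁻¹
      map_one' := by simp
      map_mul' := by intro a b; simp [mul_comm] }
  have hf : ∀ n, f n = (n : ℝ)⁻¹ := fun n => rfl
  have h : ∀ {p : ℕ}, p.Prime → ‖f p‖ < 1 := by
    intro p hp
    rw [hf, Real.norm_of_nonneg (by positivity)]
    exact inv_lt_one_of_one_lt₀ (by exact_mod_cast hp.one_lt)
  obtain ⟨h1, h2⟩ :=
    EulerProduct.summable_and_hasSum_smoothNumbers_prod_primesBelow_geometric h (k + 1)
  have h3 : Real.log (k + 1) ≤ ∑ i ∈ Finset.Icc 1 k, (i : ℝ)⁻¹ := by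
    have := log_add_one_le_harmonic k
    rw [harmonic_eq_sum_Icc] at this
    push_cast at this
    exact this
  refine h3.trans ?_
  let g : {i // i ∈ Finset.Icc 1 k} → (k + 1).smoothNumbers := fun i =>
    ⟨i.1, Nat.mem_smoothNumbers_of_lt (by have := Finset.mem_Icc.1 i.2; omega)
      (by have := Finset.mem_Icc.1 i.2; omega)⟩
  have hg : Function.Injective g := by
    intro a b hab
    have := congrArg (fun z : (k + 1).smoothNumbers => (z : ℕ)) hab
    exact Subtype.ext this
  have h4 := sum_le_hasSum (Finset.univ.image g) (fun i _ => by rw [hf]; positivity) h2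
  rw [Finset.sum_image (fun a _ b _ hab => hg hab)] at h4
  have h5 : ∑ i ∈ Finset.Icc 1 k, (i : ℝ)⁻¹ = ∑ x : {i // i ∈ Finset.Icc 1 k}, f (g x) := by
    rw [← Finset.sum_attach]
    rfl
  rw [h5]
  exact h4

lemma mertens_lower : ∃ C : ℝ, ∀ k : ℕ, 1 ≤ k →
    Real.log (Real.log (k + 1)) ≤ ∑ p ∈ (k + 1).primesBelow, (p : ℝ)⁻¹ + C := by
  have hs : Summable (fun n : ℕ => 1 / (n : ℝ) ^ 2) := Real.summable_one_div_nat_pow.2 (by norm_num)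
  refine ⟨2 * ∑' n : ℕ, 1 / (n : ℝ) ^ 2, fun k hk => ?_⟩
  have hk' : (1 : ℝ) ≤ k := by exact_mod_cast hk
  have hpos : 0 < Real.log (k + 1) := Real.log_pos (by linarith)
  have hP : ∀ p ∈ (k + 1).primesBelow, (2 : ℝ) ≤ p := by
    intro p hp
    exact_mod_cast (Nat.prime_of_mem_primesBelow hp).two_le
  have hinv : ∀ p ∈ (k + 1).primesBelow, (p : ℝ)⁻¹ ≤ 1 / 2 := by
    intro p hp
    rw [inv_eq_one_div]
    exact one_div_le_one_div_of_le (by norm_num) (hP p hp)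
  have h1 := Real.log_le_log hpos (log_harmonic_le_prod k)
  rw [Real.log_prod (fun p hp => by
    have := hinv p hp
    have : (0 : ℝ) < 1 - (p : ℝ)⁻¹ := by linarith
    positivity)] at h1
  refine h1.trans ?_
  have h2 : ∀ p ∈ (k + 1).primesBelow, Real.log ((1 - (p : ℝ)⁻¹)⁻¹) ≤
      (p : ℝ)⁻¹ + 2 * (1 / (p : ℝ) ^ 2) := by
    intro p hp
    have h := hinv p hp
    have h0 : (0 : ℝ) < (p : ℝ)⁻¹ := by have := hP p hp; positivity
    rw [show (1 : ℝ) / (p : ℝ) ^ 2 = ((p : ℝ)⁻¹) ^ 2 by rw [inv_pow, one_div]]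
    generalize (p : ℝ)⁻¹ = t at *
    have h3 := Real.log_le_sub_one_of_pos (show 0 < (1 - t)⁻¹ by
      have : 0 < 1 - t := by linarith
      positivity)
    have h4 : (1 - t)⁻¹ ≤ 1 + t + 2 * t ^ 2 := by
      rw [inv_le_iff_one_le_mul₀ (by linarith)]
      nlinarith [mul_nonneg (sq_nonneg t) (by linarith : (0 : ℝ) ≤ 1 - 2 * t)]
    linarith
  refine (Finset.sum_le_sum h2).trans ?_
  rw [Finset.sum_add_distrib, ← Finset.mul_sum]
  have := hs.sum_le_tsum (k + 1).primesBelow (fun i _ => by positivity)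
  linarith

lemma many_primes (ε : ℝ) (hε : 0 < ε) (hε1 : ε < 1) (K : ℕ) :
    ∃ k : ℕ, K ≤ k ∧ (1 - ε) * k / Real.log k ≤
      ∑ p ∈ (k + 1).primesBelow, Real.log ((k : ℝ) / p) := by
  by_contra! hcon
  obtain ⟨C, hC⟩ := mertens_lower
  obtain ⟨K1, hK1⟩ := exists_nat_gt (2 / ε)
  set K0 := max (max K K1) 3 with hK0
  have hKK : K ≤ K0 := (le_max_left _ _).trans (le_max_left _ _)
  have hK1K : K1 ≤ K0 := (le_max_right _ _).trans (le_max_left _ _)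
  have h3K : 3 ≤ K0 := le_max_right _ _
  let A : ℕ → ℝ := fun k => ∑ p ∈ (k + 1).primesBelow,
    ((p : ℝ)⁻¹ - (1 + Real.log ((k : ℝ) / p)) / k)
  have step : ∀ k : ℕ, K0 ≤ k → A (k + 1) - (1 - ε / 2) * Real.log (Real.log ((k + 1 : ℕ) : ℝ)) ≤
      A k - (1 - ε / 2) * Real.log (Real.log k) := by
    intro k hk
    have hk3 : (3 : ℝ) ≤ k := by exact_mod_cast h3K.trans hk
    have hkε : 2 / ε < k := hK1.trans_le (by exact_mod_cast hK1K.trans hk)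
    have hlogk : 0 < Real.log k := Real.log_pos (by linarith)
    have hlogk1 : 0 < Real.log (k + 1) := Real.log_pos (by linarith)
    have hl1 : 1 / ((k : ℝ) + 1) ≤ Real.log (k + 1) - Real.log k := by
      have := Real.one_sub_inv_le_log_of_pos (show (0 : ℝ) < (k + 1) / k by positivity)
      rw [Real.log_div (by positivity) (by positivity)] at this
      refine le_trans (le_of_eq ?_) this
      field_simp
      ring
    -- difference of A
    have hA1 : A (k + 1) = ∑ p ∈ (k + 1).primesBelow,
        ((p : ℝ)⁻¹ - (1 + Real.log (((k + 1 : ℕ) : ℝ) / p)) / ((k + 1 : ℕ) : ℝ)) := by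
      simp only [A]
      by_cases hp : (k + 1).Prime
      · rw [Nat.primesBelow_succ, if_pos hp, Finset.sum_insert (by simp [Nat.primesBelow])]
        rw [div_self (by positivity)]
        simp
      · rw [Nat.primesBelow_succ, if_neg hp]
    have hf1 : ∑ p ∈ (k + 1).primesBelow, Real.log (((k + 1 : ℕ) : ℝ) / p) ≤
        (1 - ε) * ((k : ℝ) + 1) / Real.log (k + 1) := by
      have h := (hcon (k + 1) (by omega)).le
      have h' : ∑ p ∈ (k + 1).primesBelow, Real.log (((k + 1 : ℕ) : ℝ) / p) =
          ∑ p ∈ (k + 1 + 1).primesBelow, Real.log (((k + 1 : ℕ) : ℝ) / p) := by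
        by_cases hp : (k + 1).Prime
        · rw [Nat.primesBelow_succ (k + 1), if_pos hp, Finset.sum_insert (by simp [Nat.primesBelow])]
          rw [div_self (by positivity)]
          simp
        · rw [Nat.primesBelow_succ (k + 1), if_neg hp]
      rw [h']
      push_cast at h ⊢
      exact h
    have hd : A (k + 1) - A k ≤ (1 - ε) / (k * Real.log (k + 1)) := by
      rw [hA1]
      simp only [A]
      rw [← Finset.sum_sub_distrib]
      calc _ ≤ ∑ p ∈ (k + 1).primesBelow, Real.log (((k + 1 : ℕ) : ℝ) / p) * (1 / (k * (k + 1))) := by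
            apply Finset.sum_le_sum
            intro p hp
            have hp0 : (0 : ℝ) < p := by exact_mod_cast (Nat.prime_of_mem_primesBelow hp).pos
            push_cast
            rw [Real.log_div (by positivity) (by positivity),
              Real.log_div (by positivity) (by positivity)]
            generalize Real.log (k + 1) = u at *
            generalize Real.log k = w at *
            generalize Real.log p = z at *
            have : ((p : ℝ)⁻¹ - (1 + (u - z)) / (k + 1) - ((p : ℝ)⁻¹ - (1 + (w - z)) / k)) =
              (u - z) * (1 / (k * (k + 1))) - (u - w - 1 / ((k : ℝ) + 1)) / k := by
              field_simp
              ring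
            rw [this]
            have : 0 ≤ (u - w - 1 / ((k : ℝ) + 1)) / k := by
              apply div_nonneg <;> linarith
            linarith
        _ ≤ (1 - ε) * ((k : ℝ) + 1) / Real.log (k + 1) * (1 / (k * (k + 1))) := by
            rw [← Finset.sum_mul]
            exact mul_le_mul_of_nonneg_right hf1 (by positivity)
        _ = _ := by field_simp
    have hll : 1 / (((k : ℝ) + 1) * Real.log (k + 1)) ≤
        Real.log (Real.log (k + 1)) - Real.log (Real.log k) := by
      have := Real.one_sub_inv_le_log_of_pos (show (0 : ℝ) < Real.log (k + 1) / Real.log k by positivity)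
      rw [Real.log_div (by positivity) (by positivity)] at this
      refine le_trans ?_ this
      rw [inv_div, one_sub_div hlogk1.ne', ← div_div]
      gcongr
    have hcmp : (1 - ε) / (k * Real.log (k + 1)) ≤
        (1 - ε / 2) * (1 / (((k : ℝ) + 1) * Real.log (k + 1))) := by
      rw [mul_one_div, div_le_div_iff₀ (by positivity) (by positivity)]
      rw [div_lt_iff₀ hε] at hkε
      have : (1 - ε) * (k + 1) ≤ (1 - ε / 2) * k := by nlinarith
      nlinarith
    have := mul_le_mul_of_nonneg_left hll (show 0 ≤ 1 - ε / 2 by linarith)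
    push_cast
    linarith
  have bound : ∀ k : ℕ, K0 ≤ k → A k - (1 - ε / 2) * Real.log (Real.log k) ≤
      A K0 - (1 - ε / 2) * Real.log (Real.log K0) := by
    intro k hk
    induction k, hk using Nat.le_induction with
    | base => exact le_rfl
    | succ k hk ih => exact (step k hk).trans ih
  set D := A K0 - (1 - ε / 2) * Real.log (Real.log K0) with hD
  have hlow : ∀ k : ℕ, K0 ≤ k → Real.log (Real.log k) - C - 2 ≤ A k := by
    intro k hk
    have hk3 : (3 : ℝ) ≤ k := by exact_mod_cast h3K.trans hk
    have hlogk : 1 ≤ Real.log k := by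
      rw [Real.le_log_iff_exp_le (by linarith)]
      linarith [Real.exp_one_lt_d9]
    have h1 := hC k (by omega)
    have h2 : Real.log (Real.log k) ≤ Real.log (Real.log (k + 1)) :=
      Real.log_le_log (by linarith) (Real.log_le_log (by linarith) (by linarith))
    have h3 : A k = ∑ p ∈ (k + 1).primesBelow, (p : ℝ)⁻¹ - ((k + 1).primesBelow.card : ℝ) / k -
        (∑ p ∈ (k + 1).primesBelow, Real.log ((k : ℝ) / p)) / k := by
      simp only [A]
      rw [Finset.sum_sub_distrib, ← Finset.sum_div, Finset.sum_add_distrib]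
      simp
      ring
    have h4 : ((k + 1).primesBelow.card : ℝ) / k ≤ 1 := by
      rw [div_le_one (by linarith)]
      have : (k + 1).primesBelow ⊆ Finset.Icc 1 k := by
        intro p hp
        have := (Nat.prime_of_mem_primesBelow hp).pos
        have := Nat.lt_of_mem_primesBelow hp
        rw [Finset.mem_Icc]; omega
      have := Finset.card_le_card this
      simp at this
      exact_mod_cast this
    have h5 : (∑ p ∈ (k + 1).primesBelow, Real.log ((k : ℝ) / p)) / k ≤ 1 := by
      rw [div_le_one (by linarith)]
      refine (hcon k (hKK.trans hk)).le.trans ?_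
      rw [div_le_iff₀ (by linarith)]
      nlinarith
    linarith
  have htend : Filter.Tendsto (fun k : ℕ => Real.log (Real.log k)) Filter.atTop Filter.atTop :=
    Real.tendsto_log_atTop.comp (Real.tendsto_log_atTop.comp tendsto_natCast_atTop_atTop)
  obtain ⟨k, hk1, hk2⟩ := ((htend.eventually_gt_atTop ((D + C + 2) / (ε / 2))).and
    (Filter.eventually_ge_atTop K0)).exists
  have e1 := bound k hk2
  have e2 := hlow k hk2
  rw [div_lt_iff₀ (by linarith)] at hk1
  linarith


/-- The logistic cumulative distribution function. -/
noncomputable def lgF (t : ℝ) : ℝ := (1 + Real.exp (-t))⁻¹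

/-- Minus the logarithm of the logistic density. -/
noncomputable def lgv (t : ℝ) : ℝ := Real.log (2 + Real.exp t + Real.exp (-t))

lemma lgF_pos (t : ℝ) : 0 < lgF t := by unfold lgF; positivity

lemma lgF_lt_one (t : ℝ) : lgF t < 1 := by
  unfold lgF
  exact inv_lt_one_of_one_lt₀ (by linarith [Real.exp_pos (-t)])

lemma lgF_hasDerivAt (t : ℝ) : HasDerivAt lgF (lgF t * (1 - lgF t)) t := by
  have h1 : HasDerivAt (fun t : ℝ => 1 + Real.exp (-t)) (-Real.exp (-t)) t := by
    have := ((hasDerivAt_neg t).exp).const_add 1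
    simpa using this
  have h2 := h1.inv (by positivity)
  refine h2.congr_deriv ?_
  unfold lgF
  have := Real.exp_pos (-t)
  field_simp
  ring

lemma lgl_hasDerivAt (t : ℝ) : HasDerivAt (fun t : ℝ => Real.log (1 + Real.exp t)) (lgF t) t := by
  have h1 : HasDerivAt (fun t : ℝ => 1 + Real.exp t) (Real.exp t) t :=
    (Real.hasDerivAt_exp t).const_add 1
  have h2 := h1.log (by positivity)
  refine h2.congr_deriv ?_
  unfold lgF
  rw [Real.exp_neg]
  have := Real.exp_pos t
  field_simp
  ring

lemma lgv_eq (t : ℝ) : lgv t = 2 * Real.log (1 + Real.exp t) - t := by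
  unfold lgv
  have h : 2 + Real.exp t + Real.exp (-t) = (1 + Real.exp t) ^ 2 / Real.exp t := by
    rw [Real.exp_neg]
    have := Real.exp_pos t
    field_simp
    ring
  rw [h, Real.log_div (by positivity) (by positivity), Real.log_pow, Real.log_exp]
  push_cast
  ring

/-- Centered indicator. -/
noncomputable def lgg (a t : ℝ) : ℝ := (if a ≤ t then 1 else 0) - lgF t

lemma lgg_measurable (a : ℝ) : Measurable (lgg a) := by
  unfold lgg
  apply Measurable.sub
  · exact Measurable.ite measurableSet_Ici measurable_const measurable_const
  · unfold lgF; fun_prop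

lemma lgg_abs_le (a t : ℝ) : |lgg a t| ≤ 1 := by
  unfold lgg
  have := lgF_pos t
  have := lgF_lt_one t
  rw [abs_le]
  split_ifs <;> constructor <;> linarith

lemma lgg_mul_integrable (a b u w : ℝ) :
    IntervalIntegrable (fun t => lgg a t * lgg b t) MeasureTheory.volume u w := by
  rw [intervalIntegrable_iff]
  refine MeasureTheory.Measure.integrableOn_of_bounded (M := 1) ?_ ?_ ?_
  · simp
  · exact ((lgg_measurable a).mul (lgg_measurable b)).aestronglyMeasurable
  · refine Filter.Eventually.of_forall fun t => ?_
    rw [Real.norm_eq_abs, abs_mul]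
    exact mul_le_one₀ (lgg_abs_le a t) (abs_nonneg _) (lgg_abs_le b t)

lemma lgg_integral_le {M a b : ℝ} (hab : a ≤ b) (ha : -M ≤ a) (hb : b ≤ M) :
    ∫ t in (-M)..M, lgg a t * lgg b t ≤
      (lgv a + lgv b) / 2 - |a - b| / 2 - 1 + 2 * lgF (-M) := by
  have hF : ∀ t, HasDerivAt (fun t => Real.log (1 + Real.exp t) - lgF t) (lgF t * lgF t) t := by
    intro t
    refine ((lgl_hasDerivAt t).sub (lgF_hasDerivAt t)).congr_deriv ?_
    ring
  have hG : ∀ t, HasDerivAt (fun t => -lgF t) ((1 - lgF t) * (0 - lgF t)) t := by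
    intro t
    refine (lgF_hasDerivAt t).neg.congr_deriv ?_
    ring
  have hH : ∀ t, HasDerivAt (fun t => t - Real.log (1 + Real.exp t) - lgF t)
      ((1 - lgF t) * (1 - lgF t)) t := by
    intro t
    refine (((hasDerivAt_id t).sub (lgl_hasDerivAt t)).sub (lgF_hasDerivAt t)).congr_deriv ?_
    ring
  have h1 : ∫ t in (-M)..a, lgg a t * lgg b t =
      (Real.log (1 + Real.exp a) - lgF a) - (Real.log (1 + Real.exp (-M)) - lgF (-M)) := by
    refine intervalIntegral.integral_eq_sub_of_hasDeriv_right_of_le ha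
      (f := fun t => Real.log (1 + Real.exp t) - lgF t)
      (fun t _ => (hF t).continuousAt.continuousWithinAt) (fun t ht => ?_) (lgg_mul_integrable _ _ _ _)
    refine (hF t).hasDerivWithinAt.congr_deriv ?_
    unfold lgg
    rw [if_neg (by linarith [ht.2]), if_neg (by linarith [ht.2])]
    ring
  have h2 : ∫ t in a..b, lgg a t * lgg b t = (-lgF b) - (-lgF a) := by
    refine intervalIntegral.integral_eq_sub_of_hasDeriv_right_of_le hab
      (f := fun t => - lgF t)
      (fun t _ => (hG t).continuousAt.continuousWithinAt) (fun t ht => ?_) (lgg_mul_integrable _ _ _ _)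
    refine (hG t).hasDerivWithinAt.congr_deriv ?_
    unfold lgg
    rw [if_pos (by linarith [ht.1]), if_neg (by linarith [ht.2])]
  have h3 : ∫ t in b..M, lgg a t * lgg b t =
      (M - Real.log (1 + Real.exp M) - lgF M) - (b - Real.log (1 + Real.exp b) - lgF b) := by
    refine intervalIntegral.integral_eq_sub_of_hasDeriv_right_of_le hb
      (f := fun t => t - Real.log (1 + Real.exp t) - lgF t)
      (fun t _ => (hH t).continuousAt.continuousWithinAt) (fun t ht => ?_) (lgg_mul_integrable _ _ _ _)
    refine (hH t).hasDerivWithinAt.congr_deriv ?_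
    unfold lgg
    rw [if_pos (by linarith [ht.1]), if_pos (by linarith [ht.1])]
  rw [← intervalIntegral.integral_add_adjacent_intervals (lgg_mul_integrable a b (-M) a)
    (lgg_mul_integrable a b a M),
    ← intervalIntegral.integral_add_adjacent_intervals (lgg_mul_integrable a b a b)
    (lgg_mul_integrable a b b M), h1, h2, h3]
  have e1 : M ≤ Real.log (1 + Real.exp M) := by
    rw [Real.le_log_iff_exp_le (by positivity)]
    linarith
  have e2 : 0 ≤ Real.log (1 + Real.exp (-M)) := Real.log_nonneg (by linarith [Real.exp_pos (-M)])
  have e3 : lgF M = 1 - lgF (-M) := by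
    unfold lgF
    rw [neg_neg, Real.exp_neg]
    have := Real.exp_pos M
    field_simp
    ring
  rw [abs_of_nonpos (by linarith), lgv_eq, lgv_eq]
  linarith

lemma lgg_integral_le' {M a b : ℝ} (ha : |a| ≤ M) (hb : |b| ≤ M) :
    ∫ t in (-M)..M, lgg a t * lgg b t ≤
      (lgv a + lgv b) / 2 - |a - b| / 2 - 1 + 2 * lgF (-M) := by
  rw [abs_le] at ha hb
  rcases le_total a b with h | h
  · exact lgg_integral_le h ha.1 hb.2
  · have := lgg_integral_le h hb.1 ha.2
    rw [abs_sub_comm, add_comm (lgv a)]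
    simpa [mul_comm] using this

lemma gini {ι : Type*} (s : Finset ι) (y : ι → ℝ) :
    ∑ i ∈ s, ∑ j ∈ s, |y i - y j| ≤ 2 * s.card * ∑ i ∈ s, (lgv (y i) - 1) := by
  obtain ⟨M0, hM0⟩ : ∃ M0, ∀ i ∈ s, |y i| ≤ M0 :=
    ⟨∑ i ∈ s, |y i|, fun i hi => Finset.single_le_sum (f := fun i => |y i|) (fun _ _ => abs_nonneg _) hi⟩
  have key : ∀ M, M0 ≤ M → ∑ i ∈ s, ∑ j ∈ s, |y i - y j| ≤
      2 * s.card * ∑ i ∈ s, (lgv (y i) - 1) + 4 * s.card ^ 2 * lgF (-M) := by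
    intro M hM
    by_cases hM' : M < 0
    · have : s = ∅ := by
        by_contra h
        obtain ⟨i, hi⟩ := Finset.nonempty_iff_ne_empty.2 h
        have := hM0 i hi
        linarith [abs_nonneg (y i)]
      simp [this]
    push Not at hM'
    have h0 : 0 ≤ ∫ t in (-M)..M, (∑ i ∈ s, lgg (y i) t) ^ 2 :=
      intervalIntegral.integral_nonneg (by linarith) (fun t _ => sq_nonneg _)
    have h1 : ∫ t in (-M)..M, (∑ i ∈ s, lgg (y i) t) ^ 2 =
        ∑ i ∈ s, ∑ j ∈ s, ∫ t in (-M)..M, lgg (y i) t * lgg (y j) t := by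
      simp_rw [sq, Finset.sum_mul_sum]
      rw [intervalIntegral.integral_finsetSum]
      · refine Finset.sum_congr rfl fun i _ => ?_
        rw [intervalIntegral.integral_finsetSum]
        intro j _
        exact lgg_mul_integrable _ _ _ _
      · intro i _
        have hfun : (fun t => ∑ j ∈ s, lgg (y i) t * lgg (y j) t) =
            ∑ j ∈ s, fun t => lgg (y i) t * lgg (y j) t := by
          funext t
          rw [Finset.sum_apply]
        rw [hfun]
        exact IntervalIntegrable.sum s (fun j _ => lgg_mul_integrable _ _ _ _)
    rw [h1] at h0
    have h2 : ∑ i ∈ s, ∑ j ∈ s, ∫ t in (-M)..M, lgg (y i) t * lgg (y j) t ≤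
        ∑ i ∈ s, ∑ j ∈ s, ((lgv (y i) + lgv (y j)) / 2 - |y i - y j| / 2 - 1 + 2 * lgF (-M)) :=
      Finset.sum_le_sum fun i hi => Finset.sum_le_sum fun j hj =>
        lgg_integral_le' ((hM0 i hi).trans hM) ((hM0 j hj).trans hM)
    have h3 : ∑ i ∈ s, ∑ j ∈ s, ((lgv (y i) + lgv (y j)) / 2 - |y i - y j| / 2 - 1 + 2 * lgF (-M)) =
        s.card * ∑ i ∈ s, (lgv (y i) - 1) - (∑ i ∈ s, ∑ j ∈ s, |y i - y j|) / 2 +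
          2 * s.card ^ 2 * lgF (-M) := by
      simp only [Finset.sum_add_distrib, Finset.sum_sub_distrib, ← Finset.sum_div,
        Finset.sum_const, nsmul_eq_mul, ← Finset.mul_sum]
      ring
    linarith
  have hlim : Filter.Tendsto (fun M : ℝ => 2 * s.card * ∑ i ∈ s, (lgv (y i) - 1) +
      4 * s.card ^ 2 * lgF (-M)) Filter.atTop
      (nhds (2 * s.card * ∑ i ∈ s, (lgv (y i) - 1) + 4 * s.card ^ 2 * 0)) := by
    apply Filter.Tendsto.const_add
    apply Filter.Tendsto.const_mul
    unfold lgF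
    simp only [neg_neg]
    exact (Filter.tendsto_atTop_add_const_left _ _ Real.tendsto_exp_atTop).inv_tendsto_atTop
  rw [mul_zero, add_zero] at hlim
  exact ge_of_tendsto hlim (Filter.eventually_atTop.2 ⟨M0, fun M hM => key M hM⟩)

lemma lgv_neg (t : ℝ) : lgv (-t) = lgv t := by
  unfold lgv
  rw [neg_neg]
  ring_nf

lemma lgv_cosh (t : ℝ) : lgv t = Real.log (2 + 2 * Real.cosh t) := by
  unfold lgv
  rw [Real.cosh_eq]
  ring_nf

lemma lgv_le_lgv {a b : ℝ} (h : |a| ≤ |b|) : lgv a ≤ lgv b := by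
  rw [lgv_cosh, lgv_cosh]
  have := Real.cosh_le_cosh.2 h
  have := Real.one_le_cosh a
  exact Real.log_le_log (by linarith) (by linarith)

lemma lgv_abs (t : ℝ) : lgv |t| = lgv t :=
  le_antisymm (lgv_le_lgv (by simp)) (lgv_le_lgv (by simp))

lemma abs_le_lgv (t : ℝ) : |t| ≤ lgv t := by
  rw [← lgv_abs]
  unfold lgv
  rw [Real.le_log_iff_exp_le (by positivity)]
  linarith [Real.exp_pos (-|t|)]

lemma log_four_le_lgv (t : ℝ) : Real.log 4 ≤ lgv t := by
  rw [lgv_cosh]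
  have := Real.one_le_cosh t
  exact Real.log_le_log (by linarith) (by linarith)

lemma lgv_le (t : ℝ) : lgv t ≤ Real.log 4 + |t| := by
  rw [← lgv_abs]
  unfold lgv
  rw [Real.log_le_iff_le_exp (by positivity), Real.exp_add, Real.exp_log (by norm_num)]
  have h1 : 1 ≤ Real.exp |t| := Real.one_le_exp (abs_nonneg t)
  have h2 : Real.exp (-|t|) ≤ 1 := Real.exp_le_one_iff.2 (by linarith [abs_nonneg t])
  linarith

lemma exp_neg_lgv (t : ℝ) : Real.exp (-lgv t) = lgF t * (1 - lgF t) := by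
  unfold lgv lgF
  rw [Real.exp_neg, Real.exp_log (by positivity), Real.exp_neg]
  have := Real.exp_pos t
  field_simp
  ring

lemma lgF_sub_le {a b : ℝ} (ha : 0 ≤ a) (hab : a ≤ b) :
    lgF b - lgF a ≤ Real.exp (-lgv a) * (b - a) := by
  have := (convex_Icc a b).image_sub_le_mul_sub_of_deriv_le (f := lgF) (C := Real.exp (-lgv a))
    (fun t _ => (lgF_hasDerivAt t).continuousAt.continuousWithinAt)
    (fun t _ => (lgF_hasDerivAt t).differentiableAt.differentiableWithinAt)
    (fun t ht => by
      rw [interior_Icc] at ht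
      rw [(lgF_hasDerivAt t).deriv, ← exp_neg_lgv]
      apply Real.exp_le_exp.2
      have := lgv_le_lgv (a := a) (b := t) (by
        rw [abs_of_nonneg ha, abs_of_nonneg (by linarith [ht.1])]; exact ht.1.le)
      linarith)
  exact this a (Set.left_mem_Icc.2 hab) b (Set.right_mem_Icc.2 hab) hab

lemma lgW_lower (η : ℝ) (hη : 0 < η) (M : ℕ) :
    2 * lgF (η * (M + 1)) - 1 - η ≤
      η * ∑ e ∈ Finset.Icc (-(M : ℤ)) M, Real.exp (-lgv (η * e)) := by
  induction M with
  | zero =>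
    have h := lgF_sub_le (a := 0) (b := η) le_rfl hη.le
    have h0 : lgF 0 = 1 / 2 := by unfold lgF; norm_num
    rw [exp_neg_lgv, h0] at h
    simp [exp_neg_lgv, h0]
    linarith
  | succ M ih =>
    have hI : Finset.Icc (-((M + 1 : ℕ) : ℤ)) ((M + 1 : ℕ) : ℤ) =
        insert (-((M + 1 : ℕ) : ℤ)) (insert ((M + 1 : ℕ) : ℤ) (Finset.Icc (-(M : ℤ)) M)) := by
      ext e
      simp only [Finset.mem_insert, Finset.mem_Icc]
      push_cast
      omega
    rw [hI, Finset.sum_insert (by simp; omega), Finset.sum_insert (by simp)]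
    have h := lgF_sub_le (a := η * (M + 1)) (b := η * (M + 1 + 1)) (by positivity)
      (by nlinarith)
    push_cast
    rw [mul_neg, lgv_neg]
    linarith

lemma lgW_exists (ε : ℝ) (hε : 0 < ε) : ∃ B η₀ : ℝ, 0 < B ∧ 0 < η₀ ∧ ∀ η, 0 < η → η ≤ η₀ →
    ∃ M : ℕ, η * M ≤ B ∧
      1 - ε ≤ η * ∑ e ∈ Finset.Icc (-(M : ℤ)) M, Real.exp (-lgv (η * e)) := by
  have hlim : Filter.Tendsto lgF Filter.atTop (nhds 1) := by
    unfold lgF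
    have : Filter.Tendsto (fun t : ℝ => (1 + Real.exp (-t))⁻¹) Filter.atTop (nhds (1 + 0)⁻¹) :=
      (Real.tendsto_exp_neg_atTop_nhds_zero.const_add 1).inv₀ (by norm_num)
    simpa using this
  have hev := hlim.eventually (lt_mem_nhds (show 1 - ε / 4 < 1 by linarith))
  obtain ⟨B, hB⟩ := Filter.eventually_atTop.1 hev
  refine ⟨max B 1, ε / 2, by positivity, by positivity, fun η hη hη' => ⟨⌊max B 1 / η⌋₊, ?_, ?_⟩⟩
  · have := Nat.floor_le (show 0 ≤ max B 1 / η by positivity)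
    rw [le_div_iff₀ hη] at this
    linarith
  · refine le_trans ?_ (lgW_lower η hη _)
    have := Nat.lt_floor_add_one (max B 1 / η)
    rw [div_lt_iff₀ hη] at this
    have := hB (η * (⌊max B 1 / η⌋₊ + 1)) (by linarith [le_max_left B 1])
    linarith

lemma count_lemma (ε : ℝ) (hε : 0 < ε) (hε1 : ε < 1) :
    ∃ η₀ : ℝ, ∃ K : ℕ, 0 < η₀ ∧ 0 < K ∧ ∀ η, 0 < η → η ≤ η₀ →
    ∀ (ι : Type) [Fintype ι] [Nonempty ι],
    ∃ μ : ℝ, Real.log 4 ≤ μ ∧ ∃ E : Finset (ι → ℤ),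
      (∀ e ∈ E, ∑ k, lgv (η * e k) ≤ Fintype.card ι * (μ + ε)) ∧
      (Real.exp μ * (1 - ε) / η) ^ (Fintype.card ι) ≤ K * (E.card : ℝ) := by
  classical
  obtain ⟨B, η₀, hB, hη₀, hW⟩ := lgW_exists ε hε
  refine ⟨η₀, ⌊B / ε⌋₊ + 1, hη₀, by omega, fun η hη hηη ι _ _ => ?_⟩
  obtain ⟨M, hM, hS⟩ := hW η hη hηη
  set n := Fintype.card ι with hn
  have hn0 : (0 : ℝ) < n := by exact_mod_cast Fintype.card_pos
  set S := ∑ e ∈ Finset.Icc (-(M : ℤ)) M, Real.exp (-lgv (η * e)) with hSdef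
  set Ω : Finset (ι → ℤ) := Fintype.piFinset (fun _ => Finset.Icc (-(M : ℤ)) M) with hΩ
  set V : (ι → ℤ) → ℝ := fun e => ∑ k, lgv (η * e k) with hV
  have hsum : ∑ e ∈ Ω, Real.exp (-V e) = S ^ n := by
    have : S ^ n = ∏ _k : ι, S := by simp [hn]
    rw [this, hSdef, Finset.prod_univ_sum]
    refine Finset.sum_congr rfl fun e _ => ?_
    rw [hV, ← Finset.sum_neg_distrib, Real.exp_sum]
  have hVlow : ∀ e, n * Real.log 4 ≤ V e := by
    intro e
    calc n * Real.log 4 = ∑ _k : ι, Real.log 4 := by simp [hn]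
      _ ≤ V e := Finset.sum_le_sum fun k _ => log_four_le_lgv _
  have hVup : ∀ e ∈ Ω, V e ≤ n * (Real.log 4 + B) := by
    intro e he
    calc V e ≤ ∑ _k : ι, (Real.log 4 + B) := by
          refine Finset.sum_le_sum fun k _ => (lgv_le _).trans ?_
          have h1 := Fintype.mem_piFinset.1 he k
          rw [Finset.mem_Icc] at h1
          have h2 : |(e k : ℝ)| ≤ M := by
            rw [abs_le]
            exact ⟨by exact_mod_cast h1.1, by exact_mod_cast h1.2⟩
          rw [abs_mul, abs_of_pos hη]
          have := mul_le_mul_of_nonneg_left h2 hη.le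
          linarith
      _ = _ := by rw [Finset.sum_const, Finset.card_univ, nsmul_eq_mul]
  let b : (ι → ℤ) → ℕ := fun e => ⌊(V e / n - Real.log 4) / ε⌋₊
  have hbn : ∀ e, 0 ≤ (V e / n - Real.log 4) / ε := by
    intro e
    have h1 := hVlow e
    have : Real.log 4 ≤ V e / n := by
      rw [le_div_iff₀ hn0]; linarith
    apply div_nonneg <;> linarith
  have hb : ∀ e ∈ Ω, b e ∈ Finset.range (⌊B / ε⌋₊ + 1) := by
    intro e he
    rw [Finset.mem_range, Nat.lt_succ_iff]
    apply Nat.floor_le_floor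
    apply div_le_div_of_nonneg_right _ hε.le
    have : V e / n ≤ Real.log 4 + B := by
      rw [div_le_iff₀ hn0]; linarith [hVup e he]
    linarith
  have hfib := Finset.sum_fiberwise_of_maps_to hb (fun e => Real.exp (-V e))
  have hex : ∃ j ∈ Finset.range (⌊B / ε⌋₊ + 1),
      S ^ n / (⌊B / ε⌋₊ + 1 : ℕ) ≤ ∑ e ∈ Ω with b e = j, Real.exp (-V e) := by
    apply Finset.exists_le_of_sum_le (by simp)
    rw [hfib, hsum, Finset.sum_const, Finset.card_range, nsmul_eq_mul]
    rw [mul_div_cancel₀]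
    positivity
  obtain ⟨j, -, hj⟩ := hex
  refine ⟨Real.log 4 + j * ε, by nlinarith [Nat.cast_nonneg (α := ℝ) j], Ω.filter (fun e => b e = j),
    fun e he => ?_, ?_⟩
  · have he2 := (Finset.mem_filter.1 he).2
    have := Nat.lt_floor_add_one ((V e / n - Real.log 4) / ε)
    change (V e / n - Real.log 4) / ε < (b e : ℝ) + 1 at this
    rw [he2, div_lt_iff₀ hε, sub_lt_iff_lt_add, div_lt_iff₀ hn0] at this
    change V e ≤ _
    linarith
  · have h1 : ∑ e ∈ Ω with b e = j, Real.exp (-V e) ≤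
        ((Ω.filter (fun e => b e = j)).card : ℝ) * Real.exp (-(n * (Real.log 4 + j * ε))) := by
      rw [← nsmul_eq_mul]
      apply Finset.sum_le_card_nsmul
      intro e he
      have he2 := (Finset.mem_filter.1 he).2
      have := Nat.floor_le (hbn e)
      change (b e : ℝ) ≤ _ at this
      rw [he2, le_div_iff₀ hε, le_sub_iff_add_le, le_div_iff₀ hn0] at this
      apply Real.exp_le_exp.2
      linarith
    have h2 := hj.trans h1
    rw [div_le_iff₀ (by positivity)] at h2
    set μ := Real.log 4 + j * ε
    have h3 : Real.exp μ * (1 - ε) / η ≤ Real.exp μ * S := by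
      rw [div_le_iff₀ hη, mul_assoc]
      apply mul_le_mul_of_nonneg_left _ (Real.exp_pos _).le
      linarith
    calc (Real.exp μ * (1 - ε) / η) ^ n ≤ (Real.exp μ * S) ^ n := by
          apply pow_le_pow_left₀ _ h3
          have : 0 < 1 - ε := by linarith
          positivity
      _ = Real.exp (n * μ) * S ^ n := by rw [mul_pow, ← Real.exp_nat_mul]
      _ ≤ Real.exp (n * μ) * (((Ω.filter (fun e => b e = j)).card : ℝ) *
            Real.exp (-(n * μ)) * (⌊B / ε⌋₊ + 1 : ℕ)) :=
          mul_le_mul_of_nonneg_left h2 (Real.exp_pos _).le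
      _ = _ := by
          rw [Real.exp_neg]
          have := Real.exp_pos (n * μ)
          field_simp

lemma close_pair {ι : Type} [Fintype ι] (T : Finset (ι → ℤ)) (hT : 2 ≤ T.card)
    (w : ι → ℝ) (L s C : ℝ) (hw0 : ∀ k, 0 ≤ w k) (hwL : ∀ k, w k ≤ L) (hs : 0 < s)
    (hV : ∀ e ∈ T, ∑ k, lgv (L / s * e k) ≤ Fintype.card ι * C) :
    ∃ e ∈ T, ∃ e' ∈ T, e ≠ e' ∧
      (∑ k, |w k * e k - w k * e' k|) * (T.card - 1) ≤
        2 * s * Fintype.card ι * (C - 1) * T.card := by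
  classical
  by_contra! hcon
  set N := T.card with hN
  set n := Fintype.card ι with hn
  have hN2 : (2 : ℝ) ≤ N := by exact_mod_cast hT
  have hup : ∑ e ∈ T, ∑ e' ∈ T, ∑ k, |w k * e k - w k * e' k| ≤
      2 * s * n * (C - 1) * N * N := by
    calc ∑ e ∈ T, ∑ e' ∈ T, ∑ k, |w k * e k - w k * e' k|
        = ∑ k, s * ∑ e ∈ T, ∑ e' ∈ T, |w k * e k / s - w k * e' k / s| := by
          simp_rw [Finset.mul_sum]
          symm
          rw [Finset.sum_comm]
          refine Finset.sum_congr rfl fun e _ => ?_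
          rw [Finset.sum_comm]
          refine Finset.sum_congr rfl fun e' _ => ?_
          refine Finset.sum_congr rfl fun k _ => ?_
          rw [← sub_div, abs_div, abs_of_pos hs, mul_div_cancel₀ _ hs.ne']
      _ ≤ ∑ k, s * (2 * N * ∑ e ∈ T, (lgv (w k * e k / s) - 1)) := by
          refine Finset.sum_le_sum fun k _ => mul_le_mul_of_nonneg_left ?_ hs.le
          exact gini T (fun e => w k * e k / s)
      _ ≤ ∑ k, s * (2 * N * ∑ e ∈ T, (lgv (L / s * e k) - 1)) := by
          refine Finset.sum_le_sum fun k _ => mul_le_mul_of_nonneg_left ?_ hs.le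
          refine mul_le_mul_of_nonneg_left ?_ (by positivity)
          refine Finset.sum_le_sum fun e _ => ?_
          have : lgv (w k * e k / s) ≤ lgv (L / s * e k) := by
            apply lgv_le_lgv
            rw [show w k * e k / s = w k / s * e k by ring, abs_mul, abs_mul]
            apply mul_le_mul_of_nonneg_right _ (abs_nonneg _)
            have h1 := hw0 k
            have h2 := hwL k
            rw [abs_of_nonneg (by positivity), abs_of_nonneg (div_nonneg (by linarith) hs.le)]
            gcongr
          linarith
      _ = 2 * s * N * ∑ e ∈ T, ∑ k, (lgv (L / s * e k) - 1) := by
          rw [Finset.sum_comm, Finset.mul_sum]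
          refine Finset.sum_congr rfl fun k _ => ?_
          ring
      _ ≤ 2 * s * N * ∑ e ∈ T, (n * C - n) := by
          refine mul_le_mul_of_nonneg_left ?_ (by positivity)
          refine Finset.sum_le_sum fun e he => ?_
          rw [Finset.sum_sub_distrib]
          have := hV e he
          simp
          linarith
      _ = _ := by
          rw [Finset.sum_const, nsmul_eq_mul]
          ring
  have hlow : 2 * s * n * (C - 1) * N * N <
      ∑ e ∈ T, ∑ e' ∈ T, ∑ k, |w k * e k - w k * e' k| := by
    calc 2 * s * n * (C - 1) * N * N = ∑ e ∈ T, ∑ e' ∈ T.erase e,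
          2 * s * n * (C - 1) * N / (N - 1) := by
          have : ∀ e ∈ T, ∑ e' ∈ T.erase e, 2 * s * n * (C - 1) * N / ((N : ℝ) - 1) =
              2 * s * n * (C - 1) * N := by
            intro e he
            rw [Finset.sum_const, Finset.card_erase_of_mem he, nsmul_eq_mul, ← hN,
              Nat.cast_sub (by omega), Nat.cast_one, mul_div_cancel₀]
            linarith
          rw [Finset.sum_congr rfl this, Finset.sum_const, nsmul_eq_mul]
          ring
      _ < ∑ e ∈ T, ∑ e' ∈ T.erase e, ∑ k, |w k * e k - w k * e' k| := by
          have hne : T.Nonempty := Finset.card_pos.1 (by omega)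
          refine Finset.sum_lt_sum_of_nonempty hne fun e he => ?_
          refine Finset.sum_lt_sum_of_nonempty ?_ fun e' he' => ?_
          · apply Finset.card_pos.1
            rw [Finset.card_erase_of_mem he]
            omega
          · rw [div_lt_iff₀ (by linarith)]
            exact hcon e he e' (Finset.mem_of_mem_erase he') (Finset.ne_of_mem_erase he').symm
      _ ≤ _ := by
          refine Finset.sum_le_sum fun e he => ?_
          refine Finset.sum_le_sum_of_subset_of_nonneg (Finset.erase_subset _ _) ?_
          intros
          positivity
  linarith

lemma find_vec {ι : Type} [Fintype ι] (p : ι → ℕ) (m : ℕ) (u : ι → (ZMod (2 ^ m))ˣ)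
    (E : Finset (ι → ℤ)) (L s C : ℝ) (hp : ∀ k, 1 ≤ p k) (hpL : ∀ k, Real.log (p k) ≤ L)
    (hs : 0 < s)
    (hV : ∀ e ∈ E, ∑ k, lgv (L / s * e k) ≤ Fintype.card ι * C)
    (N J : ℕ) (hN : 2 ≤ N) (hJ : 1 ≤ J) (hE : 2 ^ m * (2 * J + 1) * N ≤ E.card)
    (hC : 0 < Fintype.card ι * C) :
    ∃ d : ι → ℤ, d ≠ 0 ∧ ∏ k, u k ^ d k = 1 ∧
      (∑ k, |Real.log (p k) * d k|) * (N - 1) ≤ 2 * s * Fintype.card ι * (C - 1) * N ∧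
      |∑ k, Real.log (p k) * d k| * J ≤ s * Fintype.card ι * C := by
  classical
  set n := Fintype.card ι with hn
  have : NeZero (2 ^ m) := ⟨by positivity⟩
  set S := s * n * C with hS
  have hSpos : 0 < S := by rw [hS, mul_assoc]; positivity
  have hJ0 : (0 : ℝ) < J := by exact_mod_cast hJ
  let X : (ι → ℤ) → ℝ := fun e => ∑ k, Real.log (p k) * e k
  have hw0 : ∀ k, 0 ≤ Real.log (p k) := fun k => Real.log_nonneg (by exact_mod_cast hp k)
  have hX : ∀ e ∈ E, |X e| ≤ S := by
    intro e he
    calc |X e| ≤ ∑ k, |Real.log (p k) * e k| := Finset.abs_sum_le_sum_abs _ _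
      _ ≤ ∑ k, s * lgv (L / s * e k) := by
          refine Finset.sum_le_sum fun k _ => ?_
          have h1 := abs_le_lgv (L / s * e k)
          have h2 : |Real.log (p k) * e k| ≤ s * |L / s * e k| := by
            rw [abs_mul, abs_mul, abs_div, abs_of_pos hs, abs_of_nonneg (hw0 k)]
            rw [show s * (|L| / s * |(e k : ℝ)|) = |L| * |(e k : ℝ)| by field_simp]
            exact mul_le_mul_of_nonneg_right ((hpL k).trans (le_abs_self L)) (abs_nonneg _)
          exact h2.trans (mul_le_mul_of_nonneg_left h1 hs.le)
      _ ≤ S := by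
          rw [← Finset.mul_sum, hS, mul_assoc]
          exact mul_le_mul_of_nonneg_left (hV e he) hs.le
  let f : (ι → ℤ) → (ZMod (2 ^ m))ˣ × ℤ := fun e => (∏ k, u k ^ e k, ⌊X e * J / S⌋)
  have hf : ∀ e ∈ E, f e ∈ (Finset.univ : Finset (ZMod (2 ^ m))ˣ) ×ˢ Finset.Icc (-(J : ℤ)) J := by
    intro e he
    have h1 := abs_le.1 (hX e he)
    rw [Finset.mem_product]
    refine ⟨Finset.mem_univ _, Finset.mem_Icc.2 ⟨?_, ?_⟩⟩
    · apply Int.le_floor.2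
      rw [le_div_iff₀ hSpos]
      push_cast
      nlinarith
    · have : X e * J / S ≤ J := by
        rw [div_le_iff₀ hSpos]
        nlinarith
      have h2 : (⌊X e * J / S⌋ : ℝ) ≤ J := (Int.floor_le _).trans this
      exact_mod_cast h2
  have hcard : ((Finset.univ : Finset (ZMod (2 ^ m))ˣ) ×ˢ Finset.Icc (-(J : ℤ)) J).card * N ≤
      E.card := by
    refine le_trans ?_ hE
    apply Nat.mul_le_mul_right
    rw [Finset.card_product]
    apply Nat.mul_le_mul
    · rw [Finset.card_univ, ZMod.card_units_eq_totient]
      exact Nat.totient_le _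
    · simp
      omega
  obtain ⟨y, -, hy⟩ := Finset.exists_le_card_fiber_of_mul_le_card_of_maps_to hf
    ⟨(1, 0), by simp⟩ hcard
  obtain ⟨T, hTs, hTc⟩ := Finset.exists_subset_card_eq hy
  obtain ⟨e, he, e', he', hne, hd⟩ := close_pair T (by omega) (fun k => Real.log (p k)) L s C hw0 hpL hs
    (fun e he => hV e (Finset.mem_filter.1 (hTs he)).1)
  have h1 := (Finset.mem_filter.1 (hTs he)).2
  have h2 := (Finset.mem_filter.1 (hTs he')).2
  have h3 : f e = f e' := h1.trans h2.symm
  have h4 : ∏ k, u k ^ e k = ∏ k, u k ^ e' k := congrArg Prod.fst h3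
  have h5 : ⌊X e * J / S⌋ = ⌊X e' * J / S⌋ := congrArg Prod.snd h3
  refine ⟨e - e', sub_ne_zero.2 hne, ?_, ?_, ?_⟩
  · simp only [Pi.sub_apply, zpow_sub, Finset.prod_mul_distrib, Finset.prod_inv_distrib]
    rw [h4, mul_inv_cancel]
  · rw [hTc] at hd
    simpa [mul_sub] using hd
  · have h6 := Int.abs_sub_lt_one_of_floor_eq_floor h5
    rw [← sub_div, ← sub_mul, abs_div, abs_mul, abs_of_pos hSpos, abs_of_pos hJ0,
      div_lt_one hSpos] at h6
    have h7 : ∑ k, Real.log (p k) * ((e - e') k : ℤ) = X e - X e' := by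
      simp only [X]
      rw [← Finset.sum_sub_distrib]
      refine Finset.sum_congr rfl fun k _ => ?_
      simp
      ring
    rw [h7]
    exact h6.le

lemma rad_bound (m a b Q : ℕ) (hlt : b < a) (hb : 0 < b)
    (hdvd : 2 ^ m ∣ a - b) (hQ : 0 < Q) (hq : ∀ q : ℕ, q.Prime → q ∣ a * b → q ∣ Q) :
    rad ((a - b) * b * a) * 2 ^ m ≤ 2 * Q * a := by
  obtain ⟨t, ht⟩ := hdvd
  have ht0 : 0 < t := by
    rcases Nat.eq_zero_or_pos t with h | h
    · rw [h] at ht; omega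
    · exact h
  have hR : rad ((a - b) * b * a) ≤ 2 * Q * t := by
    apply Nat.le_of_dvd (by positivity)
    refine dvd_trans ?_ (Nat.prod_primeFactors_dvd (2 * Q * t))
    unfold rad
    apply Finset.prod_dvd_prod_of_subset
    intro q hq'
    have hqp := Nat.prime_of_mem_primeFactors hq'
    have hqd := Nat.dvd_of_mem_primeFactors hq'
    rw [Nat.mem_primeFactors]
    refine ⟨hqp, ?_, by positivity⟩
    rw [mul_assoc] at hqd
    rcases hqp.dvd_mul.1 hqd with h | h
    · rw [ht] at h
      rcases hqp.dvd_mul.1 h with h | h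
      · have := hqp.dvd_of_dvd_pow h
        exact Dvd.dvd.mul_right (Dvd.dvd.mul_right this _) _
      · exact Dvd.dvd.mul_left h _
    · have := hq q hqp (by rwa [mul_comm])
      exact Dvd.dvd.mul_right (Dvd.dvd.mul_left this _) _
  calc rad ((a - b) * b * a) * 2 ^ m ≤ 2 * Q * t * 2 ^ m := Nat.mul_le_mul_right _ hR
    _ = 2 * Q * (a - b) := by rw [ht]; ring
    _ ≤ 2 * Q * a := Nat.mul_le_mul_left _ (Nat.sub_le _ _)

lemma triple_of_vec {ι : Type} [Fintype ι] (p : ι → ℕ) (hp : ∀ k, (p k).Prime)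
    (hinj : Function.Injective p) (m : ℕ) (u : ι → (ZMod (2 ^ m))ˣ)
    (hu : ∀ k, ((u k : ZMod (2 ^ m))) = p k) (d : ι → ℤ) (hd : d ≠ 0)
    (hprod : ∏ k, u k ^ d k = 1) :
    ∃ a b c : ℕ, 0 < a ∧ 0 < b ∧ 0 < c ∧ Nat.gcd a b = 1 ∧ a + b = c ∧ 2 ^ m < c ∧
      Real.log c ≤ (∑ k, |Real.log (p k) * d k| + |∑ k, Real.log (p k) * d k|) / 2 ∧
      rad (a * b * c) * 2 ^ m ≤ 2 * (∏ k, p k) * c := by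
  classical
  set A := ∏ k, p k ^ (d k).toNat with hA
  set B := ∏ k, p k ^ (-d k).toNat with hB
  have hA0 : 0 < A := Finset.prod_pos fun k _ => pow_pos (hp k).pos _
  have hB0 : 0 < B := Finset.prod_pos fun k _ => pow_pos (hp k).pos _
  have hcop : Nat.Coprime A B := by
    refine Nat.Coprime.prod_left fun k _ => Nat.Coprime.prod_right fun l _ => ?_
    by_cases hkl : k = l
    · subst hkl
      rcases le_total 0 (d k) with h | h
      · rw [show (-d k).toNat = 0 by omega]; simp
      · rw [show (d k).toNat = 0 by omega]; simp
    · apply Nat.Coprime.pow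
      exact (Nat.coprime_primes (hp k) (hp l)).2 (fun h => hkl (hinj h))
  have hne : A ≠ B := by
    intro h
    have hA1 : A = 1 := by
      rw [← h] at hcop
      exact (Nat.coprime_self A).1 hcop
    have hB1 : B = 1 := h ▸ hA1
    apply hd
    funext k
    have h1 : (d k).toNat = 0 := by
      have : p k ^ (d k).toNat ∣ 1 := hA1 ▸ Finset.dvd_prod_of_mem (fun k => p k ^ (d k).toNat) (Finset.mem_univ k)
      rw [Nat.dvd_one] at this
      by_contra hc
      have := Nat.one_lt_pow hc (hp k).one_lt
      omega
    have h2 : (-d k).toNat = 0 := by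
      have : p k ^ (-d k).toNat ∣ 1 := hB1 ▸ Finset.dvd_prod_of_mem (fun k => p k ^ (-d k).toNat) (Finset.mem_univ k)
      rw [Nat.dvd_one] at this
      by_contra hc
      have := Nat.one_lt_pow hc (hp k).one_lt
      omega
    simp
    omega
  have hmod : (A : ZMod (2 ^ m)) = B := by
    have h1 : (∏ k, u k ^ (d k).toNat) = ∏ k, u k ^ (-d k).toNat := by
      rw [← mul_inv_eq_one, ← Finset.prod_inv_distrib, ← Finset.prod_mul_distrib, ← hprod]
      refine Finset.prod_congr rfl fun k _ => ?_
      rw [← zpow_natCast, ← zpow_natCast, ← zpow_neg, ← zpow_add]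
      congr 1
      omega
    have h2 := congrArg (fun z : (ZMod (2 ^ m))ˣ => (z : ZMod (2 ^ m))) h1
    simp only [Units.coe_prod, Units.val_pow_eq_pow_val, hu] at h2
    rw [hA, hB]
    push_cast
    exact h2
  have hmod' : A ≡ B [MOD 2 ^ m] := (ZMod.natCast_eq_natCast_iff _ _ _).1 hmod
  have hlogA : Real.log A = ∑ k, Real.log (p k) * ((d k).toNat : ℝ) := by
    rw [hA]
    push_cast
    rw [Real.log_prod (fun k _ => by have := (hp k).pos; positivity)]
    refine Finset.sum_congr rfl fun k _ => ?_
    rw [Real.log_pow, mul_comm]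
  have hlogB : Real.log B = ∑ k, Real.log (p k) * ((-d k).toNat : ℝ) := by
    rw [hB]
    push_cast
    rw [Real.log_prod (fun k _ => by have := (hp k).pos; positivity)]
    refine Finset.sum_congr rfl fun k _ => ?_
    rw [Real.log_pow, mul_comm]
  have hadd : Real.log A + Real.log B = ∑ k, |Real.log (p k) * d k| := by
    rw [hlogA, hlogB, ← Finset.sum_add_distrib]
    refine Finset.sum_congr rfl fun k _ => ?_
    have h0 : 0 ≤ Real.log (p k) := Real.log_nonneg (by exact_mod_cast (hp k).one_lt.le)
    rw [abs_mul, abs_of_nonneg h0, ← mul_add]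
    congr 1
    have : (((d k).toNat : ℤ) + ((-d k).toNat : ℤ)) = |d k| := by
      rcases abs_cases (d k) with h | h <;> omega
    exact_mod_cast this
  have hsub : Real.log A - Real.log B = ∑ k, Real.log (p k) * d k := by
    rw [hlogA, hlogB, ← Finset.sum_sub_distrib]
    refine Finset.sum_congr rfl fun k _ => ?_
    rw [← mul_sub]
    congr 1
    have : (((d k).toNat : ℤ) - ((-d k).toNat : ℤ)) = d k := by omega
    exact_mod_cast this
  have hQ : ∀ q : ℕ, q.Prime → q ∣ A * B → q ∣ ∏ k, p k := by
    intro q hq h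
    have : ∃ k, q ∣ p k := by
      rcases hq.dvd_mul.1 h with h | h
      · obtain ⟨k, -, hk⟩ := (hq.prime.dvd_finsetProd_iff _).1 h
        exact ⟨k, hq.dvd_of_dvd_pow hk⟩
      · obtain ⟨k, -, hk⟩ := (hq.prime.dvd_finsetProd_iff _).1 h
        exact ⟨k, hq.dvd_of_dvd_pow hk⟩
    obtain ⟨k, hk⟩ := this
    exact hk.trans (Finset.dvd_prod_of_mem p (Finset.mem_univ k))
  have hQ0 : 0 < ∏ k, p k := Finset.prod_pos fun k _ => (hp k).pos
  rw [← hadd, ← hsub]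
  rcases lt_or_gt_of_ne hne with hlt | hlt
  · have hdv : 2 ^ m ∣ B - A := (Nat.modEq_iff_dvd' hlt.le).1 hmod'
    refine ⟨B - A, A, B, by omega, hA0, hB0, ?_, by omega, ?_, ?_, ?_⟩
    · rw [← Nat.coprime_iff_gcd_eq_one, Nat.coprime_sub_self_left hlt.le]
      exact hcop.symm
    · have := Nat.le_of_dvd (by omega) hdv
      omega
    · have := neg_abs_le (Real.log A - Real.log B)
      linarith
    · exact rad_bound m B A _ hlt hA0 hdv hQ0 (fun q hq h => hQ q hq (by rwa [mul_comm]))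
  · have hdv : 2 ^ m ∣ A - B := (Nat.modEq_iff_dvd' hlt.le).1 hmod'.symm
    refine ⟨A - B, B, A, by omega, hB0, hA0, ?_, by omega, ?_, ?_, ?_⟩
    · rw [← Nat.coprime_iff_gcd_eq_one, Nat.coprime_sub_self_left hlt.le]
      exact hcop
    · have := Nat.le_of_dvd (by omega) hdv
      omega
    · have := le_abs_self (Real.log A - Real.log B)
      linarith
    · exact rad_bound m A B _ hlt hB0 hdv hQ0 hQ

lemma core (ε : ℝ) (hε : 0 < ε) (hε1 : ε < 1) : ∃ η₀ : ℝ, ∃ K : ℕ, 0 < η₀ ∧ 0 < K ∧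
    ∀ k : ℕ, 3 ≤ k → ∀ n : ℕ, n + 1 = ((k + 1).primesBelow).card →
      Real.exp 1 / (n * Real.log k) ≤ η₀ →
      ∃ μ : ℝ, Real.log 4 ≤ μ ∧ ∀ m : ℕ,
        (2 : ℝ) ^ m * (20001 * 10001 * K) ≤
          (Real.exp μ * (1 - ε) * (n * Real.log k) / Real.exp 1) ^ n →
        ∃ a b c : ℕ, 0 < a ∧ 0 < b ∧ 0 < c ∧ Nat.gcd a b = 1 ∧ a + b = c ∧ 2 ^ m < c ∧
          Real.log c ≤ (n * Real.log k) ^ 2 / Real.exp 1 *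
            ((μ + ε - 1) * 1.0001 + (μ + ε) / 20000) ∧
          rad (a * b * c) * 2 ^ m ≤ (∏ p ∈ (k + 1).primesBelow, p) * c := by
  obtain ⟨η₀, K, hη₀, hK, H⟩ := count_lemma ε hε hε1
  refine ⟨η₀, K, hη₀, hK, fun k hk n hn hη => ?_⟩
  have h2mem : 2 ∈ (k + 1).primesBelow := by
    rw [Nat.mem_primesBelow]; exact ⟨by omega, Nat.prime_two⟩
  have h3mem : 3 ∈ ((k + 1).primesBelow).erase 2 := by
    rw [Finset.mem_erase, Nat.mem_primesBelow]; exact ⟨by omega, by omega, Nat.prime_three⟩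
  let ι : Type := {p : ℕ // p ∈ ((k + 1).primesBelow).erase 2}
  have : Fintype ι := inferInstanceAs (Fintype {p : ℕ // p ∈ ((k + 1).primesBelow).erase 2})
  have : Nonempty ι := ⟨⟨3, h3mem⟩⟩
  have hcard : Fintype.card ι = n := by
    have h1 : Fintype.card ι = (((k + 1).primesBelow).erase 2).card := by
      rw [← Nat.card_eq_fintype_card]
      exact Nat.subtype_card _ (fun x => Iff.rfl)
    rw [h1, Finset.card_erase_of_mem h2mem]
    omega
  have hnpos : 0 < n := by rw [← hcard]; exact Fintype.card_pos
  have hnR : (0 : ℝ) < n := by exact_mod_cast hnpos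
  have hL : 0 < Real.log k := Real.log_pos (by exact_mod_cast (by omega : 1 < k))
  set L := Real.log k with hLdef
  obtain ⟨μ, hμ, E, hE1, hE2⟩ := H (Real.exp 1 / (n * L)) (by positivity) hη ι
  refine ⟨μ, hμ, fun m hm => ?_⟩
  have hlog4 : 0 < Real.log 4 := Real.log_pos (by norm_num)
  have hμ0 : 0 < μ := by linarith
  let p : ι → ℕ := fun x => x.1
  have hpm : ∀ x : ι, x.1 ≠ 2 ∧ x.1 < k + 1 ∧ x.1.Prime := by
    intro x
    have := x.2
    rw [Finset.mem_erase, Nat.mem_primesBelow] at this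
    exact this
  have hpp : ∀ x, (p x).Prime := fun x => (hpm x).2.2
  have hcop : ∀ x, Nat.Coprime (p x) (2 ^ m) := fun x => by
    apply Nat.Coprime.pow_right
    exact (Nat.coprime_primes (hpp x) Nat.prime_two).2 (hpm x).1
  let u : ι → (ZMod (2 ^ m))ˣ := fun x => ZMod.unitOfCoprime (p x) (hcop x)
  set s : ℝ := n * L ^ 2 / Real.exp 1 with hs
  have hspos : 0 < s := by positivity
  have hLs : L / s = Real.exp 1 / (n * L) := by
    rw [hs]; field_simp
  have hKR : (0 : ℝ) < K := by exact_mod_cast hK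
  rw [hcard] at hE1 hE2
  obtain ⟨d, hd, hd1, hd2, hd3⟩ := find_vec p m u E L s (μ + ε) (fun x => (hpp x).one_lt.le)
    (fun x => Real.log_le_log (by exact_mod_cast (hpp x).pos)
      (by exact_mod_cast (Nat.lt_succ_iff.1 (hpm x).2.1))) hspos
    (by rw [hLs, hcard]; exact hE1) 10001 10000 (by norm_num) (by norm_num)
    (by
      have h1 : (2 : ℝ) ^ m * (20001 * 10001 * K) ≤ K * (E.card : ℝ) := by
        refine hm.trans (le_trans (le_of_eq ?_) hE2)
        congr 1
        field_simp
      have h2 : (2 : ℝ) ^ m * 20001 * 10001 ≤ E.card := by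
        refine le_of_mul_le_mul_left ?_ hKR
        linarith
      exact_mod_cast h2)
    (by rw [hcard]; positivity)
  obtain ⟨a, b, c, ha, hb, hc, hg, hab, hmc, hlc, hrad⟩ := triple_of_vec p hpp
    (fun x y h => Subtype.ext h) m u (fun x => ZMod.coe_unitOfCoprime _ _) d hd hd1
  refine ⟨a, b, c, ha, hb, hc, hg, hab, hmc, ?_, ?_⟩
  · refine hlc.trans ?_
    rw [hcard] at hd2 hd3
    push_cast at hd2 hd3
    have hsn : (n * L) ^ 2 / Real.exp 1 = s * n := by rw [hs]; ring
    rw [hsn]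
    nlinarith
  · refine hrad.trans (le_of_eq ?_)
    congr 1
    rw [← Finset.mul_prod_erase _ _ h2mem]
    congr 1
    exact Finset.prod_subtype (((k + 1).primesBelow).erase 2) (fun x => Iff.rfl) (fun x => x) |>.symm

lemma eventual_facts (C1 A : ℝ) : ∃ K : ℕ, ∀ k : ℕ, K ≤ k → 4 ≤ Real.log k ∧ 3 ≤ k ∧
    ∀ n : ℝ, 0 ≤ n → (1 - 0.0001) * k / Real.log k ≤ (n + 1) * Real.log k →
      (1 - 0.00005) * Real.log k ≤ Real.log n ∧ C1 + Real.log k ≤ 0.0001 * n ∧ A ≤ n := by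
  have hlog : Filter.Tendsto (fun k : ℕ => Real.log k) Filter.atTop Filter.atTop :=
    Real.tendsto_log_atTop.comp tendsto_natCast_atTop_atTop
  -- work with `t = log k`
  have h1 : ∀ᶠ t : ℝ in Filter.atTop,
      t ^ 2 ≤ (1 / 4) * Real.exp (0.00005 * t) := by
    have := isLittleO_pow_exp_pos_mul_atTop (b := 0.00005) 2 (by norm_num)
    filter_upwards [this.bound (show (0 : ℝ) < 1 / 4 by norm_num)] with t ht
    simpa [abs_of_pos (Real.exp_pos _)] using ht
  have h2 : ∀ᶠ t : ℝ in Filter.atTop, C1 + t ≤ 0.0001 * Real.exp ((1 - 0.00005) * t) := by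
    have h3 := isLittleO_pow_exp_pos_mul_atTop (b := 1 - 0.00005) 1 (by norm_num)
    filter_upwards [h3.bound (show (0 : ℝ) < 0.00005 by norm_num), Filter.eventually_ge_atTop C1,
      Filter.eventually_ge_atTop 0] with t ht ht1 ht2
    simp only [pow_one, Real.norm_eq_abs, abs_of_pos (Real.exp_pos _), abs_of_nonneg ht2] at ht
    linarith
  have h3 : ∀ᶠ t : ℝ in Filter.atTop, A ≤ Real.exp ((1 - 0.00005) * t) := by
    have : Filter.Tendsto (fun t : ℝ => Real.exp ((1 - 0.00005) * t)) Filter.atTop Filter.atTop :=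
      Real.tendsto_exp_atTop.comp (Filter.Tendsto.const_mul_atTop (by norm_num) Filter.tendsto_id)
    exact this.eventually_ge_atTop A
  have hall := hlog.eventually (h1.and (h2.and (h3.and (Filter.eventually_ge_atTop (4 : ℝ)))))
  obtain ⟨K, hK⟩ := Filter.eventually_atTop.1 (hall.and (Filter.eventually_ge_atTop 3))
  refine ⟨K, fun k hk => ?_⟩
  obtain ⟨⟨f1, f2, f3, f4⟩, f5⟩ := hK k hk
  refine ⟨f4, f5, fun n hn hf => ?_⟩
  have hk0 : (0 : ℝ) < k := by exact_mod_cast (by omega : 0 < k)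
  set L := Real.log k with hL
  have hkL : (k : ℝ) = Real.exp (0.00005 * L) * Real.exp ((1 - 0.00005) * L) := by
    rw [← Real.exp_add, show 0.00005 * L + (1 - 0.00005) * L = L by ring, hL, Real.exp_log hk0]
  set X := Real.exp ((1 - 0.00005) * L) with hX
  have hX1 : 1 ≤ X := Real.one_le_exp (by nlinarith)
  have hLpos : 0 < L := by linarith
  have hn : X ≤ n := by
    rw [div_le_iff₀ hLpos] at hf
    have h6 : 4 * L ^ 2 * X ≤ k := by
      rw [hkL]; nlinarith
    have h7 : 2 * X ≤ n + 1 := by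
      have : 2 * X * L ^ 2 ≤ (n + 1) * L ^ 2 := by nlinarith
      exact le_of_mul_le_mul_right this (by positivity)
    linarith
  refine ⟨?_, by linarith, by linarith⟩
  rw [← Real.log_exp ((1 - 0.00005) * L)]
  exact Real.log_le_log (by positivity) hn

lemma final_numeric (μ n L R D : ℝ) (hμ : Real.log 4 ≤ μ) (hn : 1 ≤ n) (hL : 4 ≤ L)
    (hR : R = (n * L) ^ 2 / Real.exp 1 * ((μ + 0.0001 - 1) * 1.0001 + (μ + 0.0001) / 20000))
    (hnL : (1 - 0.00005) * L ≤ Real.log n) (hD : n * (μ - 0.00031) ≤ D) :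
    0 < R ∧ 0 < Real.log R ∧ 6.563 * (Real.sqrt R / Real.log R) ≤ D := by
  have hlog4 : 1.38 ≤ Real.log 4 := by
    have : Real.log 4 = 2 * Real.log 2 := by
      rw [show (4 : ℝ) = 2 ^ 2 by norm_num, Real.log_pow]; norm_num
    have := Real.log_two_gt_d9
    linarith
  have he1 := Real.exp_one_gt_d9
  have he2 := Real.exp_one_lt_d9
  set ρ := (μ + 0.0001 - 1) * 1.0001 + (μ + 0.0001) / 20000 with hρ
  have hρ1 : 0.38 ≤ ρ := by rw [hρ]; linarith
  have hRpos : 0 < R := by rw [hR]; positivity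
  have hRn : n ^ 2 ≤ R := by
    rw [hR, div_mul_eq_mul_div, le_div_iff₀ (by positivity), mul_pow, mul_assoc]
    apply mul_le_mul_of_nonneg_left _ (by positivity)
    nlinarith
  have hlogR : (2 - 0.0001) * L ≤ Real.log R := by
    have := Real.log_le_log (by positivity) hRn
    rw [Real.log_pow] at this
    push_cast at this
    linarith
  have hlogRpos : 0 < Real.log R := by nlinarith
  refine ⟨hRpos, hlogRpos, ?_⟩
  refine le_trans ?_ hD
  rw [mul_div_assoc', div_le_iff₀ hlogRpos]
  have hμ1 : 1.38 ≤ μ := hlog4.trans hμ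
  have hgoal : 6.563 * Real.sqrt R ≤ n * (μ - 0.00031) * ((2 - 0.0001) * L) := by
    have h0 : 0 ≤ n * (μ - 0.00031) * ((2 - 0.0001) * L) :=
      mul_nonneg (mul_nonneg (by linarith) (by linarith)) (by nlinarith)
    refine (sq_le_sq₀ (by positivity) h0).1 ?_
    rw [mul_pow, Real.sq_sqrt hRpos.le, hR]
    have key : 6.563 ^ 2 * ρ ≤ (μ - 0.00031) ^ 2 * (2 - 0.0001) ^ 2 * Real.exp 1 := by
      have : 6.563 ^ 2 * ρ ≤ (μ - 0.00031) ^ 2 * (2 - 0.0001) ^ 2 * 2.718 := by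
        rw [hρ]
        nlinarith [sq_nonneg (μ - 2)]
      refine this.trans ?_
      apply mul_le_mul_of_nonneg_left (by linarith) (by positivity)
    have : 6.563 ^ 2 * ((n * L) ^ 2 / Real.exp 1 * ρ) = (n * L) ^ 2 * (6.563 ^ 2 * ρ) / Real.exp 1 := by
      ring
    rw [this, div_le_iff₀ (by positivity)]
    calc (n * L) ^ 2 * (6.563 ^ 2 * ρ) ≤
        (n * L) ^ 2 * ((μ - 0.00031) ^ 2 * (2 - 0.0001) ^ 2 * Real.exp 1) :=
          mul_le_mul_of_nonneg_left key (by positivity)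
      _ = _ := by ring
  refine hgoal.trans ?_
  apply mul_le_mul_of_nonneg_left hlogR
  exact mul_nonneg (by linarith) (by linarith)

lemma delta_bound (k n L f μ C1 : ℝ) (hk : 0 < k) (hn : 0 < n) (hLk : L = Real.log k) (hL : 0 < L)
    (hf : (1 - 0.0001) * k / L ≤ f) (hC : C1 + L ≤ 0.0001 * n) :
    n * (μ - 0.00031) ≤
      n * (μ + Real.log (1 - 0.0001) + Real.log (n * L) - 1) - C1 - ((n + 1) * L - f) := by
  set z := k / (n * L) with hz
  have hzpos : 0 < z := by positivity
  have hfz : n * ((1 - 0.0001) * z) ≤ f := by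
    refine le_trans (le_of_eq ?_) hf
    rw [hz]; field_simp
  have hlz : Real.log z = L - Real.log (n * L) := by
    rw [hz, Real.log_div hk.ne' (by positivity), ← hLk]
  have h1 : Real.log (1 - 0.0001) + Real.log z ≤ (1 - 0.0001) * z - 1 := by
    rw [← Real.log_mul (by norm_num) hzpos.ne']
    exact Real.log_le_sub_one_of_pos (by positivity)
  have h2 : -0.000101 ≤ Real.log (1 - 0.0001) := by
    have := Real.one_sub_inv_le_log_of_pos (show (0 : ℝ) < 1 - 0.0001 by norm_num)
    norm_num at this ⊢
    linarith
  have h3 : n * (2 * Real.log (1 - 0.0001)) ≤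
      n * (Real.log (1 - 0.0001) + Real.log (n * L) - 1 - L + (1 - 0.0001) * z) :=
    mul_le_mul_of_nonneg_left (by linarith) hn.le
  nlinarith

/-- There are infinitely many abc triples `(a, b, c)` (positive integers with
`gcd a b = 1` and `a + b = c`) satisfying
`exp (6.563 * √(log c) / log (log c)) * rad (a * b * c) ≤ c`. -/
theorem abc_lower_bound (N : ℝ) :
    ∃ a b c : ℕ, 0 < a ∧ 0 < b ∧ 0 < c ∧ Nat.gcd a b = 1 ∧ a + b = c ∧ (c : ℝ) > N ∧
      Real.exp (6.563 * Real.sqrt (Real.log c) / Real.log (Real.log c)) *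
        (rad (a * b * c) : ℝ) ≤ (c : ℝ) := by
  obtain ⟨η₀, K, hη₀, hK, H⟩ := core 0.0001 (by norm_num) (by norm_num)
  set W : ℝ := 20001 * 10001 * K with hW
  have hKR : (0 : ℝ) < K := by exact_mod_cast hK
  have hWpos : 0 < W := by positivity
  obtain ⟨K₁, hK₁⟩ := eventual_facts (Real.log W + Real.log 2)
    (max (max N 8) (Real.exp 1 / η₀))
  obtain ⟨k, hkK, hk⟩ := many_primes 0.0001 (by norm_num) (by norm_num) K₁
  obtain ⟨hL4, hk3, hfacts⟩ := hK₁ k hkK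
  have hk0 : (0 : ℝ) < k := by exact_mod_cast (by omega : 0 < k)
  have hcard : 0 < ((k + 1).primesBelow).card :=
    Finset.card_pos.2 ⟨2, Nat.mem_primesBelow.2 ⟨by omega, Nat.prime_two⟩⟩
  obtain ⟨n, hn⟩ := Nat.exists_eq_succ_of_ne_zero hcard.ne'
  set f := ∑ p ∈ (k + 1).primesBelow, Real.log ((k : ℝ) / p) with hf
  set θ := ∑ p ∈ (k + 1).primesBelow, Real.log (p : ℝ) with hθ
  set L := Real.log k with hLdef
  have hpp : ∀ p ∈ (k + 1).primesBelow, 1 < (p : ℝ) := fun p hp => by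
    exact_mod_cast (Nat.mem_primesBelow.1 hp).2.one_lt
  have hθ0 : 0 ≤ θ := Finset.sum_nonneg fun p hp => Real.log_nonneg (hpp p hp).le
  have hfθ : θ = (n + 1) * L - f := by
    have : f = ∑ p ∈ (k + 1).primesBelow, (L - Real.log (p : ℝ)) := by
      refine Finset.sum_congr rfl fun p hp => ?_
      have := hpp p hp
      rw [Real.log_div hk0.ne' (by positivity)]
    rw [this, Finset.sum_sub_distrib, Finset.sum_const, hn, nsmul_eq_mul]
    push_cast
    ring
  obtain ⟨hlogn, hC1, hA⟩ := hfacts n (Nat.cast_nonneg n) (by linarith)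
  have hnN : N ≤ n := (le_max_left _ _).trans ((le_max_left _ _).trans hA)
  have hn8 : (8 : ℝ) ≤ n := (le_max_right _ _).trans ((le_max_left _ _).trans hA)
  have hnη : Real.exp 1 / η₀ ≤ n := (le_max_right _ _).trans hA
  obtain ⟨μ, hμ, H2⟩ := H k hk3 n hn.symm (by
    rw [div_le_iff₀ (by positivity)]
    rw [div_le_iff₀ hη₀] at hnη
    have : (n : ℝ) * η₀ * 1 ≤ n * η₀ * L := mul_le_mul_of_nonneg_left (by linarith) (by positivity)
    linarith)
  have hlog4 : 1.38 ≤ Real.log 4 := by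
    have : Real.log 4 = 2 * Real.log 2 := by
      rw [show (4 : ℝ) = 2 ^ 2 by norm_num, Real.log_pow]; norm_num
    have := Real.log_two_gt_d9
    linarith
  set Y : ℝ := n * (μ + Real.log (1 - 0.0001) + Real.log (n * L) - 1) - Real.log W with hY
  have hlog2 : 0 < Real.log 2 := Real.log_pos (by norm_num)
  have hΔ := delta_bound k n L f μ (Real.log W + Real.log 2) hk0 (by linarith) hLdef (by linarith)
    hk hC1
  have hYΔ : n * (μ - 0.00031) ≤ Y - Real.log 2 - θ := by rw [hY, hfθ]; linarith
  have hn1 : (n : ℝ) * 1 ≤ n * (μ - 0.00031) :=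
    mul_le_mul_of_nonneg_left (by linarith) (by linarith)
  have hY0 : 0 ≤ Y / Real.log 2 := div_nonneg (by linarith) hlog2.le
  set m := ⌊Y / Real.log 2⌋₊ with hm
  have hm1 : m * Real.log 2 ≤ Y := by
    rw [← le_div_iff₀ hlog2]; exact Nat.floor_le hY0
  have hm2 : Y - Real.log 2 ≤ m * Real.log 2 := by
    have := Nat.lt_floor_add_one (Y / Real.log 2)
    rw [div_lt_iff₀ hlog2] at this
    linarith
  have h2m : (2 : ℝ) ^ m = Real.exp (m * Real.log 2) := by
    rw [mul_comm, Real.exp_mul, Real.exp_log (by norm_num), Real.rpow_natCast]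
  obtain ⟨a, b, c, ha, hb, hc, hg, hab, hmc, hlc, hrad⟩ := H2 m (by
    have e1 : Real.exp μ * (1 - 0.0001) * (n * L) / Real.exp 1 =
        Real.exp (μ + Real.log (1 - 0.0001) + Real.log (n * L) - 1) := by
      rw [Real.exp_sub, Real.exp_add, Real.exp_add, Real.exp_log (by norm_num),
        Real.exp_log (by positivity)]
    have e2 : W = Real.exp (Real.log W) := (Real.exp_log hWpos).symm
    rw [e1, ← Real.exp_nat_mul, h2m, e2, ← Real.exp_add]
    exact Real.exp_le_exp.2 (by linarith))
  have hmc' : Real.exp (m * Real.log 2) < c := by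
    rw [← h2m]; exact_mod_cast hmc
  have hcpos : (0 : ℝ) < c := by exact_mod_cast hc
  have hlogc : (n : ℝ) ≤ Real.log c := by
    rw [Real.le_log_iff_exp_le hcpos]
    refine le_trans (Real.exp_le_exp.2 ?_) hmc'.le
    linarith
  refine ⟨a, b, c, ha, hb, hc, hg, hab, ?_, ?_⟩
  · have := Real.add_one_le_exp (n : ℝ)
    have h2 := (Real.le_log_iff_exp_le hcpos).1 hlogc
    show N < c
    linarith
  · obtain ⟨hR0, hlogR, hfin⟩ := final_numeric μ n L _ (Y - Real.log 2 - θ) hμ (by linarith) hL4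
      rfl hlogn hYΔ
    set R := ((n : ℝ) * L) ^ 2 / Real.exp 1 *
      ((μ + 0.0001 - 1) * 1.0001 + (μ + 0.0001) / 20000) with hR
    have he2 : Real.exp 2 ≤ 8 := by
      have h1 := Real.exp_one_lt_d9
      have h2 : Real.exp 2 = Real.exp 1 * Real.exp 1 := by
        rw [← Real.exp_add]; norm_num
      rw [h2]
      nlinarith [Real.exp_pos 1]
    have hce : Real.exp 2 ≤ Real.log c := by linarith
    have hanti : Real.log R / Real.sqrt R ≤ Real.log (Real.log c) / Real.sqrt (Real.log c) :=
      Real.log_div_sqrt_antitoneOn hce (hce.trans hlc) hlc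
    have hsq : Real.sqrt (Real.log c) / Real.log (Real.log c) ≤ Real.sqrt R / Real.log R := by
      have := inv_anti₀ (by positivity) hanti
      rwa [inv_div, inv_div] at this
    have hexp : 6.563 * Real.sqrt (Real.log c) / Real.log (Real.log c) ≤ m * Real.log 2 - θ := by
      rw [mul_div_assoc]
      linarith
    have hP : ((∏ p ∈ (k + 1).primesBelow, p : ℕ) : ℝ) = Real.exp θ := by
      rw [hθ, Real.exp_sum]
      push_cast
      refine Finset.prod_congr rfl fun p hp => ?_
      have := hpp p hp
      rw [Real.exp_log (by positivity)]
    have hrad' : (rad (a * b * c) : ℝ) * Real.exp (m * Real.log 2) ≤ Real.exp θ * c := by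
      rw [← hP, ← h2m]
      exact_mod_cast hrad
    calc _ ≤ Real.exp (m * Real.log 2 - θ) * (rad (a * b * c) : ℝ) :=
          mul_le_mul_of_nonneg_right (Real.exp_le_exp.2 hexp) (Nat.cast_nonneg _)
      _ = ((rad (a * b * c) : ℝ) * Real.exp (m * Real.log 2)) / Real.exp θ := by
          rw [Real.exp_sub]; ring
      _ ≤ c := by
          rw [div_le_iff₀ (Real.exp_pos _)]
          linarith
end

section
/- Suppose δ > 0 and C ≥ 0 are constants such that 2δ < e⁴ and, for every n ≥ 1, every full-rank lattice L in ℝⁿ contains a nonzero vector x with ‖x‖₁ ≤ (n/δ + C·log n)·det(L)^{1/n}. Then there are infinitely many abc triples (a,b,c) satisfying exp(4·√(2(δ/e)·log c)/log log c)·rad(abc) ≤ c; that is, for every real N there exists such a triple with c > N. -/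
section AbcAux
open Filter Topology

lemma five_pow_two_pow (k : ℕ) : ∃ j : ℤ, (5:ℤ) ^ (2 ^ k) = 1 + 2 ^ (k + 2) * (2 * j + 1) := by
  induction k with
  | zero => exact ⟨0, by norm_num⟩
  | succ k ih =>
    obtain ⟨j, hj⟩ := ih
    refine ⟨j + 2 ^ k * (2 * j + 1) ^ 2, ?_⟩
    rw [pow_succ, pow_mul, hj]
    ring

lemma five_gen (k : ℕ) (u : ℤ) (hu : (4:ℤ) ∣ u - 1) : ∃ a : ℕ, (2:ℤ) ^ (k + 2) ∣ u - 5 ^ a := by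
  induction k with
  | zero => exact ⟨0, by simpa using hu⟩
  | succ k ih =>
    obtain ⟨a, c, hc⟩ := ih
    rcases Int.even_or_odd' c with ⟨d, hd | hd⟩
    · exact ⟨a, d, by rw [hc, hd]; ring⟩
    · obtain ⟨j, hj⟩ := five_pow_two_pow k
      have h5 : ∃ q : ℤ, (5:ℤ) ^ a = 2 * q + 1 := by
        have : Odd ((5:ℤ) ^ a) := Odd.pow (by decide)
        exact this
      obtain ⟨q, hq⟩ := h5
      refine ⟨a + 2 ^ k, d - q - (2 * q + 1) * j, ?_⟩
      rw [pow_add, hj]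
      have : u = 5 ^ a + 2 ^ (k + 2) * c := by linarith
      rw [this, hd, hq]
      ring

lemma odd_gen (k : ℕ) (u : ℕ) (hu : Odd u) :
    ∃ a : ℕ, (2:ℤ) ^ (k + 2) ∣ u - 5 ^ a ∨ (2:ℤ) ^ (k + 2) ∣ u + 5 ^ a := by
  have : (4:ℤ) ∣ (u:ℤ) - 1 ∨ (4:ℤ) ∣ -(u:ℤ) - 1 := by
    obtain ⟨r, rfl⟩ := hu
    omega
  rcases this with h | h
  · obtain ⟨a, ha⟩ := five_gen k _ h
    exact ⟨a, Or.inl ha⟩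
  · obtain ⟨a, ha⟩ := five_gen k _ h
    refine ⟨a, Or.inr ?_⟩
    obtain ⟨q, hq⟩ := ha
    exact ⟨-q, by linarith⟩

/-- congruence of the positive and the negative part -/
lemma congr_of_exponents (k n : ℕ) (p : Fin (n + 1) → ℕ) (hodd : ∀ i, Odd (p i)) (h5 : p 0 = 5)
    (a : Fin (n + 1) → ℕ)
    (ha : ∀ i, (2:ℤ) ^ (k + 2) ∣ p i - 5 ^ (a i) ∨ (2:ℤ) ^ (k + 2) ∣ p i + 5 ^ (a i))
    (c : ℤ) (e : Fin (n + 1) → ℤ)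
    (he : ∑ i, a i * e i = 2 ^ k * c) :
    (2:ℤ) ^ (k + 2) ∣ (∏ i, (p i:ℤ) ^ (e i).toNat) - (∏ i, (p i:ℤ) ^ (-e i).toNat) ∨
    (2:ℤ) ^ (k + 2) ∣ (∏ i, (p i:ℤ) ^ (e i).toNat) + (∏ i, (p i:ℤ) ^ (-e i).toNat) := by
  set M : ℕ := 2 ^ (k + 2) with hM
  have hcop : ∀ i, Nat.Coprime (p i) M := fun i =>
    Nat.Coprime.pow_right _ ((Nat.coprime_two_right).mpr (hodd i))
  let g : Fin (n + 1) → (ZMod M)ˣ := fun i => ZMod.unitOfCoprime (p i) (hcop i)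
  have hg : ∀ i, ((g i : (ZMod M)ˣ) : ZMod M) = p i := fun i => rfl
  let f : (ZMod M)ˣ := ZMod.unitOfCoprime 5 (h5 ▸ hcop 0)
  have hf : (f : ZMod M) = 5 := by simp [f]
  have hfk : f ^ (2 ^ k) = 1 := by
    ext
    push_cast
    rw [hf]
    obtain ⟨j, hj⟩ := five_pow_two_pow k
    have : (((5:ℤ) ^ (2 ^ k) - 1 : ℤ) : ZMod M) = 0 := by
      rw [ZMod.intCast_zmod_eq_zero_iff_dvd]
      rw [hj, hM]; push_cast; exact ⟨2 * j + 1, by ring⟩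
    push_cast at this
    exact sub_eq_zero.mp this
  let K : Subgroup (ZMod M)ˣ := Subgroup.zpowers (-1)
  have hK : ∀ s ∈ K, s = 1 ∨ s = -1 := by
    intro s hs
    obtain ⟨z, hz⟩ := Subgroup.mem_zpowers_iff.mp hs
    rw [← hz]
    rcases Int.even_or_odd z with h | h
    · left; exact h.neg_one_zpow
    · right; exact h.neg_one_zpow
  have hgK : ∀ i, g i * (f ^ (a i))⁻¹ ∈ K := by
    intro i
    rcases ha i with h | h
    · have : g i = f ^ (a i) := by
        ext
        push_cast
        rw [hg, hf]
        have h2 : (((p i:ℤ) - 5 ^ (a i) : ℤ) : ZMod M) = 0 := by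
          rw [ZMod.intCast_zmod_eq_zero_iff_dvd, hM]; push_cast; exact h
        push_cast at h2
        exact sub_eq_zero.mp h2
      rw [this]; simp
    · have : g i = - f ^ (a i) := by
        ext
        push_cast
        rw [hg, hf]
        have h2 : (((p i:ℤ) + 5 ^ (a i) : ℤ) : ZMod M) = 0 := by
          rw [ZMod.intCast_zmod_eq_zero_iff_dvd, hM]; push_cast; exact h
        push_cast at h2
        exact eq_neg_of_add_eq_zero_left h2
      rw [this]
      have : -f ^ a i * (f ^ a i)⁻¹ = -1 := by
        rw [neg_mul, mul_inv_cancel]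
      rw [this]; exact Subgroup.mem_zpowers _
  have hprod : ∏ i, (g i) ^ (e i) = ∏ i, (g i * (f ^ (a i))⁻¹) ^ (e i) := by
    have h1 : ∏ i, (f ^ (a i)) ^ (e i) = 1 := by
      have : ∀ i, (f ^ (a i)) ^ (e i) = f ^ ((a i : ℤ) * e i) := by
        intro i; rw [zpow_mul, zpow_natCast]
      simp_rw [this]
      have h2 : ∏ i, f ^ ((a i : ℤ) * e i) = f ^ (∑ i, (a i : ℤ) * e i) := by
        induction (Finset.univ : Finset (Fin (n+1))) using Finset.induction_on with
        | empty => simp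
        | insert x s hx ih => rw [Finset.prod_insert hx, Finset.sum_insert hx, zpow_add, ih]
      rw [h2, he, zpow_mul]
      have : f ^ ((2:ℤ) ^ k) = 1 := by
        have := hfk
        rw [← zpow_natCast] at this
        push_cast at this; exact this
      rw [this, one_zpow]
    simp_rw [mul_zpow, inv_zpow]
    rw [Finset.prod_mul_distrib, Finset.prod_inv_distrib, h1]; simp
  have hmem : ∏ i, (g i) ^ (e i) ∈ K := by
    rw [hprod]
    exact K.prod_mem fun i _ => K.zpow_mem (hgK i) _
  have hUV : ∏ i, (g i) ^ (e i) = (∏ i, (g i) ^ (e i).toNat) * (∏ i, (g i) ^ (-e i).toNat)⁻¹ := by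
    rw [← Finset.prod_inv_distrib, ← Finset.prod_mul_distrib]
    refine Finset.prod_congr rfl fun i _ => ?_
    rw [← zpow_natCast, ← zpow_natCast, ← zpow_neg, ← zpow_add]
    congr 1
    omega
  rw [hUV] at hmem
  rcases hK _ hmem with h | h
  · left
    have h := mul_inv_eq_one.mp h
    have h := congrArg (Units.val) h
    push_cast at h
    simp_rw [hg] at h
    have h2 : (((∏ i, (p i:ℤ) ^ (e i).toNat) - (∏ i, (p i:ℤ) ^ (-e i).toNat) : ℤ) : ZMod M) = 0 := by
      push_cast; rw [h, sub_self]
    rw [ZMod.intCast_zmod_eq_zero_iff_dvd, hM] at h2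
    push_cast at h2; exact h2
  · right
    have h := mul_inv_eq_iff_eq_mul.mp h
    have h := congrArg (Units.val) h
    push_cast at h
    simp_rw [hg] at h
    have h2 : (((∏ i, (p i:ℤ) ^ (e i).toNat) + (∏ i, (p i:ℤ) ^ (-e i).toNat) : ℤ) : ZMod M) = 0 := by
      push_cast; rw [h]; ring
    rw [ZMod.intCast_zmod_eq_zero_iff_dvd, hM] at h2
    push_cast at h2; exact h2

lemma prod_union_le (A B : Finset ℕ) (hA : ∀ p ∈ A, 1 ≤ p) :
    (A ∪ B).prod id ≤ A.prod id * B.prod id := by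
  rw [← Finset.prod_union_inter]
  refine Nat.le_mul_of_pos_right _ (Finset.prod_pos fun p hp => ?_)
  exact hA p (Finset.mem_inter.mp hp).1

lemma rad_bound_s1 (U V m k : ℕ) (P : Finset ℕ) (hP : ∀ p ∈ P, p.Prime) (hU : 0 < U) (hV : 0 < V)
    (hk : 0 < k)
    (hUV : (U * V).primeFactors ⊆ P) : rad (U * V * (2 ^ m * k)) ≤ 2 * P.prod id * k := by
  have hsub : (U * V * (2 ^ m * k)).primeFactors ⊆ P ∪ ({2} ∪ k.primeFactors) := by
    intro q hq
    have hqp := Nat.prime_of_mem_primeFactors hq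
    have hd := Nat.dvd_of_mem_primeFactors hq
    rw [Nat.Prime.dvd_mul hqp, Nat.Prime.dvd_mul hqp (m := 2 ^ m)] at hd
    simp only [Finset.mem_union, Finset.mem_singleton]
    rcases hd with h | h | h
    · left; exact hUV (Nat.mem_primeFactors.mpr ⟨hqp, h, by positivity⟩)
    · right; left
      exact (Nat.prime_dvd_prime_iff_eq hqp Nat.prime_two).mp (hqp.dvd_of_dvd_pow h)
    · right; right; exact Nat.mem_primeFactors.mpr ⟨hqp, h, by omega⟩
  have h1 : rad (U * V * (2 ^ m * k)) ≤ (P ∪ ({2} ∪ k.primeFactors)).prod id := by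
    unfold rad
    refine Finset.prod_le_prod_of_subset_of_one_le' hsub fun q hq _ => ?_
    simp only [Finset.mem_union, Finset.mem_singleton] at hq
    rcases hq with h | h | h
    · exact (hP q h).one_le
    · simp [h]
    · exact (Nat.prime_of_mem_primeFactors h).one_le
  have h2 := prod_union_le P ({2} ∪ k.primeFactors) (fun p hp => (hP p hp).one_le)
  have h3 := prod_union_le {2} k.primeFactors (by simp)
  have h4 : k.primeFactors.prod id ≤ k := Nat.le_of_dvd hk (Nat.prod_primeFactors_dvd k)
  simp only [Finset.prod_singleton, id] at h3
  calc _ ≤ _ := h1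
    _ ≤ _ := h2
    _ ≤ P.prod id * (2 * k) := by
        refine Nat.mul_le_mul_left _ (h3.trans (Nat.mul_le_mul_left _ h4))
    _ = _ := by ring

lemma abc_of_UV_aux (U V m : ℕ) (P : Finset ℕ) (hP : ∀ p ∈ P, p.Prime) (hV : 0 < V) (hlt : V < U)
    (hcop : Nat.Coprime U V) (hUV : (U * V).primeFactors ⊆ P)
    (h : (2:ℤ) ^ m ∣ (U:ℤ) - V) :
    ∃ a b c : ℕ, 0 < a ∧ 0 < b ∧ 0 < c ∧ Nat.gcd a b = 1 ∧ a + b = c ∧ 2 ^ m ≤ c ∧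
      c ≤ 2 * max U V ∧ rad (a * b * c) * 2 ^ m ≤ 2 * P.prod id * c := by
  have h' : 2 ^ m ∣ U - V := by
    have : ((2 ^ m : ℕ) : ℤ) ∣ ((U - V : ℕ) : ℤ) := by
      rw [Nat.cast_sub hlt.le]; push_cast; exact h
    exact_mod_cast this
  obtain ⟨k, hk⟩ := h'
  have hk0 : 0 < k := by
    rcases Nat.eq_zero_or_pos k with h0 | h0
    · rw [h0] at hk; omega
    · exact h0
  refine ⟨U - V, V, U, by omega, hV, by omega, ?_, by omega, ?_, ?_, ?_⟩
  · rw [Nat.gcd_comm]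
    have := (Nat.coprime_sub_self_right hlt.le).mpr hcop.symm
    exact this
  · calc 2 ^ m ≤ 2 ^ m * k := Nat.le_mul_of_pos_right _ hk0
      _ ≤ U := by omega
  · have := le_max_left U V; omega
  · have hr := rad_bound_s1 U V m k P hP (by omega) hV hk0 hUV
    have : (U - V) * V * U = U * V * (2 ^ m * k) := by rw [hk]; ring
    rw [this]
    calc _ ≤ 2 * P.prod id * k * 2 ^ m := Nat.mul_le_mul_right _ hr
      _ = 2 * P.prod id * (2 ^ m * k) := by ring
      _ ≤ _ := Nat.mul_le_mul_left _ (by omega)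

lemma abc_of_UV (U V m : ℕ) (P : Finset ℕ) (hP : ∀ p ∈ P, p.Prime) (hU : 0 < U) (hV : 0 < V)
    (hne : U ≠ V)
    (hcop : Nat.Coprime U V) (hUV : (U * V).primeFactors ⊆ P)
    (h : (2:ℤ) ^ m ∣ (U:ℤ) - V ∨ (2:ℤ) ^ m ∣ (U:ℤ) + V) :
    ∃ a b c : ℕ, 0 < a ∧ 0 < b ∧ 0 < c ∧ Nat.gcd a b = 1 ∧ a + b = c ∧ 2 ^ m ≤ c ∧
      c ≤ 2 * max U V ∧ rad (a * b * c) * 2 ^ m ≤ 2 * P.prod id * c := by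
  rcases h with h | h
  · rcases lt_or_gt_of_ne hne with hlt | hlt
    · have := abc_of_UV_aux V U m P hP hU hlt hcop.symm (by rwa [mul_comm])
        (by obtain ⟨q, hq⟩ := h; exact ⟨-q, by linarith⟩)
      rwa [max_comm]
    · exact abc_of_UV_aux U V m P hP hV hlt hcop hUV h
  · have h' : 2 ^ m ∣ U + V := by
      have : ((2 ^ m : ℕ) : ℤ) ∣ ((U + V : ℕ) : ℤ) := by push_cast; exact h
      exact_mod_cast this
    obtain ⟨k, hk⟩ := h'
    have hk0 : 0 < k := by
      rcases Nat.eq_zero_or_pos k with h0 | h0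
      · rw [h0] at hk; omega
      · exact h0
    refine ⟨U, V, U + V, hU, hV, by omega, hcop, rfl, ?_, ?_, ?_⟩
    · rw [hk]; exact Nat.le_mul_of_pos_right _ hk0
    · have := le_max_left U V; have := le_max_right U V; omega
    · have hr := rad_bound_s1 U V m k P hP hU hV hk0 hUV
      rw [hk]
      calc _ ≤ 2 * P.prod id * k * 2 ^ m := Nat.mul_le_mul_right _ hr
        _ = 2 * P.prod id * (2 ^ m * k) := by ring

lemma lattice_abc (δ C : ℝ)
    (hlat : ∀ n : ℕ, 1 ≤ n → ∀ b : Fin n → Fin n → ℝ, (Matrix.of b).det ≠ 0 →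
      ∃ x ∈ Submodule.span ℤ (Set.range b), x ≠ 0 ∧
        ∑ i, |x i| ≤ ((n : ℝ) / δ + C * Real.log n) * |(Matrix.of b).det| ^ ((1 : ℝ) / n))
    (k n : ℕ) (p : Fin (n + 1) → ℕ) (hp : ∀ i, (p i).Prime) (hp2 : ∀ i, p i ≠ 2)
    (hinj : Function.Injective p) (h5 : p 0 = 5) (t B : ℝ) (ht : 0 < t)
    (hB : B = (((n + 2 : ℕ) : ℝ) / δ + C * Real.log (n + 2 : ℕ)) *
      (t * (2 ^ k * ∏ i, Real.log (p i))) ^ ((1 : ℝ) / (n + 2 : ℕ)))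
    (hBt : B < t) :
    ∃ a b c : ℕ, 0 < a ∧ 0 < b ∧ 0 < c ∧ Nat.gcd a b = 1 ∧ a + b = c ∧ 2 ^ (k + 2) ≤ c ∧
      Real.log c ≤ B / 2 + Real.log 2 ∧ rad (a * b * c) * 2 ^ (k + 2) ≤ 2 * (∏ i, p i) * c := by
  have hodd : ∀ i, Odd (p i) := fun i => (hp i).odd_of_ne_two (hp2 i)
  have hlogpos : ∀ i, 0 < Real.log (p i) := fun i =>
    Real.log_pos (by exact_mod_cast (hp i).one_lt)
  -- exponents
  have hex : ∀ i, ∃ a : ℕ, ((2:ℤ) ^ (k + 2) ∣ p i - 5 ^ a ∨ (2:ℤ) ^ (k + 2) ∣ p i + 5 ^ a) ∧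
      (i = 0 → a = 1) := by
    intro i
    by_cases hi : i = 0
    · refine ⟨1, ?_, fun _ => rfl⟩
      left; rw [hi, h5]; simp
    · obtain ⟨a, ha⟩ := odd_gen k (p i) (hodd i)
      exact ⟨a, ha, fun h => absurd h hi⟩
  choose a ha ha0 using hex
  have ha0 : a 0 = 1 := ha0 0 rfl
  let E : Fin (n + 1) → Fin (n + 1) → ℤ := fun i j =>
    if i = 0 then (if j = 0 then 2 ^ k else 0)
    else (if j = i then 1 else 0) - (if j = 0 then (a i : ℤ) else 0)
  have hE : ∀ i, ∑ j, (a j : ℤ) * E i j = if i = 0 then 2 ^ k else 0 := by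
    intro i
    by_cases hi : i = 0
    · simp [E, hi, ha0]
    · simp [E, hi, mul_sub, Finset.sum_sub_distrib, ha0]
  let b : Fin (n + 2) → Fin (n + 2) → ℝ :=
    Fin.cons (Fin.cons t 0) (fun i => Fin.cons (∑ j, (E i j : ℝ) * Real.log (p j))
      (fun j => (E i j : ℝ) * Real.log (p j)))
  have hb00 : b 0 0 = t := rfl
  have hb0s : ∀ j : Fin (n + 1), b 0 j.succ = 0 := fun j => rfl
  have hbs0 : ∀ i : Fin (n + 1), b i.succ 0 = ∑ j, (E i j : ℝ) * Real.log (p j) := fun i => rfl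
  have hbss : ∀ i j : Fin (n + 1), b i.succ j.succ = (E i j : ℝ) * Real.log (p j) := fun i j => rfl
  have hdet : (Matrix.of b).det = t * (2 ^ k * ∏ i, Real.log (p i)) := by
    rw [Matrix.det_of_lowerTriangular]
    · rw [Fin.prod_univ_succ]
      simp only [Matrix.of_apply, hb00, hbss]
      congr 1
      rw [Finset.prod_mul_distrib]
      congr 1
      rw [Fin.prod_univ_succ]
      have : ∀ i : Fin n, (E i.succ i.succ : ℝ) = 1 := by
        intro i; simp [E]
      simp only [this, Finset.prod_const_one, mul_one]
      simp [E]
    · intro i j hij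
      have hij : i < j := hij
      simp only [Matrix.of_apply]
      obtain ⟨j', rfl⟩ := Fin.exists_succ_eq.mpr (show j ≠ 0 from fun h => by simp [h] at hij)
      rcases Fin.eq_zero_or_eq_succ i with rfl | ⟨i', rfl⟩
      · exact hb0s j'
      · rw [hbss]
        have hlt : i' < j' := by simpa using hij
        have h1 : j' ≠ 0 := fun h => by simp [h] at hlt
        have h2 : j' ≠ i' := hlt.ne'
        simp [E, h1, h2]
  have hprodpos : 0 < ∏ i, Real.log (p i) := Finset.prod_pos fun i _ => hlogpos i
  have hdpos : 0 < (Matrix.of b).det := by rw [hdet]; positivity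
  obtain ⟨x, hx, hx0, hxB⟩ := hlat (n + 2) (by omega) b hdpos.ne'
  rw [abs_of_pos hdpos, hdet, ← hB] at hxB
  obtain ⟨c, hc⟩ := (Submodule.mem_span_range_iff_exists_fun ℤ).mp hx
  let d : Fin (n + 1) → ℤ := fun i => c i.succ
  let e : Fin (n + 1) → ℤ := fun j => ∑ i, d i * E i j
  have hxs : ∀ j : Fin (n + 1), x j.succ = e j * Real.log (p j) := by
    intro j
    rw [← hc, Finset.sum_apply, Fin.sum_univ_succ]
    simp only [Pi.smul_apply, hb0s, hbss, smul_zero, zero_add, zsmul_eq_mul]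
    simp only [e, d]
    push_cast
    rw [Finset.sum_mul]
    exact Finset.sum_congr rfl fun i _ => by ring
  have hx00 : x 0 = c 0 * t + ∑ j, (e j : ℝ) * Real.log (p j) := by
    rw [← hc, Finset.sum_apply, Fin.sum_univ_succ]
    simp only [Pi.smul_apply, hb00, hbs0, zsmul_eq_mul]
    congr 1
    simp only [e, d]
    push_cast
    simp_rw [Finset.sum_mul, Finset.mul_sum]
    rw [Finset.sum_comm]
    exact Finset.sum_congr rfl fun j _ => Finset.sum_congr rfl fun i _ => by ring
  have hsumae : ∑ j, (a j : ℤ) * e j = 2 ^ k * d 0 := by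
    simp only [e, Finset.mul_sum]
    rw [Finset.sum_comm]
    have : ∀ i, ∑ j, (a j : ℤ) * (d i * E i j) = d i * (if i = 0 then 2 ^ k else 0) := by
      intro i
      rw [← hE i, Finset.mul_sum]
      exact Finset.sum_congr rfl fun j _ => by ring
    simp_rw [this]
    simp [mul_comm]
  rw [Fin.sum_univ_succ] at hxB
  simp_rw [hxs, abs_mul, abs_of_pos (hlogpos _)] at hxB
  have habs : |∑ j, (e j : ℝ) * Real.log (p j)| ≤ ∑ j, |(e j : ℝ)| * Real.log (p j) := by
    refine (Finset.abs_sum_le_sum_abs _ _).trans (le_of_eq ?_)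
    exact Finset.sum_congr rfl fun j _ => by rw [abs_mul, abs_of_pos (hlogpos _)]
  have hc0 : c 0 = 0 := by
    by_contra hne
    have h1 : (1:ℝ) ≤ |(c 0 : ℝ)| := by exact_mod_cast Int.one_le_abs hne
    have h2 : t ≤ |(c 0 : ℝ) * t| := by
      rw [abs_mul, abs_of_pos ht]; nlinarith
    have h3 : |(c 0 : ℝ) * t| ≤ |x 0| + |∑ j, (e j : ℝ) * Real.log (p j)| := by
      have : (c 0 : ℝ) * t = x 0 - ∑ j, (e j : ℝ) * Real.log (p j) := by rw [hx00]; ring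
      rw [this]; exact abs_sub _ _
    linarith
  have hx00' : x 0 = ∑ j, (e j : ℝ) * Real.log (p j) := by rw [hx00, hc0]; simp
  have hene : ∃ i, e i ≠ 0 := by
    by_contra hall
    push Not at hall
    apply hx0
    funext j
    rcases Fin.eq_zero_or_eq_succ j with rfl | ⟨j', rfl⟩
    · rw [hx00']; simp [hall]
    · rw [hxs]; simp [hall]
  set U : ℕ := ∏ i, (p i) ^ (e i).toNat with hU
  set V : ℕ := ∏ i, (p i) ^ (-e i).toNat with hV
  have hU0 : 0 < U := Finset.prod_pos fun i _ => pow_pos (hp i).pos _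
  have hV0 : 0 < V := Finset.prod_pos fun i _ => pow_pos (hp i).pos _
  have hlogU : Real.log U = ∑ i, ((e i).toNat : ℝ) * Real.log (p i) := by
    rw [hU]; push_cast
    rw [Real.log_prod (fun i _ => by have := (hp i).pos; positivity)]
    simp [Real.log_pow]
  have hlogV : Real.log V = ∑ i, ((-e i).toNat : ℝ) * Real.log (p i) := by
    rw [hV]; push_cast
    rw [Real.log_prod (fun i _ => by have := (hp i).pos; positivity)]
    simp [Real.log_pow]
  have hdiff : Real.log U - Real.log V = ∑ j, (e j : ℝ) * Real.log (p j) := by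
    rw [hlogU, hlogV, ← Finset.sum_sub_distrib]
    refine Finset.sum_congr rfl fun i _ => ?_
    rw [← sub_mul]
    congr 1
    have : (((e i).toNat : ℤ) - ((-e i).toNat : ℤ)) = e i := by omega
    exact_mod_cast this
  have hsum : Real.log U + Real.log V = ∑ j, |(e j : ℝ)| * Real.log (p j) := by
    rw [hlogU, hlogV, ← Finset.sum_add_distrib]
    refine Finset.sum_congr rfl fun i _ => ?_
    rw [← add_mul]
    congr 1
    have : (((e i).toNat : ℤ) + ((-e i).toNat : ℤ)) = |e i| := by
      rcases abs_cases (e i) with h | h <;> omega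
    exact_mod_cast this
  rw [hx00', ← hdiff, ← hsum] at hxB
  have hcop : Nat.Coprime U V := by
    refine Nat.Coprime.prod_left fun i _ => Nat.Coprime.prod_right fun j _ => ?_
    by_cases hij : i = j
    · subst hij
      rcases le_total (e i) 0 with h | h
      · rw [Int.toNat_of_nonpos h]; simp
      · rw [Int.toNat_of_nonpos (show -e i ≤ 0 by omega)]; simp
    · exact Nat.Coprime.pow _ _ ((Nat.coprime_primes (hp i) (hp j)).mpr fun h => hij (hinj h))
  have hne : U ≠ V := by
    intro h
    obtain ⟨i, hi⟩ := hene
    have h1 : U = 1 := by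
      have := hcop; rw [← h] at this; simpa using this
    have h2 : V = 1 := by rw [← h, h1]
    rcases lt_or_gt_of_ne hi with h' | h'
    · have : p i ∣ V := (dvd_pow_self _ (by omega)).trans
        (Finset.dvd_prod_of_mem (fun i => (p i) ^ (-e i).toNat) (Finset.mem_univ i))
      rw [h2] at this; exact (hp i).one_lt.ne' (Nat.dvd_one.mp this)
    · have : p i ∣ U := (dvd_pow_self _ (by omega)).trans
        (Finset.dvd_prod_of_mem (fun i => (p i) ^ (e i).toNat) (Finset.mem_univ i))
      rw [h1] at this; exact (hp i).one_lt.ne' (Nat.dvd_one.mp this)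
  have hsub : (U * V).primeFactors ⊆ Finset.univ.image p := by
    intro q hq
    have hqp := Nat.prime_of_mem_primeFactors hq
    have hd := Nat.dvd_of_mem_primeFactors hq
    rw [Finset.mem_image]
    rcases (Nat.Prime.dvd_mul hqp).mp hd with h | h
    · obtain ⟨i, _, hi⟩ := (hqp.prime.dvd_finset_prod_iff _).mp h
      exact ⟨i, Finset.mem_univ _, ((Nat.prime_dvd_prime_iff_eq hqp (hp i)).mp
        (hqp.dvd_of_dvd_pow hi)).symm⟩
    · obtain ⟨i, _, hi⟩ := (hqp.prime.dvd_finset_prod_iff _).mp h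
      exact ⟨i, Finset.mem_univ _, ((Nat.prime_dvd_prime_iff_eq hqp (hp i)).mp
        (hqp.dvd_of_dvd_pow hi)).symm⟩
  have hcong := congr_of_exponents k n p hodd h5 a ha (d 0) e hsumae
  have hUc : (U : ℤ) = ∏ i, (p i:ℤ) ^ (e i).toNat := by rw [hU]; push_cast; rfl
  have hVc : (V : ℤ) = ∏ i, (p i:ℤ) ^ (-e i).toNat := by rw [hV]; push_cast; rfl
  rw [← hUc, ← hVc] at hcong
  obtain ⟨a', b', c', h1, h2, h3, h4, h6, h7, h8, h9⟩ := abc_of_UV U V (k + 2) (Finset.univ.image p)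
    (by intro q hq; obtain ⟨i, _, rfl⟩ := Finset.mem_image.mp hq; exact hp i) hU0 hV0 hne hcop hsub hcong
  refine ⟨a', b', c', h1, h2, h3, h4, h6, h7, ?_, ?_⟩
  · have hUpos : (0:ℝ) < U := by exact_mod_cast hU0
    have hVpos : (0:ℝ) < V := by exact_mod_cast hV0
    have h10 : (c' : ℝ) ≤ 2 * max (U:ℝ) (V:ℝ) := by exact_mod_cast h8
    have h11 : Real.log c' ≤ Real.log (2 * max (U:ℝ) (V:ℝ)) :=
      Real.log_le_log (by exact_mod_cast h3) h10
    rw [Real.log_mul (by norm_num) (lt_max_of_lt_left hUpos).ne'] at h11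
    have h12 : Real.log (max (U:ℝ) (V:ℝ)) ≤ B / 2 := by
      rcases max_choice (U:ℝ) (V:ℝ) with h | h
      · rw [h]; have := le_abs_self (Real.log U - Real.log V); linarith
      · rw [h]; have := neg_abs_le (Real.log U - Real.log V); linarith
    linarith
  · rw [Finset.prod_image (fun i _ j _ h => hinj h)] at h9
    simpa using h9


/-- odd primes up to `x` -/
noncomputable def oddPrimes (x : ℝ) : Finset ℕ :=
  (Finset.range (⌊x⌋₊ + 1)).filter (fun p => p.Prime ∧ p ≠ 2)

lemma mem_oddPrimes {x : ℝ} (hx : 0 ≤ x) {p : ℕ} :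
    p ∈ oddPrimes x ↔ (p.Prime ∧ p ≠ 2) ∧ (p : ℝ) ≤ x := by
  unfold oddPrimes
  rw [Finset.mem_filter, Finset.mem_range, Nat.lt_succ_iff, Nat.le_floor_iff hx]
  tauto

lemma log_factorial_ge (N : ℕ) (hN : 1 ≤ N) : N * Real.log N - N ≤ Real.log (N.factorial) := by
  have h := Real.pow_div_factorial_le_exp (N:ℝ) (by positivity) N
  have hN0 : (0:ℝ) < N := by exact_mod_cast hN
  have hf : (0:ℝ) < N.factorial := by exact_mod_cast N.factorial_pos
  have h2 := Real.log_le_log (by positivity) h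
  rw [Real.log_exp, Real.log_div (by positivity) hf.ne', Real.log_pow] at h2
  linarith

lemma log_factorial_le (N : ℕ) (hN : 1 ≤ N) : Real.log (N.factorial) ≤
    N * ∑ p ∈ (Finset.range (N + 1)).filter Nat.Prime, Real.log p / (p - 1) := by
  have h0 : Real.log (N.factorial) = ∑ p ∈ (N.factorial).primeFactors,
      ((N.factorial).factorization p : ℝ) * Real.log p := by
    conv_lhs => rw [← Nat.prod_factorization_pow_eq_self (N.factorial_ne_zero)]
    rw [Finsupp.prod]
    push_cast
    rw [Real.log_prod]
    · simp [Real.log_pow]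
    · intro p hp
      have := (Nat.prime_of_mem_primeFactors hp).pos
      positivity
  have h1 : (N.factorial).primeFactors = (Finset.range (N + 1)).filter Nat.Prime := by
    ext p
    simp only [Nat.mem_primeFactors, Finset.mem_filter, Finset.mem_range]
    constructor
    · rintro ⟨hp, hd, _⟩
      exact ⟨Nat.lt_succ_of_le ((hp.dvd_factorial).mp hd), hp⟩
    · rintro ⟨h, hp⟩
      exact ⟨hp, (hp.dvd_factorial).mpr (by omega), N.factorial_ne_zero⟩
  rw [h0, h1, Finset.mul_sum]
  refine Finset.sum_le_sum fun p hp => ?_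
  have hp := (Finset.mem_filter.mp hp).2
  have : Fact p.Prime := ⟨hp⟩
  have h2 := sub_one_mul_padicValNat_factorial_lt_of_ne_zero p (show N ≠ 0 by omega)
  rw [Nat.factorization_def _ hp]
  have h3 : ((p:ℝ) - 1) * (padicValNat p N.factorial : ℝ) ≤ N := by
    have : (((p - 1) * padicValNat p N.factorial : ℕ) : ℝ) ≤ N := by exact_mod_cast h2.le
    rw [Nat.cast_mul, Nat.cast_sub hp.one_le] at this
    simpa using this
  have hp1 : (0:ℝ) < (p:ℝ) - 1 := by
    have : (1:ℝ) < p := by exact_mod_cast hp.one_lt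
    linarith
  have hlog : 0 ≤ Real.log p := Real.log_natCast_nonneg p
  rw [← mul_div_assoc, le_div_iff₀ hp1]
  nlinarith

lemma sum_log_bound : ∃ K : ℝ, ∀ s : Finset ℕ, (∀ p ∈ s, p.Prime) →
    ∑ p ∈ s, Real.log p / (p * (p - 1)) ≤ K := by
  have hs : Summable (fun n : ℕ => 4 * (1 / (n:ℝ) ^ ((3:ℝ)/2))) :=
    (Real.summable_one_div_nat_rpow.mpr (by norm_num)).mul_left 4
  refine ⟨∑' n : ℕ, 4 * (1 / (n:ℝ) ^ ((3:ℝ)/2)), fun s hsp => ?_⟩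
  refine le_trans (Finset.sum_le_sum fun p hp => ?_) (hs.sum_le_tsum s (fun i _ => by positivity))
  have h2 : (2:ℝ) ≤ p := by exact_mod_cast (hsp p hp).two_le
  have hl := Real.log_le_rpow_div (show (0:ℝ) ≤ p by linarith) (show (0:ℝ) < 1/2 by norm_num)
  have he : (p:ℝ) ^ ((1:ℝ)/2) * (p:ℝ) ^ ((3:ℝ)/2) = (p:ℝ)^2 := by
    rw [← Real.rpow_add (by linarith), ← Real.rpow_natCast]; norm_num
  have hpos : 0 < (p:ℝ) ^ ((3:ℝ)/2) := Real.rpow_pos_of_pos (by linarith) _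
  rw [div_le_iff₀ (by nlinarith), mul_one_div, div_mul_eq_mul_div, le_div_iff₀ hpos]
  calc Real.log p * (p:ℝ) ^ ((3:ℝ)/2) ≤ ((p:ℝ) ^ ((1:ℝ)/2) / (1/2)) * (p:ℝ) ^ ((3:ℝ)/2) := by gcongr
    _ = 2 * (p:ℝ)^2 := by rw [div_mul_eq_mul_div, he]; ring
    _ ≤ _ := by nlinarith

lemma mertens_lower_s1 : ∃ K : ℝ, ∀ x : ℝ, 1 ≤ x →
    Real.log x - K ≤ ∑ p ∈ oddPrimes x, Real.log p / p := by
  obtain ⟨K, hK⟩ := sum_log_bound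
  refine ⟨K + 1 + Real.log 2 + Real.log 2 / 2, fun x hx => ?_⟩
  set N := ⌊x⌋₊ with hN
  have hN1 : 1 ≤ N := Nat.le_floor (by simpa using hx)
  have hN0 : (1:ℝ) ≤ N := by exact_mod_cast hN1
  have h1 := (log_factorial_ge N hN1).trans (log_factorial_le N hN1)
  have h2 : Real.log N - 1 ≤ ∑ p ∈ (Finset.range (N + 1)).filter Nat.Prime, Real.log p / (p - 1) := by
    have : (N:ℝ) * (Real.log N - 1) ≤
        N * ∑ p ∈ (Finset.range (N + 1)).filter Nat.Prime, Real.log p / (p - 1) := by linarith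
    exact le_of_mul_le_mul_left this (by linarith)
  have h3 : ∑ p ∈ (Finset.range (N + 1)).filter Nat.Prime, Real.log p / ((p:ℝ) - 1) =
      ∑ p ∈ (Finset.range (N + 1)).filter Nat.Prime, Real.log p / p +
      ∑ p ∈ (Finset.range (N + 1)).filter Nat.Prime, Real.log p / (p * (p - 1)) := by
    rw [← Finset.sum_add_distrib]
    refine Finset.sum_congr rfl fun p hp => ?_
    have h2 : (2:ℝ) ≤ p := by exact_mod_cast (Finset.mem_filter.mp hp).2.two_le
    have : (p:ℝ) - 1 ≠ 0 := by linarith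
    field_simp
    ring
  have h4 := hK ((Finset.range (N + 1)).filter Nat.Prime) (fun p hp => (Finset.mem_filter.mp hp).2)
  have h5 : ∑ p ∈ (Finset.range (N + 1)).filter Nat.Prime, Real.log p / p ≤
      ∑ p ∈ oddPrimes x, Real.log p / p + Real.log 2 / 2 := by
    have hsub : (Finset.range (N + 1)).filter Nat.Prime ⊆ insert 2 (oddPrimes x) := by
      intro p hp
      obtain ⟨ha, hb⟩ := Finset.mem_filter.mp hp
      by_cases h : p = 2
      · simp [h]
      · exact Finset.mem_insert_of_mem (Finset.mem_filter.mpr ⟨ha, hb, h⟩)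
    refine (Finset.sum_le_sum_of_subset_of_nonneg hsub (fun p _ _ => ?_)).trans ?_
    · exact div_nonneg (Real.log_natCast_nonneg p) (Nat.cast_nonneg p)
    · rw [Finset.sum_insert (by simp [oddPrimes])]
      push_cast; linarith
  have h6 : Real.log x ≤ Real.log N + Real.log 2 := by
    rw [← Real.log_mul (by positivity) (by norm_num)]
    refine Real.log_le_log (by linarith) ?_
    have := Nat.lt_floor_add_one x
    rw [← hN] at this
    linarith
  linarith

lemma card_oddPrimes_le (x : ℝ) : (oddPrimes x).card ≤ Nat.primeCounting ⌊x⌋₊ := by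
  rw [Nat.primeCounting, Nat.primeCounting', Nat.count_eq_card_filter_range]
  refine Finset.card_le_card fun p hp => ?_
  obtain ⟨h1, h2, _⟩ := Finset.mem_filter.mp hp
  exact Finset.mem_filter.mpr ⟨h1, h2⟩

lemma primeCounting_le_card (x : ℝ) : Nat.primeCounting ⌊x⌋₊ ≤ (oddPrimes x).card + 1 := by
  rw [Nat.primeCounting, Nat.primeCounting', Nat.count_eq_card_filter_range]
  refine (Finset.card_le_card (t := insert 2 (oddPrimes x)) fun p hp => ?_).trans
    (Finset.card_insert_le _ _)
  obtain ⟨h1, h2⟩ := Finset.mem_filter.mp hp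
  by_cases h : p = 2
  · simp [h]
  · exact Finset.mem_insert_of_mem (Finset.mem_filter.mpr ⟨h1, h2, h⟩)

/-- the weight integral of one prime -/
lemma integral_weight (l T : ℝ) : ∫ t in l..T, (t - l) * ((t - 2) * Real.exp (-t)) =
    l * Real.exp (-l) - (T + (T - l) * (T - 1)) * Real.exp (-T) := by
  have hd : ∀ t ∈ Set.uIcc l T, HasDerivAt
      (fun t => ((t - l) * (1 - t) - t) * Real.exp (-t)) ((t - l) * ((t - 2) * Real.exp (-t))) t := by
    intro t _
    have h1 : HasDerivAt (fun t : ℝ => (t - l) * (1 - t) - t)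
        ((1 * (1 - t) + (t - l) * (-1)) - 1) t := by
      have ha : HasDerivAt (fun t : ℝ => t - l) 1 t := (hasDerivAt_id t).sub_const l
      have hb : HasDerivAt (fun t : ℝ => 1 - t) (-1) t := (hasDerivAt_id t).const_sub 1
      exact (ha.mul hb).sub (hasDerivAt_id t)
    have h2 : HasDerivAt (fun t : ℝ => Real.exp (-t)) (Real.exp (-t) * (-1)) t :=
      (hasDerivAt_neg t).exp
    refine (h1.mul h2).congr_deriv ?_
    ring
  rw [intervalIntegral.integral_eq_sub_of_hasDerivAt hd
    (Continuous.intervalIntegrable (by fun_prop) _ _)]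
  ring

lemma integral_weight_ge (l t0 T : ℝ) (ht0 : 2 ≤ t0) (hl0 : 0 ≤ l) (hl : l ≤ T) (hT : t0 ≤ T) :
    l * Real.exp (-l) - (T + (T - l) * (T - 1)) * Real.exp (-T)
      - (if l < t0 then l * Real.exp (-l) else 0) ≤
    ∫ t in t0..T, max (t - l) 0 * ((t - 2) * Real.exp (-t)) := by
  split_ifs with h
  · have h1 : 0 ≤ ∫ t in t0..T, max (t - l) 0 * ((t - 2) * Real.exp (-t)) := by
      refine intervalIntegral.integral_nonneg hT fun t ht => ?_
      have : 0 ≤ t - 2 := by linarith [ht.1]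
      positivity
    have h2 : 0 ≤ (T + (T - l) * (T - 1)) * Real.exp (-T) := by
      have : 0 ≤ (T - l) * (T - 1) := mul_nonneg (by linarith) (by linarith)
      have : 0 ≤ T + (T - l) * (T - 1) := by linarith
      positivity
    linarith
  · push Not at h
    have hii : ∀ a b : ℝ, IntervalIntegrable (fun t => max (t - l) 0 * ((t - 2) * Real.exp (-t)))
        MeasureTheory.volume a b := fun a b => Continuous.intervalIntegrable (by fun_prop) _ _
    rw [← intervalIntegral.integral_add_adjacent_intervals (hii t0 l) (hii l T)]
    have h1 : 0 ≤ ∫ t in t0..l, max (t - l) 0 * ((t - 2) * Real.exp (-t)) := by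
      refine intervalIntegral.integral_nonneg h fun t ht => ?_
      have : 0 ≤ t - 2 := by linarith [ht.1]
      positivity
    have h2 : ∫ t in l..T, max (t - l) 0 * ((t - 2) * Real.exp (-t)) =
        ∫ t in l..T, (t - l) * ((t - 2) * Real.exp (-t)) := by
      refine intervalIntegral.integral_congr fun t ht => ?_
      rw [Set.uIcc_of_le hl] at ht
      rw [max_eq_left (by linarith [ht.1])]
    rw [h2, integral_weight]
    linarith

/-- the averaged prime count -/
noncomputable def J (x : ℝ) : ℝ := ∑ p ∈ oddPrimes x, (Real.log x - Real.log p)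

lemma sum_max_eq_J (t T : ℝ) (h : t ≤ T) :
    ∑ p ∈ oddPrimes (Real.exp T), max (t - Real.log p) 0 = J (Real.exp t) := by
  unfold J
  have hsub : oddPrimes (Real.exp t) ⊆ oddPrimes (Real.exp T) := by
    intro p hp
    rw [mem_oddPrimes (Real.exp_pos _).le] at hp ⊢
    exact ⟨hp.1, hp.2.trans (Real.exp_le_exp.mpr h)⟩
  rw [← Finset.sum_subset hsub]
  · refine Finset.sum_congr rfl fun p hp => ?_
    rw [mem_oddPrimes (Real.exp_pos _).le] at hp
    have hp0 : (0:ℝ) < p := by exact_mod_cast hp.1.1.pos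
    have := (Real.log_le_iff_le_exp hp0).mpr hp.2
    rw [Real.log_exp, max_eq_left (by linarith)]
  · intro p hp hn
    rw [mem_oddPrimes (Real.exp_pos _).le] at hp hn
    have hp0 : (0:ℝ) < p := by exact_mod_cast hp.1.1.pos
    have h1 : Real.exp t < p := by
      by_contra hc
      exact hn ⟨hp.1, not_lt.mp hc⟩
    have := (Real.lt_log_iff_exp_lt hp0).mpr h1
    exact max_eq_right (by linarith)

lemma exists_J_ge (η : ℝ) (hη : 0 < η) (hη2 : η ≤ 2) (x0 : ℝ) : ∃ x, x0 ≤ x ∧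
    x / Real.log x + (2 - η) * x / (Real.log x) ^ 2 ≤ J x := by
  by_contra hcon
  push Not at hcon
  obtain ⟨K, hK⟩ := mertens_lower_s1
  obtain ⟨t0, ht02, ht0x⟩ : ∃ t0 : ℝ, 2 ≤ t0 ∧ x0 ≤ Real.exp t0 := by
    refine ⟨max 2 x0, le_max_left _ _, ?_⟩
    have := Real.add_one_le_exp (max 2 x0)
    have := le_max_right 2 x0
    linarith
  have hJ : ∀ t, t0 ≤ t → J (Real.exp t) ≤ Real.exp t * (1 / t + (2 - η) / t ^ 2) := by
    intro t ht
    have := hcon (Real.exp t) (ht0x.trans (Real.exp_le_exp.mpr ht))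
    rw [Real.log_exp] at this
    refine this.le.trans (le_of_eq ?_)
    ring
  set K0 : ℝ := ∑ p ∈ oddPrimes (Real.exp t0), Real.log p / p with hK0
  have hmain : ∀ T, t0 ≤ T → (Nat.primeCounting ⌊Real.exp T⌋₊ : ℝ) ≤
      (Real.log 4 + 1) * Real.exp T / Real.log (Real.exp T) →
      T - K - K0 - (Real.log 4 + 1) - 2 ≤ T - t0 - η * (Real.log T - Real.log t0) := by
    intro T hT hpi
    have hT0 : 0 < T := by linarith
    have hE := Real.exp_pos T
    rw [Real.log_exp] at hpi
    have hup : ∫ t in t0..T, ∑ p ∈ oddPrimes (Real.exp T),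
        max (t - Real.log p) 0 * ((t - 2) * Real.exp (-t)) ≤
        T - t0 - η * (Real.log T - Real.log t0) := by
      have hwint : ∫ t in t0..T, (1 - η * t⁻¹) = T - t0 - η * (Real.log T - Real.log t0) := by
        have hinv : IntervalIntegrable (fun t : ℝ => t⁻¹) MeasureTheory.volume t0 T := by
          refine intervalIntegral.intervalIntegrable_inv (fun t ht => ?_) continuousOn_id
          rw [Set.uIcc_of_le hT] at ht
          linarith [ht.1]
        rw [intervalIntegral.integral_sub (by simp) (hinv.const_mul η),
          intervalIntegral.integral_const_mul, integral_inv_of_pos (by linarith) hT0,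
          Real.log_div hT0.ne' (by linarith)]
        simp
      rw [← hwint]
      refine intervalIntegral.integral_mono_on hT
        (Continuous.intervalIntegrable (by fun_prop) _ _) ?_ ?_
      · refine ContinuousOn.intervalIntegrable ?_
        rw [Set.uIcc_of_le hT]
        refine continuousOn_const.sub (continuousOn_const.mul (continuousOn_id.inv₀ ?_))
        intro t ht
        simp only [id]
        linarith [ht.1]
      · intro t ht
        rw [← Finset.sum_mul, sum_max_eq_J t T ht.2]
        have ht0 : 0 < t := by linarith [ht.1]
        have ht2 : 0 ≤ t - 2 := by linarith [ht.1]
        calc J (Real.exp t) * ((t - 2) * Real.exp (-t)) ≤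
            (Real.exp t * (1 / t + (2 - η) / t ^ 2)) * ((t - 2) * Real.exp (-t)) := by
              gcongr
              exact hJ t ht.1
          _ = (1 / t + (2 - η) / t ^ 2) * (t - 2) := by
              rw [Real.exp_neg]; field_simp
          _ ≤ 1 - η * t⁻¹ := by
              have : (1 / t + (2 - η) / t ^ 2) * (t - 2) =
                1 - η * t⁻¹ - 2 * (2 - η) / t ^ 2 := by field_simp; ring
              rw [this]
              have : 0 ≤ 2 * (2 - η) / t ^ 2 := div_nonneg (by linarith) (by positivity)
              linarith
    have hlow : ∑ p ∈ oddPrimes (Real.exp T), (Real.log p * Real.exp (-Real.log p) -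
        (T + (T - Real.log p) * (T - 1)) * Real.exp (-T)
        - (if Real.log p < t0 then Real.log p * Real.exp (-Real.log p) else 0)) ≤
        ∫ t in t0..T, ∑ p ∈ oddPrimes (Real.exp T),
          max (t - Real.log p) 0 * ((t - 2) * Real.exp (-t)) := by
      rw [intervalIntegral.integral_finsetSum
        (fun p _ => Continuous.intervalIntegrable (by fun_prop) _ _)]
      refine Finset.sum_le_sum fun p hp => ?_
      rw [mem_oddPrimes (Real.exp_pos _).le] at hp
      have hp0 : (0:ℝ) < p := by exact_mod_cast hp.1.1.pos
      have := (Real.log_le_iff_le_exp hp0).mpr hp.2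
      exact integral_weight_ge _ _ _ ht02 (Real.log_natCast_nonneg p) this hT
    have hrw : ∀ p ∈ oddPrimes (Real.exp T), Real.log p * Real.exp (-Real.log p) =
        Real.log p / p := by
      intro p hp
      rw [mem_oddPrimes (Real.exp_pos _).le] at hp
      have hp0 : (0:ℝ) < p := by exact_mod_cast hp.1.1.pos
      rw [Real.exp_neg, Real.exp_log hp0]; rfl
    rw [Finset.sum_sub_distrib, Finset.sum_sub_distrib, Finset.sum_congr rfl hrw] at hlow
    have hm := hK (Real.exp T) (Real.one_le_exp hT0.le)
    rw [Real.log_exp] at hm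
    have hsm : ∑ p ∈ oddPrimes (Real.exp T),
        (if Real.log p < t0 then Real.log p * Real.exp (-Real.log p) else 0) ≤ K0 := by
      rw [← Finset.sum_filter, hK0]
      rw [Finset.sum_congr rfl (fun p hp => hrw p (Finset.mem_filter.mp hp).1)]
      refine Finset.sum_le_sum_of_subset_of_nonneg ?_ ?_
      · intro p hp
        obtain ⟨h1, h2⟩ := Finset.mem_filter.mp hp
        rw [mem_oddPrimes (Real.exp_pos _).le] at h1 ⊢
        have hp0 : (0:ℝ) < p := by exact_mod_cast h1.1.1.pos
        exact ⟨h1.1, ((Real.log_lt_iff_lt_exp hp0).mp h2).le⟩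
      · intro p _ _
        exact div_nonneg (Real.log_natCast_nonneg p) (Nat.cast_nonneg p)
    have htail : ∑ p ∈ oddPrimes (Real.exp T), (T + (T - Real.log p) * (T - 1)) * Real.exp (-T) ≤
        (Real.log 4 + 1) + 2 := by
      rw [← Finset.sum_mul, Finset.sum_add_distrib, ← Finset.sum_mul]
      have hJT : ∑ p ∈ oddPrimes (Real.exp T), (T - Real.log p) = J (Real.exp T) := by
        unfold J; rw [Real.log_exp]
      rw [hJT, Finset.sum_const, nsmul_eq_mul, Real.exp_neg, ← div_eq_mul_inv,
        div_le_iff₀ hE]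
      have hn : ((oddPrimes (Real.exp T)).card : ℝ) * T ≤ (Real.log 4 + 1) * Real.exp T := by
        have : ((oddPrimes (Real.exp T)).card : ℝ) ≤ (Real.log 4 + 1) * Real.exp T / T :=
          le_trans (by exact_mod_cast card_oddPrimes_le (Real.exp T)) hpi
        rwa [le_div_iff₀ hT0] at this
      have hj : J (Real.exp T) * (T - 1) ≤ 2 * Real.exp T := by
        have hT1 : 0 ≤ T - 1 := by linarith
        calc J (Real.exp T) * (T - 1) ≤ (Real.exp T * (1 / T + (2 - η) / T ^ 2)) * (T - 1) := by
              gcongr; exact hJ T hT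
          _ ≤ (Real.exp T * (1 / T + 2 / T ^ 2)) * (T - 1) := by
              gcongr; linarith
          _ = Real.exp T * ((T + 2) * (T - 1) / T ^ 2) := by field_simp
          _ ≤ Real.exp T * 2 := by
              gcongr
              rw [div_le_iff₀ (by positivity)]
              nlinarith [sq_nonneg (T - 1)]
          _ = _ := by ring
      linarith
    linarith
  have hev := Chebyshev.eventually_primeCounting_le (ε := 1) one_pos
  have hev2 := Real.tendsto_exp_atTop.eventually hev
  have hev3 : ∀ᶠ T : ℝ in Filter.atTop,
      (K + K0 + (Real.log 4 + 1) + 2 - t0 + η * Real.log t0) / η < Real.log T :=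
    Real.tendsto_log_atTop.eventually_gt_atTop _
  obtain ⟨T, h1, h2, h3⟩ := (hev2.and (hev3.and (Filter.eventually_ge_atTop t0))).exists
  have := hmain T h3 h1
  rw [div_lt_iff₀ hη] at h2
  linarith


lemma core_ineq (L γ σ β ε w ν g : ℝ) (hL : 0 < L) (hσ : 0 < σ) (hσγ : 8 * σ ≤ γ) (hσ1 : 2 * σ ≤ 1)
    (hβ : 0 < β) (hν : ν = (1 + β) / w) (hw : 0 < w) (hw3 : w ≤ 3) (hε : 0 ≤ ε)
    (hg : g = w - 1 + Real.log ν - ε)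
    (hq : 3 - 3 * σ ≤ (L * (β / (1 + β)) - L * ε) / (1 + β / 2))
    (hε2 : ε ≤ (σ - Real.log (1 + σ)) / 2)
    (hL2 : 7 ≤ L * ((σ - Real.log (1 + σ)) / 2) / (1 + (σ - Real.log (1 + σ)) / 4)) :
    0 ≤ g ∧ 2 * L * Real.exp (- g / 2) ≤ 2 * L + γ - 1 - 2 * w := by
  set c := σ - Real.log (1 + σ) with hc
  have hc0 : 0 < c := by
    have := Real.log_lt_sub_one_of_pos (show 0 < 1 + σ by linarith) (by linarith)
    linarith
  have hlogν : Real.log ν = Real.log (1 + β) - Real.log w := by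
    rw [hν, Real.log_div (by linarith) hw.ne']
  have hlogβ : β / (1 + β) ≤ Real.log (1 + β) := by
    have := Real.one_sub_inv_le_log_of_pos (show 0 < 1 + β by linarith)
    have h2 : 1 - (1 + β)⁻¹ = β / (1 + β) := by field_simp; ring
    linarith
  have key : 0 ≤ g ∧ 2 * w + 1 - γ ≤ L * g / (1 + g / 2) := by
    by_cases hw1 : w ≤ 1 + σ
    · set g1 := β / (1 + β) - ε with hg1
      have hgg : g1 ≤ g := by
        have := Real.log_le_sub_one_of_pos hw
        rw [hg, hlogν, hg1]; linarith
      have hnum : L * (β / (1 + β)) - L * ε = L * g1 := by rw [hg1]; ring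
      rw [hnum] at hq
      have hpos : 0 < L * g1 := by
        by_contra hneg
        have : L * g1 / (1 + β / 2) ≤ 0 := div_nonpos_of_nonpos_of_nonneg (by linarith) (by linarith)
        linarith
      have hg1pos : 0 < g1 := by
        by_contra hneg
        nlinarith
      have hg1β : g1 ≤ β := by
        have : β / (1 + β) ≤ β := div_le_self hβ.le (by linarith)
        linarith
      refine ⟨by linarith, ?_⟩
      have h1 : L * g1 / (1 + β / 2) ≤ L * g1 / (1 + g1 / 2) := by
        apply div_le_div_of_nonneg_left hpos.le (by linarith) (by linarith)
      have h2 : L * g1 / (1 + g1 / 2) ≤ L * g / (1 + g / 2) := by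
        rw [div_le_div_iff₀ (by linarith) (by linarith)]
        nlinarith
      linarith
    · push Not at hw1
      have hgg : c / 2 ≤ g := by
        have h1 := Real.log_le_sub_one_of_pos (show 0 < w / (1 + σ) by positivity)
        rw [Real.log_div hw.ne' (by linarith)] at h1
        have h2 : w / (1 + σ) - 1 ≤ w - (1 + σ) := by
          rw [div_sub_one (by linarith)]
          exact div_le_self (by linarith) (by linarith)
        have h3 : 0 ≤ Real.log (1 + β) := Real.log_nonneg (by linarith)
        rw [hg, hlogν]; linarith
      refine ⟨by linarith, ?_⟩
      have h2 : L * (c / 2) / (1 + c / 4) ≤ L * g / (1 + g / 2) := by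
        rw [div_le_div_iff₀ (by linarith) (by linarith)]
        nlinarith
      linarith
  refine ⟨key.1, ?_⟩
  have hg0 := key.1
  have h1 : Real.exp (-g / 2) ≤ 1 / (1 + g / 2) := by
    have := Real.add_one_le_exp (g / 2)
    rw [show -g / 2 = -(g / 2) by ring, Real.exp_neg, ← one_div]
    exact one_div_le_one_div_of_le (by linarith) (by linarith)
  have h2 : 2 * L * (1 / (1 + g / 2)) = 2 * L - L * g / (1 + g / 2) := by
    field_simp; ring
  have h3 : 2 * L * Real.exp (-g / 2) ≤ 2 * L * (1 / (1 + g / 2)) := by gcongr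
  linarith [key.2]

lemma tendsto_log_pow_div (k : ℕ) : Tendsto (fun x : ℝ => Real.log x ^ k / x) atTop (𝓝 0) :=
  (Real.isLittleO_pow_log_id_atTop (n := k)).tendsto_div_nhds_zero

set_option maxHeartbeats 2000000 in
lemma analytic (δ C : ℝ) (hδ : 0 < δ) (hC : 0 ≤ C) (hδe : 2 * δ < Real.exp 1 ^ 4) :
    ∃ η : ℝ, 0 < η ∧ η ≤ 2 ∧ ∀ᶠ x : ℝ in atTop, ∀ n θD B : ℝ, x / (2 * Real.log x) ≤ n → n ≤ x →
      0 ≤ θD →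
      θD ≤ n * (Real.log x + Real.log (Real.log x)) - x / Real.log x * (1 + (3 - η) / Real.log x) →
      B ≤ ((n + 1) / δ + C * Real.log (n + 1)) * Real.exp (3 * Real.log x / n + 2 + θD / n) →
      B < x ^ 3 ∧ ∀ y, Real.exp 2 ≤ y → y ≤ B / 2 + Real.log 2 →
        4 * Real.sqrt (2 * (δ / Real.exp 1) * y) / Real.log y ≤ 2 * n := by
  set γ := 4 - Real.log (2 * δ) with hγ
  have hγ0 : 0 < γ := by
    have := Real.log_lt_log (by linarith) hδe
    rw [Real.log_pow, Real.log_exp] at this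
    push_cast at this; linarith
  set σ := min (γ / 8) (1 / 2) with hσ
  have hσ0 : 0 < σ := lt_min (by linarith) (by norm_num)
  have hσγ : 8 * σ ≤ γ := by have := min_le_left (γ / 8) (1 / 2 : ℝ); linarith
  have hσ1 : 2 * σ ≤ 1 := by have := min_le_right (γ / 8) (1 / 2 : ℝ); linarith
  refine ⟨2 * σ, by linarith, by linarith, ?_⟩
  set c := σ - Real.log (1 + σ) with hc
  have hc0 : 0 < c := by
    have := Real.log_lt_sub_one_of_pos (show 0 < 1 + σ by linarith) (by linarith)
    linarith
  let A : ℝ := 1 + 2 * δ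
  let D : ℝ := 2 * δ * C + 3
  let ε : ℝ → ℝ := fun x => (A + D * Real.log x) * (2 * Real.log x) / x
  have hLtop := Real.tendsto_log_atTop
  have hεlim : Tendsto ε atTop (𝓝 0) := by
    have h := ((tendsto_log_pow_div 1).const_mul (2 * A)).add ((tendsto_log_pow_div 2).const_mul (2 * D))
    simp only [mul_zero, add_zero] at h
    refine h.congr fun x => ?_
    simp only [ε]; ring
  have hLεlim : Tendsto (fun x => Real.log x * ε x) atTop (𝓝 0) := by
    have h := ((tendsto_log_pow_div 2).const_mul (2 * A)).add ((tendsto_log_pow_div 3).const_mul (2 * D))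
    simp only [mul_zero, add_zero] at h
    refine h.congr fun x => ?_
    simp only [ε]; ring
  have hβlim : Tendsto (fun x => (3 - 2 * σ) / Real.log x) atTop (𝓝 0) :=
    hLtop.const_div_atTop _
  have hqlim : Tendsto (fun x => ((3 - 2 * σ) / (1 + (3 - 2 * σ) / Real.log x) - Real.log x * ε x) /
      (1 + (3 - 2 * σ) / Real.log x / 2)) atTop (𝓝 (3 - 2 * σ)) := by
    have h1 : Tendsto (fun x => (3 - 2 * σ) / (1 + (3 - 2 * σ) / Real.log x)) atTop
        (𝓝 ((3 - 2 * σ) / (1 + 0))) :=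
      tendsto_const_nhds.div (tendsto_const_nhds.add hβlim) (by norm_num)
    have h2 := (h1.sub hLεlim).div (tendsto_const_nhds (x := (1:ℝ)).add (hβlim.div_const 2)) (by norm_num)
    simp only [add_zero, div_one, sub_zero, zero_div] at h2
    exact h2
  have e1 := hqlim.eventually_const_le (show 3 - 3 * σ < 3 - 2 * σ by linarith)
  have e2 := hεlim.eventually_le_const (show 0 < c / 2 by linarith)
  have e2' := hεlim.eventually_le_const (show (0:ℝ) < 1 by norm_num)
  have e3 := hLtop.eventually_ge_atTop (7 * (1 + c / 4) / (c / 2))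
  have e4 := hLtop.eventually_ge_atTop 6
  have e5 := (tendsto_log_pow_div 1).eventually_lt_const
    (show 0 < δ / Real.exp 3 by positivity)
  filter_upwards [e1, e2, e2', e3, e4, e5, eventually_ge_atTop 1] with x e1 e2 e2' e3 e4 e5 hx1
  intro n θD B hn1 hnx hθ0 hθ hB
  set L := Real.log x with hL
  have hx0 : 0 < x := by linarith
  have hL0 : 0 < L := by linarith
  set β := (3 - 2 * σ) / L with hβ
  have hβ0 : 0 < β := div_pos (by linarith) hL0
  have hβ2 : β ≤ 1 / 2 := by rw [hβ, div_le_iff₀ hL0]; linarith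
  have hn0 : 0 < n := lt_of_lt_of_le (by positivity) hn1
  have hxL : x ≤ 2 * L * n := by rwa [div_le_iff₀ (by positivity), mul_comm] at hn1
  set w := x / L * (1 + β) / n with hw
  have hw0 : 0 < w := by positivity
  have hw3 : w ≤ 3 := by
    have : x / L ≤ 2 * n := by rw [div_le_iff₀ hL0]; linarith
    rw [hw, div_le_iff₀ hn0]
    calc x / L * (1 + β) ≤ (2 * n) * (1 + 1 / 2) := by gcongr
      _ = 3 * n := by ring
  have hε0 : 0 ≤ ε x := by
    simp only [ε, A, D]; positivity
  set ν := n * L / x with hνd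
  have hν0 : 0 < ν := by positivity
  have hν : ν = (1 + β) / w := by
    rw [hνd, hw]; field_simp
  obtain ⟨hg0, hcore⟩ := core_ineq L γ σ β (ε x) w ν _ hL0 hσ0 hσγ hσ1 hβ0 hν hw0 hw3 hε0 rfl
    (by
      have : L * (β / (1 + β)) = (3 - 2 * σ) / (1 + β) := by
        rw [← mul_div_assoc, hβ, mul_div_cancel₀ _ hL0.ne']
      rw [this]; exact e1) e2
    (by
      rw [div_le_iff₀ (by linarith)] at e3
      rw [le_div_iff₀ (by linarith)]; exact e3)
  set g := w - 1 + Real.log ν - ε x with hg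
  -- the upper bound
  set Y := n / (2 * δ) * Real.exp (2 + L + Real.log L - w + ε x) with hY
  have hY0 : 0 < Y := by positivity
  have hθn : θD / n ≤ L + Real.log L - w := by
    rw [div_le_iff₀ hn0]
    have : w * n = x / L * (1 + β) := by rw [hw]; field_simp
    have h2 : (L + Real.log L - w) * n = n * (L + Real.log L) - w * n := by ring
    rw [h2, this]; exact hθ
  have hBY : B / 2 + Real.log 2 ≤ Y := by
    set X := Real.exp (3 * L / n + 2 + θD / n) with hX
    have hX1 : 1 ≤ X := Real.one_le_exp (by positivity)
    have hlogn : Real.log (n + 1) ≤ 2 * L := by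
      have : Real.log (n + 1) ≤ Real.log (x ^ 2) := by
        refine Real.log_le_log (by linarith) ?_
        have : 2 ≤ x := by
          have := Real.log_le_sub_one_of_pos hx0
          linarith
        calc n + 1 ≤ x + x := by linarith
          _ = 2 * x := by ring
          _ ≤ x * x := by gcongr
          _ = x ^ 2 := by ring
      rw [Real.log_pow] at this
      push_cast at this; exact this
    have hl2 : Real.log 2 ≤ X := by
      have := Real.log_two_lt_d9
      linarith
    have h1 : B / 2 + Real.log 2 ≤ n / (2 * δ) * ((1 + (A + 2 * δ * C * L) / n) * X) := by
      have h2 : C * Real.log (n + 1) ≤ C * (2 * L) := by gcongr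
      have h3 : B ≤ ((n + 1) / δ + C * (2 * L)) * X := hB.trans (by gcongr)
      have h4 : n / (2 * δ) * ((1 + (A + 2 * δ * C * L) / n) * X) =
          ((n + 1) / δ + C * (2 * L)) * X / 2 + X := by
        simp only [A]; field_simp; ring
      rw [h4]; linarith
    refine h1.trans ?_
    rw [hY]
    refine mul_le_mul_of_nonneg_left ?_ (by positivity)
    have h5 : 1 + (A + 2 * δ * C * L) / n ≤ Real.exp ((A + 2 * δ * C * L) / n) := by
      have := Real.add_one_le_exp ((A + 2 * δ * C * L) / n); linarith
    refine (mul_le_mul_of_nonneg_right h5 (by positivity)).trans ?_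
    rw [hX, ← Real.exp_add]
    apply Real.exp_le_exp.mpr
    have h6 : (A + 2 * δ * C * L) / n + 3 * L / n ≤ ε x := by
      have : (A + 2 * δ * C * L) / n + 3 * L / n = (A + D * L) / n := by simp only [D]; ring
      rw [this]
      simp only [ε]
      rw [← hL, div_le_div_iff₀ hn0 hx0]
      have : 0 ≤ A + D * L := by simp only [A, D]; positivity
      calc (A + D * L) * x ≤ (A + D * L) * (2 * L * n) := by gcongr
        _ = _ := by ring
    linarith
  constructor
  · have h1 : B ≤ 2 * Y := by
      have := Real.log_nonneg (show (1:ℝ) ≤ 2 by norm_num)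
      linarith
    have h2 : Y ≤ x / (2 * δ) * (Real.exp 3 * (x * L)) := by
      rw [hY]
      have : Real.exp (2 + L + Real.log L - w + ε x) ≤ Real.exp 3 * (x * L) := by
        calc _ ≤ Real.exp (3 + (L + Real.log L)) := Real.exp_le_exp.mpr (by linarith)
          _ = _ := by rw [Real.exp_add, Real.exp_add L, Real.exp_log hL0, hL, Real.exp_log hx0]
      gcongr
    have h3 : L * Real.exp 3 < δ * x := by
      have he := Real.exp_pos 3
      rw [pow_one, div_lt_div_iff₀ hx0 he] at e5
      exact e5
    have h4 : 2 * (x / (2 * δ) * (Real.exp 3 * (x * L))) = x ^ 2 * (L * Real.exp 3) / δ := by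
      field_simp
    have h5 : x ^ 2 * (L * Real.exp 3) / δ < x ^ 3 := by
      rw [div_lt_iff₀ hδ]
      have : x ^ 3 * δ = x ^ 2 * (δ * x) := by ring
      rw [this]
      gcongr
    linarith
  · intro y hy1 hy2
    have hyY : y ≤ Y := hy2.trans hBY
    have hy0 : 0 < y := lt_of_lt_of_le (Real.exp_pos 2) hy1
    have hYe : Real.exp 2 ≤ Y := hy1.trans hyY
    have hly : 2 ≤ Real.log y := (Real.le_log_iff_exp_le hy0).mpr hy1
    have hlY : 2 ≤ Real.log Y := (Real.le_log_iff_exp_le hY0).mpr hYe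
    have hmono := Real.log_div_sqrt_antitoneOn (Set.mem_Ici.mpr hy1) (Set.mem_Ici.mpr hYe) hyY
    simp only at hmono
    have hsy : 0 < √y := Real.sqrt_pos.mpr hy0
    have hsY : 0 < √Y := Real.sqrt_pos.mpr hY0
    rw [div_le_div_iff₀ hsY hsy] at hmono
    have hbase : 4 * Real.sqrt (2 * (δ / Real.exp 1) * Y) ≤ 2 * n * Real.log Y := by
      have hlogY : Real.log Y = 2 * L + g + 3 - 2 * w + 2 * ε x - Real.log (2 * δ) := by
        rw [hY, Real.log_mul (by positivity) (Real.exp_pos _).ne', Real.log_exp,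
          Real.log_div hn0.ne' (by positivity), hg, hνd, Real.log_div (by positivity) hx0.ne',
          Real.log_mul hn0.ne' hL0.ne', ← hL]
        ring
      have hsq : 2 * (δ / Real.exp 1) * Y = (n * Real.exp (-g / 2) * L) ^ 2 := by
        have h1 : (n * Real.exp (-g / 2) * L) ^ 2 = n ^ 2 * L ^ 2 * Real.exp (- g) := by
          rw [mul_pow, mul_pow, ← Real.exp_nat_mul]
          push_cast
          rw [show 2 * (-g / 2) = -g by ring]; ring
        have h2 : Real.exp (-g) = Real.exp (1 - w + ε x) / ν := by
          rw [hg, show -(w - 1 + Real.log ν - ε x) = (1 - w + ε x) - Real.log ν by ring,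
            Real.exp_sub, Real.exp_log hν0]
        have h3 : Real.exp (2 + L + Real.log L - w + ε x) =
            Real.exp 1 * (x * L) * Real.exp (1 - w + ε x) := by
          rw [show 2 + L + Real.log L - w + ε x = 1 + (L + Real.log L) + (1 - w + ε x) by ring,
            Real.exp_add, Real.exp_add 1, Real.exp_add L, Real.exp_log hL0, hL, Real.exp_log hx0]
        rw [h1, h2, hY, h3, hνd]
        field_simp
      rw [hsq, Real.sqrt_sq (by positivity), hlogY]
      have : 2 * L * Real.exp (-g / 2) ≤ 2 * L + g + 3 - 2 * w + 2 * ε x - Real.log (2 * δ) := by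
        have : γ = 4 - Real.log (2 * δ) := hγ
        linarith
      calc 4 * (n * Real.exp (-g / 2) * L) = 2 * n * (2 * L * Real.exp (-g / 2)) := by ring
        _ ≤ _ := mul_le_mul_of_nonneg_left this (by positivity)
    have hfac : ∀ z : ℝ, Real.sqrt (2 * (δ / Real.exp 1) * z) = √(2 * (δ / Real.exp 1)) * √z :=
      fun z => Real.sqrt_mul (by positivity) z
    rw [hfac] at hbase ⊢
    rw [div_le_iff₀ (by linarith)]
    set s := √(2 * (δ / Real.exp 1)) with hs
    have hs0 : 0 ≤ s := Real.sqrt_nonneg _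
    -- log Y * √y ≤ log y * √Y
    have : 4 * (s * √y) * √Y ≤ (2 * n * Real.log y) * √Y := by
      calc 4 * (s * √y) * √Y = (4 * (s * √Y)) * √y := by ring
        _ ≤ (2 * n * Real.log Y) * √y := by gcongr
        _ = 2 * n * (Real.log Y * √y) := by ring
        _ ≤ 2 * n * (Real.log y * √Y) := by gcongr
        _ = _ := by ring
    exact le_of_mul_le_mul_right this hsY


lemma card_ge_eventually : ∀ᶠ x : ℝ in atTop, x / (2 * Real.log x) ≤ ((oddPrimes x).card : ℝ) := by
  have e1 := (tendsto_log_pow_div 1).eventually_lt_const (show (0:ℝ) < 1 / 30 by norm_num)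
  filter_upwards [e1, Real.tendsto_log_atTop.eventually_ge_atTop 2, eventually_ge_atTop 100]
    with x e1 hL hx
  have hx0 : 0 < x := by linarith
  rw [pow_one, div_lt_iff₀ hx0] at e1
  have h := Chebyshev.pi_ge' (show 1 < x by linarith)
  have h2 : (Nat.primeCounting ⌊x⌋₊ : ℝ) ≤ (oddPrimes x).card + 1 := by
    exact_mod_cast primeCounting_le_card x
  have h3 : Real.log (x + 2) ≤ 2 * Real.log x := by
    have : Real.log (x + 2) ≤ Real.log (x ^ 2) := Real.log_le_log (by linarith) (by nlinarith)
    rwa [Real.log_pow] at this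
  have h4 := Real.log_two_gt_d9
  have h5 := h.trans h2
  rw [div_le_iff₀ (by linarith)] at h5
  rw [div_le_iff₀ (by linarith)]
  nlinarith

lemma exists_enum (s : Finset ℕ) (h5 : 5 ∈ s) : ∃ (n : ℕ) (p : Fin (n + 1) → ℕ),
    s.card = n + 1 ∧ Function.Injective p ∧ p 0 = 5 ∧ (∀ i, p i ∈ s) ∧
    ∀ {M : Type} [CommMonoid M] (f : ℕ → M), ∏ i, f (p i) = ∏ q ∈ s, f q := by
  obtain ⟨n, hn⟩ : ∃ n, s.card = n + 1 := ⟨s.card - 1, by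
    have := Finset.card_pos.mpr ⟨5, h5⟩; omega⟩
  let e : Fin (n + 1) ≃ s := (s.equivFinOfCardEq hn).symm
  let e' : Fin (n + 1) ≃ s := (Equiv.swap 0 (e.symm ⟨5, h5⟩)).trans e
  refine ⟨n, fun i => (e' i : ℕ), hn, fun i j h => e'.injective (Subtype.ext h), ?_, fun i => (e' i).2, ?_⟩
  · simp [e']
  · intro M _ f
    rw [← Finset.prod_coe_sort s f]
    exact Equiv.prod_comp e' (fun q : s => f q)

lemma sums_bound (η x : ℝ) (hη2 : η ≤ 2) (hx : 5 ≤ x)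
    (hJ : x / Real.log x + (2 - η) * x / (Real.log x) ^ 2 ≤ J x) :
    0 ≤ ∑ p ∈ oddPrimes x, Real.log p ∧ 0 ≤ ∑ p ∈ oddPrimes x, Real.log (Real.log p) ∧
    ∑ p ∈ oddPrimes x, Real.log p + ∑ p ∈ oddPrimes x, Real.log (Real.log p) ≤
      (oddPrimes x).card * (Real.log x + Real.log (Real.log x)) -
        x / Real.log x * (1 + (3 - η) / Real.log x) := by
  have hx0 : 0 < x := by linarith
  have hp1 : ∀ p ∈ oddPrimes x, 1 < Real.log p := by
    intro p hp
    rw [mem_oddPrimes hx0.le] at hp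
    have h3 : 3 ≤ p := by
      have := hp.1.1.two_le
      have := hp.1.2
      omega
    have h3' : (3:ℝ) ≤ p := by exact_mod_cast h3
    rw [Real.lt_log_iff_exp_lt (by linarith)]
    have := Real.exp_one_lt_d9
    linarith
  have hL : 1 < Real.log x := by
    rw [Real.lt_log_iff_exp_lt (by linarith)]
    have := Real.exp_one_lt_d9
    linarith
  have hL0 : 0 < Real.log x := by linarith
  refine ⟨Finset.sum_nonneg fun p hp => by linarith [hp1 p hp],
    Finset.sum_nonneg fun p hp => Real.log_nonneg (hp1 p hp).le, ?_⟩
  have hle : ∑ p ∈ oddPrimes x, Real.log p + ∑ p ∈ oddPrimes x, Real.log (Real.log p) ≤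
      ∑ p ∈ oddPrimes x, ((Real.log x + Real.log (Real.log x)) -
        (Real.log x - Real.log p) * (1 + 1 / Real.log x)) := by
    rw [← Finset.sum_add_distrib]
    refine Finset.sum_le_sum fun p hp => ?_
    have h1 := hp1 p hp
    have h2 := Real.log_le_sub_one_of_pos (show 0 < Real.log p / Real.log x by positivity)
    rw [Real.log_div (by linarith) hL0.ne'] at h2
    have h3 : (Real.log x - Real.log p) * (1 + 1 / Real.log x) =
        Real.log x - Real.log p + 1 - Real.log p / Real.log x := by field_simp; ring
    rw [h3]; linarith
  rw [Finset.sum_sub_distrib, ← Finset.sum_mul, Finset.sum_const, nsmul_eq_mul] at hle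
  change _ ≤ _ - J x * _ at hle
  have h4 : (x / Real.log x + (2 - η) * x / (Real.log x) ^ 2) * (1 + 1 / Real.log x) ≤
      J x * (1 + 1 / Real.log x) := by gcongr
  have h5 : (x / Real.log x + (2 - η) * x / (Real.log x) ^ 2) * (1 + 1 / Real.log x) =
      x / Real.log x * (1 + (3 - η) / Real.log x) + (2 - η) * x / (Real.log x) ^ 3 := by
    field_simp; ring
  have h6 : 0 ≤ (2 - η) * x / (Real.log x) ^ 3 := by
    have : 0 ≤ 2 - η := by linarith
    positivity
  linarith

end AbcAux




/-- If `δ > 0` and `C ≥ 0` are constants with `2δ < e⁴` such that every full-rank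
lattice `L` in `ℝⁿ` (the ℤ-span of an ℝ-basis, given by the rows `b` of a matrix
with nonzero determinant) contains a nonzero vector `x` with
`‖x‖₁ ≤ (n/δ + C·log n)·det(L)^(1/n)`, then there are infinitely many abc triples
with `exp (4·√(2(δ/e)·log c) / log log c) · rad(abc) ≤ c`. -/
theorem abc_lower_bound_of_lattice_bound (δ C : ℝ) (hδ : 0 < δ) (hC : 0 ≤ C)
    (hδe : 2 * δ < Real.exp 1 ^ 4)
    (hlat : ∀ n : ℕ, 1 ≤ n → ∀ b : Fin n → Fin n → ℝ, (Matrix.of b).det ≠ 0 →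
      ∃ x ∈ Submodule.span ℤ (Set.range b), x ≠ 0 ∧
        ∑ i, |x i| ≤ ((n : ℝ) / δ + C * Real.log n) * |(Matrix.of b).det| ^ ((1 : ℝ) / n)) :
    ∀ N : ℝ, ∃ a b c : ℕ, 0 < a ∧ 0 < b ∧ 0 < c ∧ Nat.gcd a b = 1 ∧ a + b = c ∧ (c : ℝ) > N ∧
      Real.exp (4 * Real.sqrt (2 * (δ / Real.exp 1) * Real.log c) / Real.log (Real.log c)) *
        (rad (a * b * c) : ℝ) ≤ (c : ℝ) := by
  intro N
  obtain ⟨η, hη, hη2, han⟩ := analytic δ C hδ hC hδe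
  have hbig : ∀ᶠ x : ℝ in Filter.atTop, max (Real.exp 2) N ≤ x / (2 * Real.log x) := by
    have h1 : Filter.Tendsto (fun x : ℝ => Real.log x ^ 1 / x) Filter.atTop (nhdsWithin 0 (Set.Ioi 0)) := by
      refine tendsto_nhdsWithin_iff.mpr ⟨tendsto_log_pow_div 1, ?_⟩
      filter_upwards [Filter.eventually_gt_atTop 1] with x hx
      have := Real.log_pos hx
      exact Set.mem_Ioi.mpr (by positivity)
    have h2 := h1.inv_tendsto_nhdsGT_zero.eventually_ge_atTop (2 * max (Real.exp 2) N)
    filter_upwards [h2] with x hx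
    simp only [Pi.inv_apply, pow_one, inv_div] at hx
    rw [show x / (2 * Real.log x) = x / Real.log x / 2 by rw [div_div, mul_comm]]
    linarith
  obtain ⟨x0, hx0⟩ := Filter.eventually_atTop.mp
    ((han.and (card_ge_eventually.and hbig)).and (Filter.eventually_ge_atTop (5:ℝ)))
  obtain ⟨x, hxx, hJ⟩ := exists_J_ge η hη hη2 x0
  obtain ⟨⟨hanx, hcard, hmax⟩, hx5⟩ := hx0 x hxx
  obtain ⟨hθ0, hD0, hθD⟩ := sums_bound η x hη2 hx5 hJ
  have hxpos : 0 < x := by linarith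
  have h5mem : 5 ∈ oddPrimes x := by
    rw [mem_oddPrimes hxpos.le]; exact ⟨by norm_num, by exact_mod_cast hx5⟩
  obtain ⟨m, p, hm, hinj, hp5, hpmem, hprod⟩ := exists_enum _ h5mem
  set θ := ∑ p ∈ oddPrimes x, Real.log p with hθ
  set D := ∑ p ∈ oddPrimes x, Real.log (Real.log p) with hD
  set n : ℝ := ((oddPrimes x).card : ℝ) with hn
  have hnm : n = m + 1 := by rw [hn, hm]; push_cast; ring
  have hn0 : 0 < n := by rw [hnm]; positivity
  have hnx : n ≤ x := by
    have h1 : (oddPrimes x).card ≤ ⌊x⌋₊ := by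
      have : oddPrimes x ⊆ Finset.Icc 1 ⌊x⌋₊ := by
        intro q hq
        rw [mem_oddPrimes hxpos.le] at hq
        exact Finset.mem_Icc.mpr ⟨hq.1.1.one_lt.le, Nat.le_floor hq.2⟩
      simpa using Finset.card_le_card this
    exact (show n ≤ (⌊x⌋₊ : ℝ) by rw [hn]; exact_mod_cast h1).trans (Nat.floor_le hxpos.le)
  have hpp : ∀ i, (p i).Prime ∧ p i ≠ 2 := fun i => ((mem_oddPrimes hxpos.le).mp (hpmem i)).1
  have hl2 : 0 < Real.log 2 := Real.log_pos (by norm_num)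
  set k : ℕ := ⌊(θ + 2 * n) / Real.log 2⌋₊ with hk
  have hk1 : k * Real.log 2 ≤ θ + 2 * n := by
    rw [← le_div_iff₀ hl2]; exact Nat.floor_le (by positivity)
  have hk2 : θ + 2 * n ≤ (k + 1) * Real.log 2 := by
    rw [← div_le_iff₀ hl2]; exact (Nat.lt_floor_add_one _).le
  have hlp : ∀ q ∈ oddPrimes x, 0 < Real.log q := fun q hq =>
    Real.log_pos (by exact_mod_cast ((mem_oddPrimes hxpos.le).mp hq).1.1.one_lt)
  have hPlog : ∏ i, Real.log (p i) = Real.exp D := by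
    rw [hprod (fun q => Real.log q), hD, Real.exp_sum]
    exact Finset.prod_congr rfl fun q hq => (Real.exp_log (hlp q hq)).symm
  have hP : ((∏ i, p i : ℕ) : ℝ) = Real.exp θ := by
    push_cast
    rw [hprod (fun q => (q : ℝ)), hθ, Real.exp_sum]
    refine Finset.prod_congr rfl fun q hq => (Real.exp_log ?_).symm
    exact_mod_cast ((mem_oddPrimes hxpos.le).mp hq).1.1.pos
  have hLpos : 0 < Real.log x := Real.log_pos (by linarith)
  set B : ℝ := (((m + 2 : ℕ) : ℝ) / δ + C * Real.log (m + 2 : ℕ)) *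
    (x ^ 3 * (2 ^ k * ∏ i, Real.log (p i))) ^ ((1 : ℝ) / (m + 2 : ℕ)) with hB
  have hm2 : ((m + 2 : ℕ) : ℝ) = n + 1 := by rw [hnm]; push_cast; ring
  have hdet : x ^ 3 * (2 ^ k * ∏ i, Real.log (p i)) =
      Real.exp (3 * Real.log x + k * Real.log 2 + D) := by
    rw [hPlog, Real.exp_add, Real.exp_add, mul_assoc]
    congr 1
    · rw [show 3 * Real.log x = ((3:ℕ):ℝ) * Real.log x by norm_num, Real.exp_nat_mul, Real.exp_log hxpos]
    · rw [Real.exp_nat_mul, Real.exp_log (by norm_num)]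
  have hBle : B ≤ ((n + 1) / δ + C * Real.log (n + 1)) *
      Real.exp (3 * Real.log x / n + 2 + (θ + D) / n) := by
    rw [hB, hm2, hdet, ← Real.exp_mul]
    have hlog : 0 ≤ Real.log (n + 1) := Real.log_nonneg (by linarith)
    refine mul_le_mul_of_nonneg_left (Real.exp_le_exp.mpr ?_) (by positivity)
    have h1 : 3 * Real.log x / n + 2 + (θ + D) / n = (3 * Real.log x + (θ + 2 * n) + D) / n := by
      field_simp; ring
    rw [h1, mul_one_div]
    refine div_le_div₀ (by positivity) (by linarith) hn0 (by linarith)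
  obtain ⟨hBt, hfin⟩ := hanx n (θ + D) B hcard hnx (by positivity) hθD hBle
  obtain ⟨a, b, c, ha, hb, hc, hgcd, habc, hck, hlogc, hrad⟩ := lattice_abc δ C hlat k m p
    (fun i => (hpp i).1) (fun i => (hpp i).2) hinj hp5 (x ^ 3) B (by positivity) hB hBt
  have hc0 : (0:ℝ) < c := by exact_mod_cast hc
  have hcexp : (k + 2) * Real.log 2 ≤ Real.log c := by
    have h1 : ((2:ℝ) ^ (k + 2)) ≤ c := by exact_mod_cast hck
    have h2 := Real.log_le_log (by positivity) h1
    rw [Real.log_pow] at h2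
    push_cast at h2; exact h2
  have hnmax := hmax.trans hcard
  have hne : Real.exp 2 ≤ n := (le_max_left _ _).trans hnmax
  have hnN : N ≤ n := (le_max_right _ _).trans hnmax
  have hlc : n ≤ Real.log c := by nlinarith
  refine ⟨a, b, c, ha, hb, hc, hgcd, habc, ?_, ?_⟩
  · have := Real.log_le_sub_one_of_pos hc0
    linarith
  · have hR := hfin (Real.log c) (hne.trans hlc) hlogc
    have hrad' : (rad (a * b * c) : ℝ) * 2 ^ (k + 2) ≤ 2 * Real.exp θ * c := by
      rw [← hP]; exact_mod_cast hrad
    have h2k : Real.exp ((k + 1) * Real.log 2) = 2 ^ (k + 1) := by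
      rw [show ((k:ℝ) + 1) = ((k + 1 : ℕ) : ℝ) by push_cast; ring, Real.exp_nat_mul,
        Real.exp_log (by norm_num)]
    have h1 : Real.exp θ * Real.exp (2 * n) ≤ 2 ^ (k + 1) := by
      rw [← Real.exp_add, ← h2k]; exact Real.exp_le_exp.mpr hk2
    have h3 : (rad (a * b * c) : ℝ) * 2 ^ (k + 1) ≤ Real.exp θ * c := by
      rw [pow_succ] at hrad'; linarith
    have h4 : Real.exp θ * (Real.exp (2 * n) * (rad (a * b * c) : ℝ)) ≤ Real.exp θ * c := by
      calc _ = (rad (a * b * c) : ℝ) * (Real.exp θ * Real.exp (2 * n)) := by ring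
        _ ≤ (rad (a * b * c) : ℝ) * 2 ^ (k + 1) := by gcongr
        _ ≤ _ := h3
    have h5 := le_of_mul_le_mul_left h4 (Real.exp_pos θ)
    refine le_trans ?_ h5
    gcongr
end

section
/- (Rankin) For every n ≥ 1 and every real x with 1/2 ≤ x < 1, every full-rank lattice L in ℝⁿ contains a nonzero vector v with ‖v‖₁ ≤ ((2−x)/(1−x))^{x−1} · (((1+xn)/x)·Γ(xn+1))^{1/n} · (n^{1−x}/Γ(x+1)) · det(L)^{1/n}. -/
lemma rk_conv (q : ℝ) (hq : 1 ≤ q) (c s : ℝ) :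
    2 * |c| ^ q ≤ |c + s| ^ q + |c - s| ^ q := by
  have h1 := (convexOn_rpow hq).2 (Set.mem_Ici.2 (abs_nonneg (c+s))) (Set.mem_Ici.2 (abs_nonneg (c-s)))
    (by norm_num : (0:ℝ) ≤ 1/2) (by norm_num : (0:ℝ) ≤ 1/2) (by norm_num)
  have h2 : |c| ≤ (1/2:ℝ) • |c+s| + (1/2:ℝ) • |c-s| := by
    have := abs_add_le (c+s) (c-s)
    have h3 : |c + s + (c - s)| = 2 * |c| := by
      rw [show c + s + (c - s) = 2 * c by ring, abs_mul]; norm_num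
    simp only [smul_eq_mul]; linarith
  have h3 := Real.rpow_le_rpow (abs_nonneg c) h2 (by linarith : 0 ≤ q)
  have h4 := h3.trans h1
  simp only [smul_eq_mul] at h4
  linarith

lemma rk_cont (q : ℝ) (hq : 1 ≤ q) : Continuous (fun t : ℝ => |t| ^ q) :=
  continuous_abs.rpow_const (fun _ => Or.inr (by linarith))

lemma rk_hh (q : ℝ) (hq : 1 ≤ q) (c : ℝ) :
    2 * |c| ^ q ≤ ∫ t in (c-1)..(c+1), |t| ^ q := by
  have hc := rk_cont q hq
  have e1 : ∫ t in (c-1)..(c+1), |t| ^ q = ∫ s in (-1:ℝ)..1, |c + s| ^ q := by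
    rw [intervalIntegral.integral_comp_add_left (fun t => |t| ^ q) c]; rfl
  have e2 : ∫ t in (c-1)..(c+1), |t| ^ q = ∫ s in (-1:ℝ)..1, |c - s| ^ q := by
    rw [intervalIntegral.integral_comp_sub_left (fun t => |t| ^ q) c]; simp
  have c1 : Continuous (fun s : ℝ => |c + s| ^ q) := hc.comp (by fun_prop : Continuous fun s => c + s)
  have c2 : Continuous (fun s : ℝ => |c - s| ^ q) := hc.comp (by fun_prop : Continuous fun s => c - s)
  have h : ∫ s in (-1:ℝ)..1, 2 * |c| ^ q ≤ ∫ s in (-1:ℝ)..1, (|c + s| ^ q + |c - s| ^ q) := by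
    apply intervalIntegral.integral_mono_on (by norm_num)
    · exact continuous_const.intervalIntegrable _ _
    · exact (c1.add c2).intervalIntegrable _ _
    · intro s _; exact rk_conv q hq c s
  rw [intervalIntegral.integral_add (c1.intervalIntegrable _ _) (c2.intervalIntegrable _ _), ← e1, ← e2] at h
  simp at h
  linarith

lemma rk_num (q : ℝ) (hq : 1 ≤ q) (m : ℕ) :
    ∑ i : Fin m, |2 * (i : ℝ) + 1 - m| ^ q ≤ (m : ℝ) ^ (q + 1) / (q + 1) := by
  have hc := rk_cont q hq
  have h1 : ∑ i ∈ Finset.range m, 2 * |2 * (i : ℝ) + 1 - m| ^ q ≤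
      ∑ i ∈ Finset.range m, ∫ t in (2 * (i:ℝ) - m)..(2 * ((i+1 : ℕ):ℝ) - m), |t| ^ q := by
    apply Finset.sum_le_sum
    intro i _
    have h := rk_hh q hq (2 * (i : ℝ) + 1 - m)
    rw [show 2 * (i : ℝ) + 1 - m - 1 = 2 * (i:ℝ) - m by ring,
      show 2 * (i : ℝ) + 1 - m + 1 = 2 * ((i+1 : ℕ):ℝ) - m by push_cast; ring] at h
    exact h
  rw [intervalIntegral.sum_integral_adjacent_intervals (a := fun i : ℕ => 2 * (i:ℝ) - m)
    (fun k _ => hc.intervalIntegrable _ _)] at h1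
  have h2 : ∫ t in (2 * ((0:ℕ):ℝ) - m)..(2 * (m:ℝ) - m), |t| ^ q = 2 * ((m : ℝ) ^ (q + 1) / (q + 1)) := by
    have e : ∫ t in (0:ℝ)..m, |t| ^ q = (m : ℝ) ^ (q + 1) / (q + 1) := by
      rw [intervalIntegral.integral_congr (g := fun t => t ^ q), integral_rpow (Or.inl (by linarith)),
        Real.zero_rpow (by linarith)]
      · simp
      · intro t ht
        rw [Set.uIcc_of_le (by positivity)] at ht
        simp only [abs_of_nonneg ht.1]
    have e' : ∫ t in (-(m:ℝ))..0, |t| ^ q = (m : ℝ) ^ (q + 1) / (q + 1) := by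
      rw [← e]
      have := intervalIntegral.integral_comp_neg (a := (0:ℝ)) (b := m) (fun t : ℝ => |t| ^ q)
      simp only [abs_neg, neg_zero] at this
      exact this.symm
    rw [← intervalIntegral.integral_add_adjacent_intervals (b := 0) (hc.intervalIntegrable _ _) (hc.intervalIntegrable _ _)]
    rw [show 2 * ((0:ℕ):ℝ) - m = -(m:ℝ) by simp, show 2 * (m:ℝ) - m = m by ring, e, e']; ring
  rw [h2, ← Finset.mul_sum] at h1
  rw [Fin.sum_univ_eq_sum_range (fun i : ℕ => |2 * (i : ℝ) + 1 - m| ^ q) m]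
  linarith

lemma rk_signsum (m : ℕ) (i : ℕ) (hi : i < m) :
    ∑ j ∈ Finset.range m, (if j < i then (1:ℝ) else if i < j then -1 else 0) = 2 * (i : ℝ) + 1 - m := by
  obtain ⟨k, rfl⟩ := Nat.exists_eq_add_of_lt hi
  rw [show i + k + 1 = i + (k+1) by ring, Finset.sum_range_add, Finset.sum_range_succ']
  rw [Finset.sum_congr rfl (g := fun _ => (1:ℝ))]
  · simp; ring
  · intro j hj; simp [Finset.mem_range.1 hj]

lemma rk_mono (m : ℕ) (a : Fin m → ℝ) (ha : Monotone a) :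
    ∑ i, ∑ j, |a i - a j| = 2 * ∑ i : Fin m, (2 * (i : ℝ) + 1 - m) * a i := by
  have key : ∀ i j : Fin m, |a i - a j| =
    (if (j:ℕ) < i then (1:ℝ) else if (i:ℕ) < j then -1 else 0) * a i +
    (if (i:ℕ) < j then (1:ℝ) else if (j:ℕ) < i then -1 else 0) * a j := by
    intro i j
    rcases lt_trichotomy i j with h | h | h
    · have h1 := ha h.le
      have h' : (i:ℕ) < j := h
      rw [abs_of_nonpos (by linarith)]
      simp [h', h'.not_gt]; ring
    · subst h; simp
    · have h1 := ha h.le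
      have h' : (j:ℕ) < i := h
      rw [abs_of_nonneg (by linarith)]
      simp [h', h'.not_gt]; ring
  have s : ∀ i : Fin m, ∑ j : Fin m, (if (j:ℕ) < i then (1:ℝ) else if (i:ℕ) < j then -1 else 0) = 2 * (i : ℝ) + 1 - m := by
    intro i
    rw [Fin.sum_univ_eq_sum_range (fun j : ℕ => (if j < i then (1:ℝ) else if i < j then -1 else 0)) m]
    exact rk_signsum m i i.2
  simp_rw [key, Finset.sum_add_distrib]
  conv_lhs => arg 2; rw [Finset.sum_comm]
  simp_rw [← Finset.sum_mul, s]
  ring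

lemma rk_1d (p q : ℝ) (hpq : p.HolderConjugate q) (m : ℕ) (a : Fin m → ℝ) :
    ∑ i, ∑ j, |a i - a j| ≤ 2 * (((m : ℝ) ^ (q + 1) / (q + 1)) ^ (1/q) * (∑ i, |a i| ^ p) ^ (1/p)) := by
  set σ := Tuple.sort a
  have e1 : ∑ i, ∑ j, |a i - a j| = ∑ i, ∑ j, |(a ∘ σ) i - (a ∘ σ) j| := by
    simp only [Function.comp]
    rw [Equiv.sum_comp σ (fun i => ∑ j, |a i - a (σ j)|)]
    refine Finset.sum_congr rfl fun i _ => ?_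
    rw [Equiv.sum_comp σ (fun j => |a i - a j|)]
  have e2 : ∑ i, |a i| ^ p = ∑ i, |(a ∘ σ) i| ^ p := (Equiv.sum_comp σ (fun i => |a i| ^ p)).symm
  rw [e1, e2, rk_mono m _ (Tuple.monotone_sort a)]
  have h := Real.inner_le_Lp_mul_Lq Finset.univ (fun i : Fin m => 2 * (i : ℝ) + 1 - m) (a ∘ σ) hpq.symm
  refine mul_le_mul_of_nonneg_left (h.trans ?_) (by norm_num)
  refine mul_le_mul_of_nonneg_right ?_ (by positivity)
  have := hpq.symm.pos
  exact Real.rpow_le_rpow (by positivity) (rk_num q hpq.symm.lt.le m) (by positivity)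

lemma rk_pts (n m : ℕ) (hn : 1 ≤ n) (hm : 1 ≤ m) (x : ℝ) (hx : 0 < x) (hx1 : x < 1)
    (P : Fin m → Fin n → ℝ) (M : ℝ) (hM0 : 0 ≤ M)
    (hM : ∀ i j, i ≠ j → M ≤ ∑ k, |P i k - P j k|) :
    (M / (2 * (((2 - x) / (1 - x)) ^ (x - 1) * (n : ℝ) ^ (1 - x)))) ^ (1 / x) * (m - 1 / x)
      ≤ ∑ i, ∑ k, |P i k| ^ (1 / x) := by
  set K := ((2 - x) / (1 - x)) ^ (x - 1) * (n : ℝ) ^ (1 - x) with hK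
  have hy : 0 < 1 - x := by linarith
  have hy2 : 0 < 2 - x := by linarith
  have hn0 : (0:ℝ) < n := by exact_mod_cast hn
  have hm0 : (0:ℝ) < m := by exact_mod_cast hm
  have hm1 : (1:ℝ) ≤ m := by exact_mod_cast hm
  have hKpos : 0 < K := by positivity
  set S := ∑ i, ∑ k, |P i k| ^ (1 / x) with hS
  have hS0 : 0 ≤ S := by positivity
  have hpq : (1/x).HolderConjugate (1/(1-x)) := by
    rw [Real.holderConjugate_iff]
    refine ⟨by rw [lt_div_iff₀ hx]; linarith, by field_simp; ring⟩
  -- lower bound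
  have low : M * (m * (m - 1)) ≤ ∑ i, ∑ j, ∑ k, |P i k - P j k| := by
    have : ∀ i : Fin m, M * (m - 1) ≤ ∑ j, ∑ k, |P i k - P j k| := by
      intro i
      rw [← Finset.add_sum_erase _ _ (Finset.mem_univ i)]
      have h := Finset.card_nsmul_le_sum (Finset.univ.erase i) (fun j => ∑ k, |P i k - P j k|) M
        (fun j hj => hM i j (Finset.ne_of_mem_erase hj).symm)
      rw [Finset.card_erase_of_mem (Finset.mem_univ i), Finset.card_univ, Fintype.card_fin,
        nsmul_eq_mul, Nat.cast_sub hm] at h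
      have : 0 ≤ ∑ k, |P i k - P i k| := by positivity
      push_cast at h
      linarith
    have h := Finset.sum_le_sum (fun i (_ : i ∈ Finset.univ) => this i)
    simp only [Finset.sum_const, Finset.card_univ, Fintype.card_fin, nsmul_eq_mul] at h
    linarith
  -- upper bound
  have e : ∑ i, ∑ j, ∑ k, |P i k - P j k| = ∑ k, ∑ i, ∑ j, |P i k - P j k| := by
    simp_rw [fun i => Finset.sum_comm (s := Finset.univ) (t := Finset.univ) (f := fun j k => |P i k - P j k|)]
    exact Finset.sum_comm
  have hA : ((m : ℝ) ^ (1/(1-x) + 1) / (1/(1-x) + 1)) ^ (1/(1/(1-x))) =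
      (m:ℝ) * (m:ℝ)^(1-x) * ((2 - x) / (1 - x)) ^ (x - 1) := by
    have e1 : 1/(1-x) + 1 = (2-x)/(1-x) := by field_simp; ring
    rw [e1, one_div_one_div, Real.div_rpow (by positivity) (by positivity), ← Real.rpow_mul hm0.le,
      div_mul_cancel₀ _ hy.ne', show x - 1 = -(1-x) by ring, Real.rpow_neg (by positivity),
      show 2 - x = 1 + (1-x) by ring, Real.rpow_add hm0, Real.rpow_one]
    rfl
  have hol : ∑ k, (∑ i, |P i k| ^ (1/x)) ^ x ≤ (n:ℝ)^(1-x) * S ^ x := by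
    have h := Real.inner_le_Lp_mul_Lq Finset.univ (fun _ : Fin n => (1:ℝ)) 
      (fun k => (∑ i, |P i k| ^ (1/x)) ^ x) hpq.symm
    simp only [one_mul, abs_one, Real.one_rpow, Finset.sum_const, Finset.card_univ, Fintype.card_fin,
      nsmul_eq_mul, mul_one, one_div_one_div] at h
    refine h.trans (le_of_eq ?_)
    congr 2
    rw [hS, Finset.sum_comm]
    refine Finset.sum_congr rfl fun k _ => ?_
    rw [abs_of_nonneg (by positivity), ← Real.rpow_mul (by positivity), mul_one_div_cancel hx.ne', Real.rpow_one]
  have up : ∑ i, ∑ j, ∑ k, |P i k - P j k| ≤ 2 * (m * (m:ℝ)^(1-x) * (K * S ^ x)) := by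
    rw [e]
    calc _ ≤ ∑ k, 2 * ((m:ℝ) * (m:ℝ)^(1-x) * ((2 - x) / (1 - x)) ^ (x - 1) * (∑ i, |P i k| ^ (1/x)) ^ x) := by
          refine Finset.sum_le_sum fun k _ => ?_
          have := rk_1d _ _ hpq m (fun i => P i k)
          rwa [hA, one_div_one_div] at this
      _ = 2 * ((m:ℝ) * (m:ℝ)^(1-x) * ((2 - x) / (1 - x)) ^ (x - 1)) * ∑ k, (∑ i, |P i k| ^ (1/x)) ^ x := by
          rw [Finset.mul_sum]; refine Finset.sum_congr rfl fun k _ => ?_; ring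
      _ ≤ 2 * ((m:ℝ) * (m:ℝ)^(1-x) * ((2 - x) / (1 - x)) ^ (x - 1)) * ((n:ℝ)^(1-x) * S ^ x) :=
          mul_le_mul_of_nonneg_left hol (by positivity)
      _ = _ := by rw [hK]; ring
  have main : M / (2 * K) * (m - 1) ≤ (m:ℝ)^(1-x) * S ^ x := by
    have h := low.trans up
    have h' : M * (m - 1) ≤ 2 * ((m:ℝ)^(1-x) * (K * S ^ x)) := by
      refine le_of_mul_le_mul_left ?_ hm0
      linarith
    rw [div_mul_eq_mul_div, div_le_iff₀ (by positivity)]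
    linarith
  have hR : 0 ≤ M / (2*K) := by positivity
  have h2 := Real.rpow_le_rpow (mul_nonneg hR (by linarith)) main (by positivity : 0 ≤ 1/x)
  rw [Real.mul_rpow hR (by linarith), Real.mul_rpow (by positivity) (by positivity), ← Real.rpow_mul hm0.le,
    ← Real.rpow_mul hS0, mul_one_div_cancel hx.ne', Real.rpow_one] at h2
  have bern := one_add_mul_self_le_rpow_one_add (s := -(1/(m:ℝ))) (by
    rw [neg_le_neg_iff, div_le_one hm0]; exact hm1) hpq.lt.le
  have b2 : (m:ℝ) ^ ((1-x)*(1/x)) * (m - 1/x) ≤ ((m:ℝ) - 1) ^ (1/x) := by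
    have e3 : (m:ℝ) - 1 = m * (1 + -(1/(m:ℝ))) := by field_simp; ring
    have e4 : (m:ℝ) ^ (1/x) = (m:ℝ) ^ ((1-x)*(1/x)) * m := by
      rw [← Real.rpow_add_one hm0.ne']; congr 1; field_simp; ring
    have e5 : (0:ℝ) ≤ 1 + -(1/(m:ℝ)) := by
      have : 1/(m:ℝ) ≤ 1 := by rw [div_le_one hm0]; exact hm1
      linarith
    rw [e3, Real.mul_rpow hm0.le e5, e4]
    calc _ = (m:ℝ) ^ ((1-x)*(1/x)) * m * (1 + 1/x * -(1/(m:ℝ))) := by field_simp; ring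
      _ ≤ _ := mul_le_mul_of_nonneg_left bern (by positivity)
  have hmp : 0 < (m:ℝ) ^ ((1-x)*(1/x)) := by positivity
  refine le_of_mul_le_mul_left ?_ hmp
  calc _ = (M / (2 * K)) ^ (1/x) * ((m:ℝ) ^ ((1-x)*(1/x)) * (m - 1/x)) := by ring
    _ ≤ _ := mul_le_mul_of_nonneg_left b2 (by positivity)
    _ ≤ _ := h2

lemma rk_contd (n : ℕ) (x : ℝ) (hx : 0 < x) (hx1 : x < 1) (R : ℝ) :
    Continuous (fun z : Fin n → ℝ => max 0 (1 - (∑ k, |z k| ^ (1/x)) / R ^ (1/x))) := by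
  have hp : 1 ≤ 1 / x := by rw [le_div_iff₀ hx]; linarith
  refine continuous_const.max (continuous_const.sub (Continuous.div_const ?_ _))
  refine continuous_finsetSum _ fun k _ => ?_
  exact (continuous_apply k).abs.rpow_const (fun _ => Or.inr (by linarith))

/-- The density function integral. -/
lemma rk_int (n : ℕ) (hn : 1 ≤ n) (x : ℝ) (hx : 0 < x) (hx1 : x < 1) (R : ℝ) (hR : 0 < R) :
    ∫⁻ z : Fin n → ℝ, ENNReal.ofReal (max 0 (1 - (∑ k, |z k| ^ (1/x)) / R ^ (1/x))) =
      ENNReal.ofReal (R ^ n * ((2 * Real.Gamma (x + 1)) ^ n / Real.Gamma (x * n + 1)) / (x * n + 1)) := by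
  have : Nonempty (Fin n) := ⟨⟨0, hn⟩⟩
  have hp : 1 ≤ 1 / x := by rw [le_div_iff₀ hx]; linarith
  have hn0 : (0:ℝ) < n := by exact_mod_cast hn
  have hxn : 0 < x * n := by positivity
  set V := (2 * Real.Gamma (x + 1)) ^ n / Real.Gamma (x * n + 1) with hV
  have hV0 : 0 ≤ V := by
    have := Real.Gamma_pos_of_pos (by positivity : 0 < x + 1)
    have := Real.Gamma_pos_of_pos (by positivity : 0 < x * n + 1)
    positivity
  have hcont := rk_contd n x hx hx1 R
  rw [MeasureTheory.lintegral_eq_lintegral_meas_lt (f := fun z : Fin n → ℝ => max 0 (1 - (∑ k, |z k| ^ (1/x)) / R ^ (1/x))) _ (Filter.Eventually.of_forall fun z => le_max_left _ _)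
    hcont.measurable.aemeasurable]
  have hmeas : ∀ t ∈ Set.Ioi (0:ℝ), MeasureTheory.volume {z : Fin n → ℝ | t < max 0 (1 - (∑ k, |z k| ^ (1/x)) / R ^ (1/x))} =
      Set.indicator (Set.Ioo (0:ℝ) 1) (fun t => ENNReal.ofReal (R ^ n * V * (1 - t) ^ (x * n))) t := by
    intro t ht
    have ht0 : 0 < t := ht
    by_cases h1 : t < 1
    · rw [Set.indicator_of_mem (show t ∈ Set.Ioo (0:ℝ) 1 from ⟨ht0, h1⟩)]
      have hset : {z : Fin n → ℝ | t < max 0 (1 - (∑ k, |z k| ^ (1/x)) / R ^ (1/x))} =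
          {z : Fin n → ℝ | (∑ k, |z k| ^ (1/x)) ^ (1 / (1/x)) < R * (1 - t) ^ x} := by
        ext z
        have hs : 0 ≤ ∑ k, |z k| ^ (1/x) := by positivity
        simp only [Set.mem_ofPred_eq, lt_max_iff, ht0.not_gt, false_or, one_div_one_div]
        have e : R * (1 - t) ^ x = (R ^ (1/x) * (1 - t)) ^ x := by
          rw [Real.mul_rpow (by positivity) (by linarith), ← Real.rpow_mul hR.le, one_div_mul_cancel hx.ne',
            Real.rpow_one]
        rw [e, Real.rpow_lt_rpow_iff hs (mul_nonneg (by positivity) (by linarith)) hx, lt_sub_comm,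
          div_lt_iff₀ (by positivity), mul_comm]
      rw [hset, MeasureTheory.volume_sum_rpow_lt (Fin n) hp, Fintype.card_fin, one_div_one_div,
        show (n:ℝ) / (1/x) = x * n by field_simp, ← ENNReal.ofReal_pow, ← ENNReal.ofReal_mul, mul_pow,
        Real.rpow_mul (by linarith), Real.rpow_natCast]
      · congr 1; rw [hV]; ring
      · have : 0 ≤ 1 - t := by linarith
        positivity
      · have : 0 ≤ 1 - t := by linarith
        positivity
    · rw [Set.indicator_of_notMem (by simp; intro _; linarith)]
      have : {z : Fin n → ℝ | t < max 0 (1 - (∑ k, |z k| ^ (1/x)) / R ^ (1/x))} = ∅ := by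
        ext z
        have hs : 0 ≤ (∑ k, |z k| ^ (1/x)) / R ^ (1/x) := by positivity
        simp only [Set.mem_ofPred_eq, Set.mem_empty_iff_false, iff_false, not_lt]
        exact max_le ht0.le (by linarith)
      rw [this]; simp
  rw [MeasureTheory.setLIntegral_congr_fun measurableSet_Ioi hmeas]
  rw [MeasureTheory.lintegral_indicator measurableSet_Ioo, MeasureTheory.Measure.restrict_restrict measurableSet_Ioo]
  rw [show Set.Ioo (0:ℝ) 1 ∩ Set.Ioi 0 = Set.Ioo 0 1 by ext; simp +contextual]
  have hc2 : Continuous (fun t : ℝ => R ^ n * V * (1 - t) ^ (x * n)) :=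
    continuous_const.mul ((continuous_const.sub continuous_id).rpow_const (fun _ => Or.inr hxn.le))
  rw [← MeasureTheory.ofReal_integral_eq_lintegral_ofReal]
  · congr 1
    rw [← MeasureTheory.integral_Ioc_eq_integral_Ioo, ← intervalIntegral.integral_of_le zero_le_one,
      intervalIntegral.integral_const_mul, 
      intervalIntegral.integral_comp_sub_left (fun t : ℝ => t ^ (x * n)) 1, integral_rpow (Or.inl (by linarith))]
    simp [Real.zero_rpow (by linarith : x * n + 1 ≠ 0)]
    ring
  · exact (hc2.integrableOn_Icc (a := 0) (b := 1)).mono_set Set.Ioo_subset_Icc_self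
  · filter_upwards [MeasureTheory.ae_restrict_mem measurableSet_Ioo] with t ht
    have : 0 ≤ 1 - t := by linarith [ht.2]
    positivity

lemma rk_fin (n : ℕ) (hn : 1 ≤ n) (x : ℝ) (hx : 0 < x) (hx1 : x < 1)
    (M : ℝ) (hM0 : 0 < M) (s : Finset (Fin n → ℝ))
    (hM : ∀ v ∈ s, ∀ w ∈ s, v ≠ w → M ≤ ∑ k, |v k - w k|) :
    ∑ v ∈ s, max 0 (1 - (∑ k, |v k| ^ (1/x)) /
      (M / (2 * (((2 - x) / (1 - x)) ^ (x - 1) * (n : ℝ) ^ (1 - x)))) ^ (1/x)) ≤ 1 / x := by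
  have hy : 0 < 1 - x := by linarith
  have hy2 : 0 < 2 - x := by linarith
  have hn0 : (0:ℝ) < n := by exact_mod_cast hn
  set R := M / (2 * (((2 - x) / (1 - x)) ^ (x - 1) * (n : ℝ) ^ (1 - x))) with hR
  have hR0 : 0 < R := by positivity
  have hRp : 0 < R ^ (1/x) := by positivity
  classical
  set t := s.filter (fun v => 0 < 1 - (∑ k, |v k| ^ (1/x)) / R ^ (1/x)) with ht
  have e : ∑ v ∈ s, max 0 (1 - (∑ k, |v k| ^ (1/x)) / R ^ (1/x)) =
      ∑ v ∈ t, (1 - (∑ k, |v k| ^ (1/x)) / R ^ (1/x)) := by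
    rw [ht, Finset.sum_filter]
    refine Finset.sum_congr rfl fun v _ => ?_
    split_ifs with h
    · exact max_eq_right h.le
    · exact max_eq_left (not_lt.1 h)
  rw [e]
  rcases Nat.eq_zero_or_pos t.card with h0 | hpos
  · rw [Finset.card_eq_zero.1 h0]; simp; exact hx.le
  · have h := rk_pts n t.card hn hpos x hx hx1 (fun i => (t.equivFin.symm i : Fin n → ℝ)) M hM0.le (by
      intro i j hij
      refine hM _ (Finset.mem_filter.1 (t.equivFin.symm i).2).1 _ (Finset.mem_filter.1 (t.equivFin.symm j).2).1 ?_
      intro h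
      exact hij (t.equivFin.symm.injective (Subtype.ext h)))
    rw [← hR] at h
    rw [Equiv.sum_comp t.equivFin.symm (fun v : t => ∑ k, |(v : Fin n → ℝ) k| ^ (1/x)),
      Finset.sum_coe_sort t (fun v => ∑ k, |v k| ^ (1/x))] at h
    rw [Finset.sum_sub_distrib, ← Finset.sum_div]
    simp only [Finset.sum_const, nsmul_eq_mul, mul_one]
    have : (t.card : ℝ) - 1/x ≤ (∑ v ∈ t, ∑ k, |v k| ^ (1/x)) / R ^ (1/x) := by
      rw [le_div_iff₀ hRp]; linarith
    linarith

lemma rk_lat (n : ℕ) (hn : 1 ≤ n) (x : ℝ) (hx : 0 < x) (hx1 : x < 1)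
    (b : Module.Basis (Fin n) ℝ (Fin n → ℝ)) (M : ℝ) (hM0 : 0 < M)
    (hM : ∀ v ∈ Submodule.span ℤ (Set.range b), v ≠ 0 → M ≤ ∑ k, |v k|) :
    (M / (2 * (((2 - x) / (1 - x)) ^ (x - 1) * (n : ℝ) ^ (1 - x)))) ^ n *
      ((2 * Real.Gamma (x + 1)) ^ n / Real.Gamma (x * n + 1)) / (x * n + 1) ≤
      1 / x * |(Matrix.of b).det| := by
  have hy : 0 < 1 - x := by linarith
  have hy2 : 0 < 2 - x := by linarith
  have hn0 : (0:ℝ) < n := by exact_mod_cast hn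
  have fin := rk_fin n hn x hx hx1 M hM0
  set R := M / (2 * (((2 - x) / (1 - x)) ^ (x - 1) * (n : ℝ) ^ (1 - x))) with hR
  have hR0 : 0 < R := by positivity
  have : Countable (Submodule.span ℤ (Set.range b)).toAddSubgroup :=
    inferInstanceAs (Countable (Submodule.span ℤ (Set.range b)))
  rw [← ENNReal.ofReal_le_ofReal_iff (by positivity), ← rk_int n hn x hx hx1 R hR0,
    (ZSpan.isAddFundamentalDomain' b MeasureTheory.volume).lintegral_eq_tsum'']
  have hcont := rk_contd n x hx hx1 R
  rw [← MeasureTheory.lintegral_tsum (fun g => by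
    refine (ENNReal.measurable_ofReal.comp (hcont.comp ?_).measurable).aemeasurable
    exact continuous_const_vadd g)]
  calc _ ≤ ∫⁻ z in ZSpan.fundamentalDomain b, ENNReal.ofReal (1/x) := by
        refine MeasureTheory.lintegral_mono fun z => ?_
        rw [ENNReal.tsum_eq_iSup_sum]
        refine iSup_le fun s => ?_
        rw [← ENNReal.ofReal_sum_of_nonneg (fun _ _ => le_max_left _ _)]
        refine ENNReal.ofReal_le_ofReal ?_
        have inj : Function.Injective (fun g : (Submodule.span ℤ (Set.range b)).toAddSubgroup => g +ᵥ z) := by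
          intro g h hgh
          have h' : (g : Fin n → ℝ) + z = (h : Fin n → ℝ) + z := hgh
          exact Subtype.ext (add_right_cancel h')
        have := fin (s.map ⟨_, inj⟩) (by
          intro v hv w hw hvw
          obtain ⟨g, -, rfl⟩ := Finset.mem_map.1 hv
          obtain ⟨h, -, rfl⟩ := Finset.mem_map.1 hw
          have h2 := hM (g - h : Fin n → ℝ) (Submodule.sub_mem _ g.2 h.2) (by
            intro h0
            apply hvw
            rw [show g = h from Subtype.ext (sub_eq_zero.1 h0)])
          refine h2.trans (le_of_eq ?_)
          refine Finset.sum_congr rfl fun k _ => ?_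
          congr 1
          show _ = ((g : Fin n → ℝ) + z) k - ((h : Fin n → ℝ) + z) k
          simp)
        rwa [Finset.sum_map] at this
    _ = _ := by
        rw [MeasureTheory.lintegral_const, MeasureTheory.Measure.restrict_apply_univ, ZSpan.volume_fundamentalDomain,
          ENNReal.ofReal_mul (by positivity)]

/-- Rankin's theorem: for `n ≥ 1` and `1/2 ≤ x < 1`, every full-rank lattice in
`ℝⁿ` (the ℤ-span of an ℝ-basis, given by the rows `b` of a matrix with nonzero
determinant, whose covolume is `|det b|`) contains a nonzero vector `v` with
`‖v‖₁ ≤ ((2-x)/(1-x))^(x-1) · (((1+xn)/x)·Γ(xn+1))^(1/n) · (n^(1-x)/Γ(x+1)) · det(L)^(1/n)`. -/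
theorem rankin_l1_bound (n : ℕ) (hn : 1 ≤ n) (x : ℝ) (hx : 1 / 2 ≤ x) (hx1 : x < 1)
    (b : Fin n → Fin n → ℝ) (hb : (Matrix.of b).det ≠ 0) :
    ∃ v ∈ Submodule.span ℤ (Set.range b), v ≠ 0 ∧
      ∑ i, |v i| ≤ ((2 - x) / (1 - x)) ^ (x - 1) *
        (((1 + x * n) / x) * Real.Gamma (x * n + 1)) ^ ((1 : ℝ) / n) *
        ((n : ℝ) ^ (1 - x) / Real.Gamma (x + 1)) *
        |(Matrix.of b).det| ^ ((1 : ℝ) / n) := by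
  have hx0 : 0 < x := by linarith
  have hy : 0 < 1 - x := by linarith
  have hy2 : 0 < 2 - x := by linarith
  have hn0 : (0:ℝ) < n := by exact_mod_cast hn
  obtain ⟨B, hB⟩ : ∃ B : Module.Basis (Fin n) ℝ (Fin n → ℝ), (B : Fin n → Fin n → ℝ) = b := by
    have hli : LinearIndependent ℝ b :=
      Matrix.linearIndependent_rows_of_det_ne_zero (A := Matrix.of b) hb
    have : Nonempty (Fin n) := ⟨⟨0, hn⟩⟩
    exact ⟨basisOfLinearIndependentOfCardEqFinrank hli (by simp), by simp⟩
  -- shortest vector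
  set N : (Fin n → ℝ) → ℝ := fun v => ∑ i, |v i| with hN
  set T : Set (Fin n → ℝ) := {v | v ∈ Submodule.span ℤ (Set.range b) ∧ v ≠ 0 ∧ N v ≤ N (b ⟨0, hn⟩)} with hT
  have hTne : T.Nonempty := by
    refine ⟨b ⟨0, hn⟩, Submodule.subset_span ⟨_, rfl⟩, ?_, le_rfl⟩
    rw [← hB]; exact B.ne_zero _
  have hTfin : T.Finite := by
    have h := ZSpan.setFinite_inter B (s := Metric.closedBall 0 (N (b ⟨0, hn⟩))) Metric.isBounded_closedBall
    rw [hB] at h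
    refine h.subset fun v hv => ⟨?_, hv.1⟩
    rw [mem_closedBall_zero_iff]
    refine le_trans ?_ hv.2.2
    refine (pi_norm_le_iff_of_nonneg (by positivity)).2 fun i => ?_
    exact Finset.single_le_sum (f := fun i => |v i|) (fun i _ => abs_nonneg _) (Finset.mem_univ i)
  obtain ⟨v, hv, hmin⟩ := Set.exists_min_image T N hTfin hTne
  have hmin' : ∀ w ∈ Submodule.span ℤ (Set.range b), w ≠ 0 → N v ≤ N w := by
    intro w hw hw0
    by_cases h : N w ≤ N (b ⟨0, hn⟩)
    · exact hmin w ⟨hw, hw0, h⟩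
    · exact hv.2.2.trans (not_le.1 h).le
  have hvpos : 0 < N v := by
    obtain ⟨i, hi⟩ := Function.ne_iff.1 hv.2.1
    exact Finset.sum_pos' (fun _ _ => abs_nonneg _) ⟨i, Finset.mem_univ i, abs_pos.2 hi⟩
  refine ⟨v, hv.1, hv.2.1, ?_⟩
  have key := rk_lat n hn x hx0 hx1 B (N v) hvpos (by rw [hB]; exact hmin')
  rw [hB] at key
  change N v ≤ _
  set M := N v
  set D := |(Matrix.of b).det|
  have hD : 0 ≤ D := abs_nonneg _
  set C := ((2 - x) / (1 - x)) ^ (x - 1) with hC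
  have hCpos : 0 < C := by positivity
  set W := (n:ℝ) ^ (1 - x) with hW
  have hWpos : 0 < W := by positivity
  have hG : 0 < Real.Gamma (x + 1) := Real.Gamma_pos_of_pos (by linarith)
  have hG2 : 0 < Real.Gamma (x * n + 1) := Real.Gamma_pos_of_pos (by positivity)
  set g := Real.Gamma (x + 1)
  set G := Real.Gamma (x * n + 1)
  have h1 : (M * g / (C * W)) ^ n ≤ ((1 + x * n) / x * G) * D := by
    have e : (M * g / (C * W)) ^ n = (M / (2 * (C * W))) ^ n * (2 * g) ^ n := by
      rw [← mul_pow]; congr 1; field_simp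
    rw [div_le_iff₀ (by positivity), ← mul_div_assoc, div_le_iff₀ hG2, ← e] at key
    refine key.trans (le_of_eq ?_)
    field_simp
    ring
  have h2 := Real.rpow_le_rpow (by positivity) h1 (by positivity : 0 ≤ (1:ℝ)/n)
  rw [one_div, Real.pow_rpow_inv_natCast (by positivity) (by omega), Real.mul_rpow (by positivity) hD,
    div_le_iff₀ (by positivity)] at h2
  rw [one_div]
  have h3 := (le_div_iff₀ hG).2 h2
  refine h3.trans (le_of_eq ?_)
  ring
end
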